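/- arXiv:2402.12333 — 3 statements merged into one kernel-verified Lean document; each statement's English description precedes it below -/
import Mathlib

section
/- For all real x ≥ 1 and all t ∈ [0,1], one has ∑_{n ≤ x} t^{ω(n)} Δ(n) < 9380 · x · (log(ex))^{−1 + 4t/π}. -/
/-- The Erdős–Hooley Δ-function: the maximum over real `u` of the number of
divisors of `n` in the interval `(e^u, e^{u+1}]`. -/
noncomputable def hooleyDelta (n : ℕ) : ℕ :=
  sSup {m : ℕ | ∃ u : ℝ,
    m = (n.divisors.filter (fun d : ℕ => Real.exp u < (d : ℝ) ∧ (d : ℝ) ≤ Real.exp (u + 1))).card}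

section

open Finset Real

/-- Summation by parts comparison. -/
lemma sum_mul_le_sum_mul_of_partial_sums_le {a e g : ℕ → ℝ}
    (hae : ∀ n, ∑ k ∈ Icc 1 n, a k ≤ ∑ k ∈ Icc 1 n, e k)
    (hg : ∀ n, 1 ≤ n → g (n + 1) ≤ g n) (hg0 : ∀ n, 0 ≤ g n) (N : ℕ) :
    ∑ k ∈ Icc 1 N, a k * g k ≤ ∑ k ∈ Icc 1 N, e k * g k := by
  have key : ∀ n, (∑ k ∈ Icc 1 n, (e k - a k)) * g n ≤ ∑ k ∈ Icc 1 n, (e k - a k) * g k := by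
    intro n
    induction n with
    | zero => simp
    | succ n ih =>
      rw [sum_Icc_succ_top (by omega), sum_Icc_succ_top (by omega), add_mul]
      gcongr
      refine le_trans ?_ ih
      rcases Nat.eq_zero_or_pos n with rfl | hn
      · simp
      · refine mul_le_mul_of_nonneg_left (hg n hn) ?_
        rw [sum_sub_distrib]; linarith [hae n]
  have h := key N
  have h0 : 0 ≤ (∑ k ∈ Icc 1 N, (e k - a k)) * g N := by
    refine mul_nonneg ?_ (hg0 N)
    rw [sum_sub_distrib]; linarith [hae N]
  simp only [sub_mul, sum_sub_distrib] at h h0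
  linarith

lemma sum_primesLE_eq (N : ℕ) (f : ℕ → ℝ) :
    ∑ p ∈ Nat.primesLE N, f p = ∑ n ∈ Icc 1 N, if n.Prime then f n else 0 := by
  rw [← sum_filter]
  refine sum_congr ?_ fun _ _ => rfl
  ext p
  simp only [Nat.mem_primesLE, mem_filter, mem_Icc]
  exact ⟨fun h => ⟨⟨h.2.one_le, h.1⟩, h.2⟩, fun h => ⟨h.1.2, h.2⟩⟩

lemma sum_log_primesLE_le (N : ℕ) : ∑ p ∈ Nat.primesLE N, log p ≤ log 4 * N := by
  rw [← Chebyshev.theta_eq_sum_primesLE_log]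
  exact Chebyshev.theta_le_log4_mul_x (Nat.cast_nonneg N)

lemma sum_log_div_primesLE_le {N : ℕ} (hN : 1 ≤ N) :
    ∑ p ∈ Nat.primesLE N, log p / p ≤ log N + log 4 := by
  have hN' : (0 : ℝ) < N := by exact_mod_cast hN
  have hfac : log (N.factorial : ℝ) ≤ N * log N := by
    rw [← log_pow]
    exact log_le_log (by exact_mod_cast N.factorial_pos) (by exact_mod_cast Nat.factorial_le_pow N)
  have hsum : ∑ p ∈ Nat.primesLE N, ((N / p : ℕ) : ℝ) * log p ≤ log (N.factorial : ℝ) := by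
    rw [log_nat_eq_sum_factorization, Finsupp.sum_of_support_subset (s := Nat.primesLE N)]
    · refine sum_le_sum fun p hp => ?_
      have hp' := Nat.mem_primesLE.1 hp
      refine mul_le_mul_of_nonneg_right ?_ (log_natCast_nonneg p)
      norm_cast
      rw [Nat.factorization_factorial hp'.2 (by omega : Nat.log p N < Nat.log p N + 2)]
      simpa using single_le_sum (f := fun i => N / p ^ i) (fun _ _ => Nat.zero_le _)
        (mem_Ico.2 ⟨le_rfl, by omega⟩ : 1 ∈ Ico 1 (Nat.log p N + 2))
    · intro p hp
      have hp1 := Nat.prime_of_mem_primeFactors hp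
      exact Nat.mem_primesLE.2 ⟨(hp1.dvd_factorial).1 (Nat.dvd_of_mem_primeFactors hp), hp1⟩
    · simp
  have h2 : ∑ p ∈ Nat.primesLE N, (N * (log p / p) - log p)
      ≤ ∑ p ∈ Nat.primesLE N, ((N / p : ℕ) : ℝ) * log p := by
    refine sum_le_sum fun p hp => ?_
    have hp' := (Nat.mem_primesLE.1 hp).2
    have hpp : (0 : ℝ) < p := by exact_mod_cast hp'.pos
    have h3 : (N : ℝ) / p - 1 ≤ ((N / p : ℕ) : ℝ) := by
      have : (N : ℝ) / p < ((N / p : ℕ) : ℝ) + 1 := by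
        rw [div_lt_iff₀ hpp, mul_comm]
        exact_mod_cast Nat.lt_mul_div_succ N hp'.pos
      linarith
    calc (N : ℝ) * (log p / p) - log p = (N / p - 1) * log p := by ring
      _ ≤ _ := mul_le_mul_of_nonneg_right h3 (log_natCast_nonneg p)
  rw [sum_sub_distrib, ← mul_sum] at h2
  have h4 := sum_log_primesLE_le N
  have : (N : ℝ) * ∑ p ∈ Nat.primesLE N, log p / p ≤ N * (log N + log 4) := by linarith
  exact le_of_mul_le_mul_left this hN'

lemma sum_log_mul_rpow_primesLE_le (N : ℕ) {σ : ℝ} (hσ : 0 < σ) :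
    ∑ p ∈ Nat.primesLE N, log p * (p : ℝ) ^ (-(1 + σ)) ≤ 1 / σ + log 4 := by
  let a : ℕ → ℝ := fun n => if n.Prime then log n / n else 0
  let e : ℕ → ℝ := fun n => if n = 1 then log 4 else log n - log (n - 1 : ℕ)
  let g : ℕ → ℝ := fun n => (n : ℝ) ^ (-σ)
  have he : ∀ n, 1 ≤ n → ∑ k ∈ Icc 1 n, e k = log n + log 4 := by
    intro n hn
    induction n, hn using Nat.le_induction with
    | base => simp [e]
    | succ n hn ih =>
      rw [sum_Icc_succ_top (by omega), ih]
      simp only [e]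
      rw [if_neg (by omega)]
      simp only [Nat.add_sub_cancel]
      ring
  have hg : ∀ n, 1 ≤ n → ∑ k ∈ Icc 1 n, e k * g k ≤ log 4 + (1 - (n : ℝ) ^ (-σ)) / σ := by
    intro n hn
    induction n, hn using Nat.le_induction with
    | base => simp [e, g]
    | succ n hn ih =>
      rw [sum_Icc_succ_top (by omega)]
      have hn0 : (0 : ℝ) < n := by exact_mod_cast hn
      have h1 : e (n + 1) * g (n + 1) ≤ ((n : ℝ) ^ (-σ) - ((n + 1 : ℕ) : ℝ) ^ (-σ)) / σ := by
        simp only [e, g]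
        rw [if_neg (by omega), le_div_iff₀ hσ, rpow_def_of_pos hn0,
          rpow_def_of_pos (by positivity : (0 : ℝ) < ((n + 1 : ℕ) : ℝ))]
        simp only [Nat.add_sub_cancel]
        set A := log (n : ℝ)
        set B := log ((n + 1 : ℕ) : ℝ)
        have h2 : exp (A * -σ) = exp (B * -σ) * exp ((B - A) * σ) := by
          rw [← exp_add]; congr 1; ring
        have h3 := add_one_le_exp ((B - A) * σ)
        rw [h2]
        nlinarith [exp_pos (B * -σ)]
      have h4 : ((n : ℝ) ^ (-σ) - ((n + 1 : ℕ) : ℝ) ^ (-σ)) / σ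
        = (1 - ((n + 1 : ℕ) : ℝ) ^ (-σ)) / σ - (1 - (n : ℝ) ^ (-σ)) / σ := by ring
      linarith
  rcases Nat.eq_zero_or_pos N with rfl | hN
  · have : (0 : ℝ) ≤ 1 / σ + log 4 := by
      have := log_nonneg (by norm_num : (1 : ℝ) ≤ 4)
      positivity
    simpa [sum_primesLE_eq] using this
  calc ∑ p ∈ Nat.primesLE N, log p * (p : ℝ) ^ (-(1 + σ))
      = ∑ k ∈ Icc 1 N, a k * g k := by
        rw [sum_primesLE_eq]
        refine sum_congr rfl fun k hk => ?_
        have hk0 : (0 : ℝ) < k := by exact_mod_cast (mem_Icc.1 hk).1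
        simp only [a, g]
        split_ifs
        · rw [neg_add, rpow_add hk0, rpow_neg_one]; ring
        · simp
    _ ≤ ∑ k ∈ Icc 1 N, e k * g k := by
        refine sum_mul_le_sum_mul_of_partial_sums_le ?_ ?_ ?_ N
        · intro n
          rcases Nat.eq_zero_or_pos n with rfl | hn
          · simp
          · rw [he n hn, ← sum_primesLE_eq n (fun p => log p / p)]
            exact sum_log_div_primesLE_le hn
        · intro n hn
          exact rpow_le_rpow_of_nonpos (by exact_mod_cast hn) (by push_cast; linarith) (by linarith)
        · intro n; positivity
    _ ≤ log 4 + (1 - (N : ℝ) ^ (-σ)) / σ := hg N hN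
    _ ≤ 1 / σ + log 4 := by
        rw [add_comm]
        gcongr
        have : (0 : ℝ) ≤ (N : ℝ) ^ (-σ) := by positivity
        linarith

/-- Convolution of the prime weights `log p / p` with the kernel `exp (-|v|)`. -/
lemma sum_log_div_mul_exp_primesLE_le (N : ℕ) (v : ℝ) :
    ∑ p ∈ Nat.primesLE N, log p / p * exp (-|v - log p|) ≤ 2 * log 4 := by
  set Y := exp v with hY
  have hYpos : 0 < Y := exp_pos v
  have hl4 : 0 ≤ log 4 := log_nonneg (by norm_num)
  let g : ℕ → ℝ := fun n => exp (-|v - log n|) / n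
  have hg_le : ∀ n : ℕ, 1 ≤ n → (n : ℝ) ≤ Y → g n = 1 / Y := by
    intro n hn h
    have hn0 : (0 : ℝ) < n := by exact_mod_cast hn
    have h1 : log n ≤ v := by rw [hY] at h; exact (log_le_iff_le_exp hn0).2 h
    simp only [g]
    rw [abs_of_nonneg (by linarith), neg_sub, exp_sub, exp_log hn0, ← hY]
    field_simp
  have hg_ge : ∀ n : ℕ, 1 ≤ n → Y ≤ n → g n = Y / n ^ 2 := by
    intro n hn h
    have hn0 : (0 : ℝ) < n := by exact_mod_cast hn
    have h1 : v ≤ log n := by rw [hY] at h; exact (le_log_iff_exp_le hn0).2 h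
    simp only [g]
    rw [abs_of_nonpos (by linarith), neg_neg, exp_sub, exp_log hn0, ← hY]
    field_simp
  have hsum : ∀ n : ℕ, ∑ k ∈ Icc 1 n, g k ≤ 2 ∧
      (Y < n + 1 → ∑ k ∈ Icc 1 n, g k ≤ 2 - Y / (n + 1 / 2)) := by
    intro n
    induction n with
    | zero =>
      refine ⟨by simp, fun h => ?_⟩
      norm_num at h ⊢
      linarith
    | succ n ih =>
      rw [sum_Icc_succ_top (by omega)]
      have hn0 : (0 : ℝ) ≤ n := Nat.cast_nonneg n
      have hbig : Y < n + 1 → ∑ k ∈ Icc 1 n, g k + g (n + 1) ≤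
          2 - Y / ((n + 1 : ℕ) + 1 / 2) := by
        intro h
        have h1 := ih.2 h
        rw [hg_ge (n + 1) (by omega) (by push_cast; linarith)]
        have h2 : Y / ((n + 1 : ℕ) : ℝ) ^ 2 ≤ Y / (n + 1 / 2) - Y / ((n + 1 : ℕ) + 1 / 2) := by
          push_cast
          have : Y / (n + 1 / 2) - Y / ((n : ℝ) + 1 + 1 / 2) =
              Y / ((n + 1 / 2) * ((n : ℝ) + 1 + 1 / 2)) := by
            field_simp; ring
          rw [this]
          gcongr
          nlinarith
        linarith
      have hcount : (n : ℝ) + 1 ≤ Y →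
          ∑ k ∈ Icc 1 n, g k + g (n + 1) = (n + 1) / Y := by
        intro h
        rw [← sum_Icc_succ_top (by omega), sum_congr rfl (g := fun _ => 1 / Y)]
        · simp; ring
        · intro k hk
          have hk' := mem_Icc.1 hk
          refine hg_le k hk'.1 (le_trans ?_ h)
          exact_mod_cast hk'.2
      refine ⟨?_, fun h => ?_⟩
      · rcases lt_or_ge Y (n + 1) with h | h
        · have := hbig h
          have h3 : 0 ≤ Y / ((n + 1 : ℕ) + 1 / 2) := by positivity
          linarith
        · rw [hcount h, div_le_iff₀ hYpos]; linarith
      · rcases lt_or_ge Y (n + 1) with h' | h'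
        · exact hbig h'
        · rw [hcount h']
          push_cast at h ⊢
          rw [le_sub_iff_add_le, div_add_div _ _ hYpos.ne' (by positivity),
            div_le_iff₀ (by positivity)]
          nlinarith
  calc ∑ p ∈ Nat.primesLE N, log p / p * exp (-|v - log p|)
      = ∑ k ∈ Icc 1 N, (if k.Prime then log k else 0) * g k := by
        rw [sum_primesLE_eq]
        refine sum_congr rfl fun k _ => ?_
        simp only [g]
        split_ifs
        · ring
        · simp
    _ ≤ ∑ k ∈ Icc 1 N, log 4 * g k := by
        refine sum_mul_le_sum_mul_of_partial_sums_le (e := fun _ => log 4) ?_ ?_ ?_ N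
        · intro n
          rw [← sum_primesLE_eq n (fun p => log p)]
          simpa [mul_comm] using sum_log_primesLE_le n
        · intro n hn
          have hn0 : (0 : ℝ) < n := by exact_mod_cast hn
          rcases le_or_gt Y n with h | h
          · rw [hg_ge n hn h, hg_ge (n + 1) (by omega) (by push_cast; linarith)]
            gcongr; simp
          · rw [hg_le n hn h.le]
            rcases le_or_gt Y (n + 1) with h' | h'
            · rw [hg_ge (n + 1) (by omega) (by push_cast; linarith),
                div_le_div_iff₀ (by positivity) hYpos]
              push_cast
              nlinarith
            · rw [hg_le (n + 1) (by omega) (by push_cast; linarith)]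
        · intro n; simp only [g]; positivity
    _ = log 4 * ∑ k ∈ Icc 1 N, g k := by rw [mul_sum]
    _ ≤ 2 * log 4 := by nlinarith [(hsum N).1]

lemma sum_Icc_two_mul_pow_half_le (K : ℕ) :
    ∑ k ∈ Icc 2 K, (k : ℝ) * (k + 1) * (1 / 2) ^ k ≤ 7 := by
  have key : ∀ n : ℕ, ∑ k ∈ Icc 2 (n + 1), (k : ℝ) * (k + 1) * (1 / 2) ^ k
      = 7 - ((n + 1 : ℝ) ^ 2 + 5 * (n + 1) + 8) * (1 / 2) ^ (n + 1) := by
    intro n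
    induction n with
    | zero => norm_num
    | succ n ih =>
      rw [sum_Icc_succ_top (by omega), ih]
      push_cast
      ring
  rcases K with _ | n
  · norm_num
  · rw [key n]
    have : (0 : ℝ) ≤ ((n + 1 : ℝ) ^ 2 + 5 * (n + 1) + 8) * (1 / 2) ^ (n + 1) := by positivity
    linarith

lemma sum_log_div_sq_le (N : ℕ) : ∑ n ∈ Icc 1 N, log n / (n : ℝ) ^ 2 ≤ 1 := by
  have key : ∀ n : ℕ, 3 ≤ n → ∑ k ∈ Icc 1 n, log k / (k : ℝ) ^ 2 ≤ 1 - (1 + log n) / n := by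
    intro n hn
    induction n, hn using Nat.le_induction with
    | base =>
      have h2 := log_two_lt_d9
      have h3 : log 3 ≤ 1.1023 := by
        have h9 : log 9 = 2 * log 3 := by
          rw [show (9 : ℝ) = 3 ^ 2 by norm_num, log_pow]; norm_num
        have h8 : log 9 = 3 * log 2 + log (9 / 8) := by
          rw [show (9 : ℝ) = 2 ^ 3 * (9 / 8) by norm_num, log_mul (by norm_num) (by norm_num),
            log_pow]
          norm_num
        have h98 := log_le_sub_one_of_pos (by norm_num : (0 : ℝ) < 9 / 8)
        linarith
      norm_num [sum_Icc_succ_top]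
      linarith
    | succ n hn ih =>
      rw [sum_Icc_succ_top (by omega)]
      have hn3 : (3 : ℝ) ≤ n := by exact_mod_cast hn
      have hn0 : (0 : ℝ) < n := by linarith
      set A := log (n : ℝ)
      set B := log ((n + 1 : ℕ) : ℝ)
      have hAB : B ≤ A + 1 / n := by
        have h1 : B = A + log (1 + 1 / n) := by
          simp only [A, B]
          rw [← log_mul hn0.ne' (by positivity)]
          congr 1; push_cast; field_simp
        have h2 := log_le_sub_one_of_pos (by positivity : (0 : ℝ) < 1 + 1 / n)
        linarith
      have hB : 1 + 1 / (n : ℝ) ≤ B := by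
        have h1 : log 4 ≤ B := log_le_log (by norm_num) (by push_cast; linarith)
        have h2 : log 4 = 2 * log 2 := by
          rw [show (4 : ℝ) = 2 ^ 2 by norm_num, log_pow]; norm_num
        have h3 : 1 / (n : ℝ) ≤ 1 / 3 := by gcongr
        linarith [log_two_gt_d9]
      push_cast
      have h5 : (1 + (B - 1 / n)) / n - (1 + B) / (n + 1) - B / ((n : ℝ) + 1) ^ 2
          = (B - (1 + 1 / n)) / (n * (n + 1) ^ 2) := by
        field_simp; ring
      have h6 : 0 ≤ (B - (1 + 1 / n)) / (n * ((n : ℝ) + 1) ^ 2) :=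
        div_nonneg (by linarith) (by positivity)
      have h7 : (1 + (B - 1 / n)) / n ≤ (1 + A) / n := by gcongr; linarith
      linarith
  have h := key (max N 3) (le_max_right _ _)
  refine (sum_le_sum_of_subset_of_nonneg (Icc_subset_Icc_right (le_max_left N 3)) ?_).trans
    (h.trans ?_)
  · intro n _ _
    exact div_nonneg (log_natCast_nonneg n) (by positivity)
  · have := div_nonneg (add_nonneg zero_le_one (log_natCast_nonneg (max N 3)))
      (Nat.cast_nonneg (α := ℝ) (max N 3))
    linarith

lemma sum_primesLE_le_sum_Icc (N : ℕ) {f : ℕ → ℝ} (hf : ∀ n, 0 ≤ f n) :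
    ∑ p ∈ Nat.primesLE N, f p ≤ ∑ n ∈ Icc 2 N, f n := by
  refine sum_le_sum_of_subset_of_nonneg (fun p hp => ?_) fun n _ _ => hf n
  have := Nat.mem_primesLE.1 hp
  exact mem_Icc.2 ⟨this.2.two_le, this.1⟩

/-- The contribution of the proper prime powers. -/
lemma sum_primesLE_sum_prime_pow_le (N K : ℕ) :
    ∑ p ∈ Nat.primesLE N, ∑ k ∈ Icc 2 K, (k : ℝ) * (k + 1) * log p / (p : ℝ) ^ k ≤ 28 := by
  calc ∑ p ∈ Nat.primesLE N, ∑ k ∈ Icc 2 K, (k : ℝ) * (k + 1) * log p / (p : ℝ) ^ k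
      ≤ ∑ p ∈ Nat.primesLE N, 28 * (log p / (p : ℝ) ^ 2) := by
        refine sum_le_sum fun p hp => ?_
        have hp2 : (2 : ℝ) ≤ p := by exact_mod_cast (Nat.mem_primesLE.1 hp).2.two_le
        have hlog := log_natCast_nonneg p
        calc ∑ k ∈ Icc 2 K, (k : ℝ) * (k + 1) * log p / (p : ℝ) ^ k
            ≤ ∑ k ∈ Icc 2 K, 4 * (log p / (p : ℝ) ^ 2) * ((k : ℝ) * (k + 1) * (1 / 2) ^ k) := by
              refine sum_le_sum fun k hk => ?_
              obtain ⟨j, rfl⟩ := Nat.exists_eq_add_of_le (mem_Icc.1 hk).1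
              have h1 : 1 / (p : ℝ) ^ j ≤ (1 / 2) ^ j := by
                rw [one_div_pow]; gcongr
              calc ((2 + j : ℕ) : ℝ) * ((2 + j : ℕ) + 1) * log p / (p : ℝ) ^ (2 + j)
                  = ((2 + j : ℕ) : ℝ) * ((2 + j : ℕ) + 1) * (log p / (p : ℝ) ^ 2) *
                    (1 / (p : ℝ) ^ j) := by
                    rw [pow_add]; field_simp
                _ ≤ ((2 + j : ℕ) : ℝ) * ((2 + j : ℕ) + 1) * (log p / (p : ℝ) ^ 2) *
                    (1 / 2) ^ j := by gcongr
                _ = _ := by rw [pow_add]; ring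
          _ = 4 * (log p / (p : ℝ) ^ 2) * ∑ k ∈ Icc 2 K, ((k : ℝ) * (k + 1) * (1 / 2) ^ k) := by
              rw [mul_sum]
          _ ≤ 4 * (log p / (p : ℝ) ^ 2) * 7 := by
              gcongr; exact sum_Icc_two_mul_pow_half_le K
          _ = _ := by ring
    _ = 28 * ∑ p ∈ Nat.primesLE N, log p / (p : ℝ) ^ 2 := by rw [mul_sum]
    _ ≤ 28 * 1 := by
        gcongr
        have h0 : ∀ n : ℕ, 0 ≤ log n / (n : ℝ) ^ 2 := fun n =>
          div_nonneg (log_natCast_nonneg n) (by positivity)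
        refine (sum_primesLE_le_sum_Icc N h0).trans (le_trans ?_ (sum_log_div_sq_le N))
        exact sum_le_sum_of_subset_of_nonneg (Icc_subset_Icc_left (by norm_num)) fun n _ _ => h0 n
    _ = 28 := by norm_num

lemma sum_primesLE_one_div_sq_le (N : ℕ) :
    ∑ p ∈ Nat.primesLE N, 1 / (p : ℝ) ^ 2 ≤ 2 / 3 := by
  refine (sum_primesLE_le_sum_Icc N (f := fun n => 1 / (n : ℝ) ^ 2) (fun n => by positivity)).trans ?_
  have key : ∀ n : ℕ, ∑ k ∈ Icc 2 (n + 1), 1 / (k : ℝ) ^ 2 ≤ 2 / 3 - 1 / ((n : ℝ) + 3 / 2) := by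
    intro n
    induction n with
    | zero => norm_num
    | succ n ih =>
      rw [sum_Icc_succ_top (by omega)]
      have h1 : 1 / ((n : ℝ) + 3 / 2) - 1 / ((n + 1 : ℕ) + 3 / 2) =
          1 / (((n : ℝ) + 3 / 2) * (n + 5 / 2)) := by
        push_cast; field_simp; ring
      have h2 : 1 / ((n + 1 + 1 : ℕ) : ℝ) ^ 2 ≤ 1 / (((n : ℝ) + 3 / 2) * (n + 5 / 2)) := by
        gcongr; push_cast; nlinarith
      linarith
  rcases N with _ | n
  · norm_num
  · have : (0 : ℝ) ≤ 1 / ((n : ℝ) + 3 / 2) := by positivity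
    linarith [key n]

lemma sum_range_rpow_le {σ : ℝ} (hσ : 0 < σ) (n : ℕ) :
    ∑ k ∈ range n, (k : ℝ) ^ (-(1 + σ)) ≤ 1 + 1 / σ := by
  have key : ∀ n : ℕ, ∑ k ∈ range (n + 2), (k : ℝ) ^ (-(1 + σ)) ≤
      1 + 1 / σ - ((n + 1 : ℕ) : ℝ) ^ (-σ) / σ := by
    intro n
    induction n with
    | zero =>
      rw [sum_range_succ, sum_range_one]
      simp [zero_rpow (by linarith : -σ + -1 ≠ 0)]
    | succ n ih =>
      rw [sum_range_succ]
      have ha : (0 : ℝ) < ((n + 1 : ℕ) : ℝ) := by positivity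
      have hb : (0 : ℝ) < ((n + 2 : ℕ) : ℝ) := by positivity
      set A := log ((n + 1 : ℕ) : ℝ) with hA
      set B := log ((n + 2 : ℕ) : ℝ) with hB
      have h1 : ((n + 2 : ℕ) : ℝ) ^ (-(1 + σ)) ≤
          (((n + 1 : ℕ) : ℝ) ^ (-σ) - ((n + 2 : ℕ) : ℝ) ^ (-σ)) / σ := by
        rw [le_div_iff₀ hσ, neg_add, rpow_add hb, rpow_neg_one, rpow_def_of_pos ha,
          rpow_def_of_pos hb, ← hA, ← hB]
        have h2 : exp (A * -σ) = exp (B * -σ) * exp ((B - A) * σ) := by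
          rw [← exp_add]; congr 1; ring
        have h3 := add_one_le_exp ((B - A) * σ)
        have h4 : (((n + 2 : ℕ) : ℝ))⁻¹ ≤ B - A := by
          rw [hA, hB, ← log_div hb.ne' ha.ne']
          refine le_trans (le_of_eq ?_) (one_sub_inv_le_log_of_pos (by positivity))
          push_cast; field_simp; ring
        rw [h2]
        have h5 := exp_pos (B * -σ)
        nlinarith [mul_le_mul_of_nonneg_right h4 (mul_nonneg hσ.le h5.le)]
      have h6 : (((n + 1 : ℕ) : ℝ) ^ (-σ) - ((n + 2 : ℕ) : ℝ) ^ (-σ)) / σ =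
        ((n + 1 : ℕ) : ℝ) ^ (-σ) / σ - ((n + 2 : ℕ) : ℝ) ^ (-σ) / σ := by ring
      have h7 : n + 1 + 1 = n + 2 := rfl
      rw [h7]
      linarith
  have h := key n
  refine (sum_le_sum_of_subset_of_nonneg (range_mono (by omega : n ≤ n + 2)) ?_).trans
    (h.trans ?_)
  · intros; positivity
  · have : 0 ≤ ((n + 1 : ℕ) : ℝ) ^ (-σ) / σ := by positivity
    linarith

lemma prod_primesLE_inv_le {σ : ℝ} (hσ : 0 < σ) (N : ℕ) :
    ∏ p ∈ Nat.primesLE N, (1 - (p : ℝ) ^ (-(1 + σ)))⁻¹ ≤ 1 + 1 / σ := by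
  let f : ℕ →* ℝ :=
    { toFun := fun n => (n : ℝ) ^ (-(1 + σ))
      map_one' := by simp
      map_mul' := fun a b => by
        push_cast; exact mul_rpow (Nat.cast_nonneg a) (Nat.cast_nonneg b) }
  have hsum : Summable f := by
    have : Summable fun n : ℕ => (n : ℝ) ^ (-(1 + σ)) :=
      summable_nat_rpow.2 (by linarith)
    exact this
  have h1 := EulerProduct.prod_primesBelow_geometric_eq_tsum_smoothNumbers hsum (N + 1)
  have h2 : ∑' m : (N + 1).smoothNumbers, f m ≤ ∑' m, f m :=
    Summable.tsum_subtype_le f _ (fun n => rpow_nonneg (Nat.cast_nonneg n) _) hsum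
  have h3 : ∑' m, f m ≤ 1 + 1 / σ :=
    hsum.tsum_le_of_sum_range_le fun n => sum_range_rpow_le hσ n
  exact (le_of_eq h1).trans (h2.trans h3)

lemma one_sub_add_mul_inv_sq_le {t y : ℝ} (ht : t ∈ Set.Icc (0 : ℝ) 1) (hy0 : 0 ≤ y)
    (hy : y ≤ 1 / 2) :
    1 - t + t * ((1 - y) ^ 2)⁻¹ ≤ ((1 - y)⁻¹) ^ (2 * t) * exp (3 * (1 - t) * y ^ 2) := by
  have hpos : 0 < 1 - y := by linarith
  have hlog : -log (1 - y) ≤ y + y ^ 2 := by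
    rw [← log_inv, log_le_iff_le_exp (inv_pos.2 hpos)]
    refine le_trans ?_ (quadratic_le_exp_of_nonneg (by positivity))
    rw [inv_le_iff_one_le_mul₀ hpos]
    have h2 : 0 ≤ y ^ 2 * (1 / 2 - y) := mul_nonneg (by positivity) (by linarith)
    have h3 : 0 ≤ y ^ 4 := by positivity
    have h4 : 0 ≤ y ^ 3 * (1 / 2 - y) := mul_nonneg (by positivity) (by linarith)
    have h5 : 0 ≤ y ^ 4 * (1 / 2 - y) := mul_nonneg (by positivity) (by linarith)
    nlinarith
  have h1 : 1 - t + t * ((1 - y) ^ 2)⁻¹ =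
      ((1 - y) ^ 2)⁻¹ * (-(1 - t) * (1 - (1 - y) ^ 2) + 1) := by
    field_simp; ring
  have h2 : ((1 - y) ^ 2)⁻¹ = exp (-2 * log (1 - y)) := by
    rw [show -2 * log (1 - y) = -(2 * log (1 - y)) by ring, exp_neg, two_mul, exp_add,
      exp_log hpos, sq]
  rw [h1, rpow_def_of_pos (inv_pos.2 hpos), h2, log_inv, ← exp_add]
  calc exp (-2 * log (1 - y)) * (-(1 - t) * (1 - (1 - y) ^ 2) + 1)
      ≤ exp (-2 * log (1 - y)) * exp (-(1 - t) * (1 - (1 - y) ^ 2)) := by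
        gcongr; exact add_one_le_exp _
    _ = exp (-2 * log (1 - y) + -(1 - t) * (1 - (1 - y) ^ 2)) := by rw [exp_add]
    _ ≤ _ := by
        rw [exp_le_exp]
        nlinarith [mul_le_mul_of_nonneg_left hlog (by linarith [ht.2] : 0 ≤ 2 * (1 - t))]

/-- The Dirichlet polynomial of `t ^ ω(n) * τ(n)`. -/
lemma sum_pow_card_primeFactors_mul_card_divisors_le {t σ : ℝ} (ht : t ∈ Set.Icc (0 : ℝ) 1)
    (hσ : 0 < σ) (N : ℕ) :
    ∑ n ∈ Icc 1 N, t ^ n.primeFactors.card * n.divisors.card * (n : ℝ) ^ (-(1 + σ)) ≤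
      exp (2 * (1 - t)) * (1 + 1 / σ) ^ (2 * t) := by
  let f : ℕ → ℝ := fun n => t ^ n.primeFactors.card * n.divisors.card * (n : ℝ) ^ (-(1 + σ))
  have hf0 : ∀ n, 0 ≤ f n := fun n => by have := ht.1; simp only [f]; positivity
  have hf1 : f 1 = 1 := by simp [f]
  have hmul : ∀ {m n : ℕ}, m.Coprime n → f (m * n) = f m * f n := by
    intro m n h
    simp only [f]
    rw [h.primeFactors_mul, card_union_of_disjoint h.disjoint_primeFactors, h.card_divisors_mul,
      pow_add]
    push_cast
    rw [mul_rpow (Nat.cast_nonneg m) (Nat.cast_nonneg n)]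
    ring
  have hy : ∀ {p : ℕ}, p.Prime → 0 ≤ (p : ℝ) ^ (-(1 + σ)) ∧ (p : ℝ) ^ (-(1 + σ)) ≤ 1 / p := by
    intro p hp
    refine ⟨by positivity, ?_⟩
    have hp1 : (1 : ℝ) ≤ p := by exact_mod_cast hp.one_le
    rw [one_div, ← rpow_neg_one]
    exact rpow_le_rpow_of_exponent_le hp1 (by linarith)
  have hy2 : ∀ {p : ℕ}, p.Prime → (p : ℝ) ^ (-(1 + σ)) ≤ 1 / 2 := by
    intro p hp
    refine (hy hp).2.trans ?_
    have : (2 : ℝ) ≤ p := by exact_mod_cast hp.two_le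
    gcongr
  have hlocal : ∀ {p : ℕ}, p.Prime → HasSum (fun e : ℕ => f (p ^ e))
      (1 - t + t * ((1 - (p : ℝ) ^ (-(1 + σ))) ^ 2)⁻¹) := by
    intro p hp
    set y := (p : ℝ) ^ (-(1 + σ)) with hydef
    have hyn : ‖y‖ < 1 := by
      rw [norm_of_nonneg (hy hp).1]; linarith [hy2 hp]
    have h1 : HasSum (fun e : ℕ => t * (((e + 1).choose 1 : ℕ) * y ^ e))
        (t * (1 / (1 - y) ^ 2)) :=
      (hasSum_choose_mul_geometric_of_norm_lt_one 1 hyn).mul_left t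
    have h2 : HasSum (fun e : ℕ => if e = 0 then 1 - t else 0) (1 - t) := hasSum_ite_eq 0 (1 - t)
    rw [← one_div]
    refine (h2.add h1).congr_fun ?_
    intro e
    rcases Nat.eq_zero_or_pos e with rfl | he
    · simp [f]
    · simp only [f]
      rw [Nat.primeFactors_prime_pow he.ne' hp, Nat.divisors_prime_pow hp]
      simp only [card_singleton, pow_one, card_map, card_range, Nat.choose_one_right,
        if_neg he.ne', zero_add]
      push_cast
      rw [← rpow_natCast (p : ℝ), ← rpow_mul (Nat.cast_nonneg p), mul_comm (e : ℝ),
        rpow_mul (Nat.cast_nonneg p), rpow_natCast]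
      ring
  have heuler := (EulerProduct.summable_and_hasSum_smoothNumbers_prod_primesBelow_tsum hf1 hmul
    (fun {p} hp => (hlocal hp).summable.norm) (N + 1)).2
  have hle : ∑ n ∈ Icc 1 N, f n ≤ ∏ p ∈ Nat.primesLE N, ∑' e : ℕ, f (p ^ e) := by
    have h1 := (hasSum_subtype_iff_indicator (f := f)).1 heuler
    have h2 := sum_le_hasSum (Icc 1 N)
      (fun n _ => Set.indicator_nonneg (fun m _ => hf0 m) n) h1
    refine le_trans (le_of_eq (sum_congr rfl fun n hn => ?_)) h2
    have hn' := mem_Icc.1 hn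
    rw [Set.indicator_of_mem]
    exact Nat.mem_smoothNumbers_of_lt hn'.1 (by omega)
  have hprod0 : ∀ p ∈ Nat.primesLE N, (0 : ℝ) ≤ (1 - (p : ℝ) ^ (-(1 + σ)))⁻¹ := by
    intro p hp
    have := hy2 (Nat.mem_primesLE.1 hp).2
    exact inv_nonneg.2 (by linarith)
  calc ∑ n ∈ Icc 1 N, f n ≤ ∏ p ∈ Nat.primesLE N, ∑' e : ℕ, f (p ^ e) := hle
    _ ≤ ∏ p ∈ Nat.primesLE N, (((1 - (p : ℝ) ^ (-(1 + σ)))⁻¹) ^ (2 * t) *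
          exp (3 * (1 - t) * (1 / (p : ℝ) ^ 2))) := by
        refine prod_le_prod (fun p _ => tsum_nonneg fun e => hf0 _) fun p hp => ?_
        have hp' := (Nat.mem_primesLE.1 hp).2
        rw [(hlocal hp').tsum_eq]
        refine (one_sub_add_mul_inv_sq_le ht (hy hp').1 (hy2 hp')).trans ?_
        have h1 : ((p : ℝ) ^ (-(1 + σ))) ^ 2 ≤ 1 / (p : ℝ) ^ 2 := by
          rw [← one_div_pow]
          exact pow_le_pow_left₀ (hy hp').1 (hy hp').2 2
        refine mul_le_mul_of_nonneg_left (exp_le_exp.2 ?_) (rpow_nonneg (hprod0 p hp) _)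
        exact mul_le_mul_of_nonneg_left h1 (by linarith [ht.2])
    _ = (∏ p ∈ Nat.primesLE N, (1 - (p : ℝ) ^ (-(1 + σ)))⁻¹) ^ (2 * t) *
          exp (3 * (1 - t) * ∑ p ∈ Nat.primesLE N, 1 / (p : ℝ) ^ 2) := by
        rw [prod_mul_distrib, finsetProd_rpow _ _ hprod0, ← exp_sum, mul_sum]
    _ ≤ (1 + 1 / σ) ^ (2 * t) * exp (2 * (1 - t)) := by
        refine mul_le_mul (rpow_le_rpow (prod_nonneg hprod0) (prod_primesLE_inv_le hσ N)
          (by linarith [ht.1])) (exp_le_exp.2 ?_) (exp_pos _).le (by positivity)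
        nlinarith [sum_primesLE_one_div_sq_le N, ht.2]
    _ = _ := mul_comm _ _

open MeasureTheory in
lemma integral_exp_neg_mul_abs {c : ℝ} (hc : 0 < c) : ∫ u : ℝ, exp (-(c * |u|)) = 2 / c := by
  rw [integral_comp_abs (f := fun x => exp (-(c * x)))]
  have h := integral_exp_mul_Ioi (a := -c) (by linarith) 0
  simp only [mul_zero, exp_zero, neg_mul] at h
  rw [h]
  field_simp

open MeasureTheory in
lemma integrable_exp_neg_abs : Integrable fun u : ℝ => exp (-|u|) := by
  refine not_imp_comm.1 integral_undef ?_
  have h := integral_exp_neg_mul_abs one_pos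
  simp only [one_mul] at h
  rw [h]
  norm_num

/-- A smoothed count of the divisors of `n` close to `e ^ u`. -/
noncomputable def divisorProfile (n : ℕ) (u : ℝ) : ℝ :=
  ∑ d ∈ n.divisors, exp (-|u - log d|)

/-- The normalised `L⁴` norm of the divisor profile of `n`. -/
noncomputable def profileNorm (n : ℕ) : ℝ :=
  (2 * ∫ u, divisorProfile n u ^ 4) ^ (1 / 4 : ℝ)

lemma divisorProfile_nonneg (n : ℕ) (u : ℝ) : 0 ≤ divisorProfile n u :=
  sum_nonneg fun _ _ => (exp_pos _).le

lemma divisorProfile_le_card (n : ℕ) (u : ℝ) : divisorProfile n u ≤ n.divisors.card := by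
  calc divisorProfile n u ≤ ∑ d ∈ n.divisors, (1 : ℝ) :=
        sum_le_sum fun d _ => exp_le_one_iff.2 (by simp)
    _ = _ := by simp

lemma continuous_divisorProfile (n : ℕ) : Continuous (divisorProfile n) := by
  unfold divisorProfile
  fun_prop

open MeasureTheory in
lemma integrable_divisorProfile (n : ℕ) : Integrable (divisorProfile n) :=
  integrable_finsetSum _ fun d _ => integrable_exp_neg_abs.comp_sub_right (log d)

lemma integral_divisorProfile (n : ℕ) : ∫ u, divisorProfile n u = 2 * n.divisors.card := by
  unfold divisorProfile
  rw [MeasureTheory.integral_finsetSum _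
    fun (d : ℕ) _ => integrable_exp_neg_abs.comp_sub_right (log d)]
  have h (d : ℕ) : ∫ u : ℝ, exp (-|u - log d|) = 2 := by
    rw [MeasureTheory.integral_sub_right_eq_self (fun u : ℝ => exp (-|u|)) (log d)]
    simpa using integral_exp_neg_mul_abs one_pos
  simp [h, mul_comm]

open MeasureTheory in
lemma integrable_of_le_mul_divisorProfile {f : ℝ → ℝ} (n : ℕ) (C : ℝ) (hf : Continuous f)
    (h0 : ∀ u, 0 ≤ f u) (h : ∀ u, f u ≤ C * divisorProfile n u) : Integrable f := by
  refine ((integrable_divisorProfile n).const_mul C).mono' hf.aestronglyMeasurable ?_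
  exact Filter.Eventually.of_forall fun u => by rw [norm_of_nonneg (h0 u)]; exact h u

open MeasureTheory in
lemma integrable_divisorProfile_pow (n k : ℕ) :
    Integrable fun u => divisorProfile n u ^ (k + 1) := by
  refine integrable_of_le_mul_divisorProfile n ((n.divisors.card : ℝ) ^ k)
    ((continuous_divisorProfile n).pow _) (fun u => pow_nonneg (divisorProfile_nonneg n u) _) ?_
  intro u
  rw [pow_succ]
  gcongr
  exacts [divisorProfile_nonneg n u, divisorProfile_nonneg n u, divisorProfile_le_card n u]

open MeasureTheory in
lemma integrable_divisorProfile_pow_mul_shift (n i j : ℕ) (a : ℝ) :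
    Integrable fun u => divisorProfile n u ^ (i + 1) * divisorProfile n (u - a) ^ j := by
  refine integrable_of_le_mul_divisorProfile n ((n.divisors.card : ℝ) ^ (i + j)) ?_ ?_ ?_
  · have := continuous_divisorProfile n
    fun_prop
  · intro u
    have h1 := divisorProfile_nonneg n u
    have h2 := divisorProfile_nonneg n (u - a)
    positivity
  · intro u
    have h1 := divisorProfile_nonneg n u
    have h2 := divisorProfile_nonneg n (u - a)
    calc divisorProfile n u ^ (i + 1) * divisorProfile n (u - a) ^ j
        = divisorProfile n u ^ i * divisorProfile n (u - a) ^ j * divisorProfile n u := by ring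
      _ ≤ (n.divisors.card : ℝ) ^ i * (n.divisors.card : ℝ) ^ j * divisorProfile n u := by
        gcongr
        exacts [divisorProfile_le_card n u, divisorProfile_le_card n (u - a)]
      _ = _ := by ring

lemma integral_divisorProfile_pow_nonneg (n k : ℕ) : 0 ≤ ∫ u, divisorProfile n u ^ k :=
  MeasureTheory.integral_nonneg fun u => pow_nonneg (divisorProfile_nonneg n u) k

lemma profileNorm_nonneg (n : ℕ) : 0 ≤ profileNorm n :=
  rpow_nonneg (mul_nonneg two_pos.le (integral_divisorProfile_pow_nonneg n 4)) _

lemma profileNorm_pow_four (n : ℕ) :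
    profileNorm n ^ 4 = 2 * ∫ u, divisorProfile n u ^ 4 := by
  have h := mul_nonneg two_pos.le (integral_divisorProfile_pow_nonneg n 4)
  rw [profileNorm, ← rpow_natCast, ← rpow_mul h]
  norm_num

/-- The value of the profile at any point is bounded by the norm. -/
lemma divisorProfile_le_profileNorm (n : ℕ) (c : ℝ) : divisorProfile n c ≤ profileNorm n := by
  refine le_of_pow_le_pow_left₀ (n := 4) (by norm_num) (profileNorm_nonneg n) ?_
  rw [profileNorm_pow_four]
  have hpt (u : ℝ) : exp (-(4 * |u - c|)) * divisorProfile n c ^ 4 ≤ divisorProfile n u ^ 4 := by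
    have h1 : exp (-|u - c|) * divisorProfile n c ≤ divisorProfile n u := by
      unfold divisorProfile
      rw [mul_sum]
      refine sum_le_sum fun d _ => ?_
      rw [← exp_add]
      refine exp_le_exp.2 ?_
      have := abs_sub_le u c (log d)
      linarith
    have h2 : exp (-(4 * |u - c|)) = exp (-|u - c|) ^ 4 := by
      rw [← exp_nat_mul]; push_cast; ring_nf
    rw [h2, ← mul_pow]
    exact pow_le_pow_left₀ (mul_nonneg (exp_pos _).le (divisorProfile_nonneg n c)) h1 4
  have hintegral : ∫ u : ℝ, exp (-(4 * |u - c|)) = 1 / 2 := by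
    rw [MeasureTheory.integral_sub_right_eq_self (fun u : ℝ => exp (-(4 * |u|))) c,
      integral_exp_neg_mul_abs (by norm_num)]
    norm_num
  have hI : MeasureTheory.Integrable fun u : ℝ => exp (-(4 * |u - c|)) := by
    refine not_imp_comm.1 MeasureTheory.integral_undef ?_
    rw [hintegral]; norm_num
  have := MeasureTheory.integral_mono (hI.mul_const (divisorProfile n c ^ 4))
    (integrable_divisorProfile_pow n 3) hpt
  rw [MeasureTheory.integral_mul_const, hintegral] at this
  norm_num at this
  linarith

lemma profileNorm_pos {n : ℕ} (hn : n ≠ 0) : 0 < profileNorm n := by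
  refine lt_of_lt_of_le ?_ (divisorProfile_le_profileNorm n 0)
  exact sum_pos (fun _ _ => exp_pos _) (Nat.nonempty_divisors.2 hn)

lemma profileNorm_le_card_divisors (n : ℕ) : profileNorm n ≤ n.divisors.card := by
  refine le_of_pow_le_pow_left₀ (n := 4) (by norm_num) (Nat.cast_nonneg _) ?_
  rw [profileNorm_pow_four]
  have hintegral (d : ℕ) : ∫ u : ℝ, exp (-|u - log d|) ^ 4 = 1 / 2 := by
    rw [MeasureTheory.integral_sub_right_eq_self (fun u : ℝ => exp (-|u|) ^ 4) (log d)]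
    have h2 (u : ℝ) : exp (-|u|) ^ 4 = exp (-(4 * |u|)) := by
      rw [← exp_nat_mul]; push_cast; ring_nf
    simp_rw [h2]
    rw [integral_exp_neg_mul_abs (by norm_num)]
    norm_num
  have hI (d : ℕ) : MeasureTheory.Integrable fun u : ℝ => exp (-|u - log d|) ^ 4 := by
    refine not_imp_comm.1 MeasureTheory.integral_undef ?_
    rw [hintegral]; norm_num
  have hpt (u : ℝ) : divisorProfile n u ^ 4 ≤
      (n.divisors.card : ℝ) ^ 3 * ∑ d ∈ n.divisors, exp (-|u - log d|) ^ 4 :=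
    pow_sum_le_card_mul_sum_pow (fun (d : ℕ) _ => (exp_pos (-|u - log d|)).le) 3
  have := MeasureTheory.integral_mono (integrable_divisorProfile_pow n 3)
    ((MeasureTheory.integrable_finsetSum n.divisors fun d _ => hI d).const_mul
      ((n.divisors.card : ℝ) ^ 3)) hpt
  rw [MeasureTheory.integral_const_mul,
    MeasureTheory.integral_finsetSum _ fun d _ => hI d] at this
  simp only [hintegral, sum_const, nsmul_eq_mul] at this
  norm_num at this
  linarith

lemma sum_divisors_mul_prime_pow {m p : ℕ} (hp : p.Prime) (hpm : ¬ p ∣ m) (k : ℕ) (f : ℕ → ℝ) :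
    ∑ d ∈ (m * p ^ k).divisors, f d =
      ∑ i ∈ range (k + 1), ∑ d ∈ m.divisors, f (d * p ^ i) := by
  have hcop : m.Coprime (p ^ k) := ((Nat.Prime.coprime_iff_not_dvd hp).2 hpm).symm.pow_right k
  have hnd {d : ℕ} (hd : d ∈ m.divisors) : ¬ p ∣ d := fun h =>
    hpm (h.trans (Nat.dvd_of_mem_divisors hd))
  rw [sum_comm, ← sum_product']
  symm
  refine sum_bij (fun x _ => x.1 * p ^ x.2) ?_ ?_ ?_ (fun _ _ => rfl)
  · rintro ⟨d, i⟩ h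
    simp only [mem_product, Nat.mem_divisors, mem_range] at h ⊢
    exact ⟨mul_dvd_mul h.1.1 (pow_dvd_pow p (by omega)),
      mul_ne_zero h.1.2 (pow_ne_zero _ hp.ne_zero)⟩
  · rintro ⟨d, i⟩ h ⟨d', i'⟩ h' he
    simp only [mem_product] at h h' he
    have hd0 := (Nat.pos_of_mem_divisors h.1).ne'
    have hd0' := (Nat.pos_of_mem_divisors h'.1).ne'
    have hi : i = i' := by
      have := congrArg (fun z => z.factorization p) he
      simpa [Nat.factorization_mul, hd0, hd0', hp.ne_zero, hp.factorization_self,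
        Nat.factorization_eq_zero_of_not_dvd (hnd h.1),
        Nat.factorization_eq_zero_of_not_dvd (hnd h'.1)] using this
    subst hi
    rw [Nat.eq_of_mul_eq_mul_right (pow_pos hp.pos i) he]
  · intro b hb
    rw [Nat.divisors_mul, mem_mul] at hb
    obtain ⟨d, hd, e, he, rfl⟩ := hb
    obtain ⟨i, hi, rfl⟩ := (Nat.mem_divisors_prime_pow hp k).1 he
    exact ⟨(d, i), by simp only [mem_product, mem_range]; exact ⟨hd, by omega⟩, rfl⟩

lemma divisorProfile_mul_prime_pow {m p : ℕ} (hp : p.Prime) (hpm : ¬ p ∣ m) (k : ℕ) (u : ℝ) :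
    divisorProfile (m * p ^ k) u =
      ∑ i ∈ range (k + 1), divisorProfile m (u - i * log p) := by
  unfold divisorProfile
  rw [sum_divisors_mul_prime_pow hp hpm k fun d => exp (-|u - log d|)]
  refine sum_congr rfl fun i _ => sum_congr rfl fun d hd => ?_
  have hd0 : (d : ℝ) ≠ 0 := Nat.cast_ne_zero.2 (Nat.pos_of_mem_divisors hd).ne'
  have hp0 : (p : ℝ) ≠ 0 := Nat.cast_ne_zero.2 hp.ne_zero
  push_cast
  rw [log_mul hd0 (pow_ne_zero _ hp0), log_pow]
  congr 3
  ring

lemma profileNorm_mul_prime_pow_le {m p : ℕ} (hp : p.Prime) (hpm : ¬ p ∣ m) (k : ℕ) :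
    profileNorm (m * p ^ k) ≤ (k + 1) * profileNorm m := by
  refine le_of_pow_le_pow_left₀ (n := 4) (by norm_num)
    (mul_nonneg (by positivity) (profileNorm_nonneg m)) ?_
  rw [mul_pow, profileNorm_pow_four, profileNorm_pow_four]
  have hI (i : ℕ) : MeasureTheory.Integrable fun u : ℝ => divisorProfile m (u - i * log p) ^ 4 :=
    (integrable_divisorProfile_pow m 3).comp_sub_right (i * log p)
  have := MeasureTheory.integral_mono (integrable_divisorProfile_pow (m * p ^ k) 3)
    ((MeasureTheory.integrable_finsetSum (range (k + 1)) fun i _ => hI i).const_mul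
      (((range (k + 1)).card : ℝ) ^ 3))
    (fun u => by
      simp only [divisorProfile_mul_prime_pow hp hpm k u]
      exact pow_sum_le_card_mul_sum_pow (fun i _ => divisorProfile_nonneg m _) 3)
  rw [MeasureTheory.integral_const_mul,
    MeasureTheory.integral_finsetSum _ fun i _ => hI i] at this
  have hintegral (i : ℕ) : ∫ u : ℝ, divisorProfile m (u - i * log p) ^ 4 =
      ∫ u : ℝ, divisorProfile m u ^ 4 :=
    MeasureTheory.integral_sub_right_eq_self (fun u => divisorProfile m u ^ 4) (i * log p)
  simp only [hintegral, sum_const, nsmul_eq_mul, card_range] at this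
  push_cast at this
  nlinarith

lemma add_pow_four_le {a b : ℝ} (ha : 0 ≤ a) (hb : 0 ≤ b) :
    (a + b) ^ 4 ≤ a ^ 4 + b ^ 4 + 7 * (a ^ 3 * b + a * b ^ 3) := by
  nlinarith [mul_nonneg (mul_nonneg ha hb) (sq_nonneg (a - b))]

/-- Comparison of the third moment of the profile with its first and fourth moments. -/
lemma integral_divisorProfile_pow_three_le (n : ℕ) {ν : ℝ} (hν : 0 < ν) :
    3 * ∫ u, divisorProfile n u ^ 3 ≤
      2 * n.divisors.card / ν ^ 2 + ν * profileNorm n ^ 4 := by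
  have hpt (u : ℝ) : 3 * divisorProfile n u ^ 3 ≤
      1 / ν ^ 2 * divisorProfile n u + 2 * ν * divisorProfile n u ^ 4 := by
    have h := divisorProfile_nonneg n u
    set x := divisorProfile n u
    have h1 : 3 * (ν * x) ^ 2 ≤ 1 + 2 * (ν * x) ^ 3 := by
      nlinarith [mul_nonneg (sq_nonneg (ν * x - 1)) (by positivity : 0 ≤ 2 * (ν * x) + 1)]
    have h2 : 3 * x ^ 3 = x / ν ^ 2 * (3 * (ν * x) ^ 2) := by field_simp
    have h3 : 1 / ν ^ 2 * x + 2 * ν * x ^ 4 = x / ν ^ 2 * (1 + 2 * (ν * x) ^ 3) := by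
      field_simp
    rw [h2, h3]
    exact mul_le_mul_of_nonneg_left h1 (by positivity)
  have := MeasureTheory.integral_mono ((integrable_divisorProfile_pow n 2).const_mul 3)
    (((integrable_divisorProfile n).const_mul (1 / ν ^ 2)).add
      ((integrable_divisorProfile_pow n 3).const_mul (2 * ν))) hpt
  simp only [Pi.add_apply] at this
  rw [MeasureTheory.integral_add ((integrable_divisorProfile n).const_mul (1 / ν ^ 2))
      ((integrable_divisorProfile_pow n 3).const_mul (2 * ν)),
    MeasureTheory.integral_const_mul, MeasureTheory.integral_const_mul,
    MeasureTheory.integral_const_mul, integral_divisorProfile] at this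
  rw [profileNorm_pow_four]
  exact this.trans (le_of_eq (by ring))

lemma profileNorm_mul_prime_pow_four_le {m p : ℕ} (hp : p.Prime) (hpm : ¬ p ∣ m) :
    profileNorm (m * p) ^ 4 ≤ 2 * profileNorm m ^ 4 +
      14 * ((∫ u, divisorProfile m u ^ 3 * divisorProfile m (u - log p)) +
        ∫ u, divisorProfile m u ^ 3 * divisorProfile m (u + log p)) := by
  have hF (u : ℝ) : divisorProfile (m * p) u =
      divisorProfile m u + divisorProfile m (u - log p) := by
    have := divisorProfile_mul_prime_pow hp hpm 1 u
    simpa [sum_range_succ] using this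
  rw [profileNorm_pow_four, profileNorm_pow_four]
  have i4 := integrable_divisorProfile_pow m 3
  have i4' := i4.comp_sub_right (log p)
  have ia := integrable_divisorProfile_pow_mul_shift m 2 1 (log p)
  have ib := integrable_divisorProfile_pow_mul_shift m 0 3 (log p)
  have := MeasureTheory.integral_mono (integrable_divisorProfile_pow (m * p) 3)
    ((i4.add i4').add ((ia.add ib).const_mul 7)) (fun u => by
      simp only [hF, Pi.add_apply, Nat.reduceAdd, pow_one]
      exact add_pow_four_le (divisorProfile_nonneg m u) (divisorProfile_nonneg m _))
  rw [MeasureTheory.integral_add' (i4.add i4') ((ia.add ib).const_mul 7),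
    MeasureTheory.integral_add' i4 i4', MeasureTheory.integral_const_mul,
    MeasureTheory.integral_add' ia ib,
    MeasureTheory.integral_sub_right_eq_self (fun u => divisorProfile m u ^ (3 + 1)) (log p)]
    at this
  have hshift : ∫ u, divisorProfile m u ^ (0 + 1) * divisorProfile m (u - log p) ^ 3 =
      ∫ u, divisorProfile m u ^ 3 * divisorProfile m (u + log p) := by
    rw [← MeasureTheory.integral_add_right_eq_self _ (log p)]
    refine MeasureTheory.integral_congr_ae (Filter.Eventually.of_forall fun u => ?_)
    simp only [add_sub_cancel_right]
    ring
  rw [hshift] at this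
  simp only [Nat.reduceAdd, pow_one] at this
  linarith

/-- The correlation of the profile with its translates by logarithms of primes, on average. -/
lemma sum_mul_integral_shift_le (m N : ℕ) {w : ℕ → ℝ} (hw : ∀ p ∈ Nat.primesLE N, 0 ≤ w p ∧
    w p ≤ log p / p) {ε : ℝ} (hε : ε = 1 ∨ ε = -1) :
    ∑ p ∈ Nat.primesLE N, w p * ∫ u, divisorProfile m u ^ 3 * divisorProfile m (u - ε * log p) ≤
      2 * log 4 * m.divisors.card * ∫ u, divisorProfile m u ^ 3 := by
  have hi (p : ℕ) : MeasureTheory.Integrable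
      fun u => w p * (divisorProfile m u ^ 3 * divisorProfile m (u - ε * log p)) := by
    simpa using (integrable_divisorProfile_pow_mul_shift m 2 1 (ε * log p)).const_mul (w p)
  simp_rw [← MeasureTheory.integral_const_mul]
  rw [← MeasureTheory.integral_finsetSum _ fun p _ => hi p]
  refine MeasureTheory.integral_mono (MeasureTheory.integrable_finsetSum _ fun p _ => hi p)
    ((integrable_divisorProfile_pow m 2).const_mul _) fun u => ?_
  have hsum : ∑ p ∈ Nat.primesLE N, w p * divisorProfile m (u - ε * log p) ≤
      2 * log 4 * m.divisors.card := by
    unfold divisorProfile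
    simp_rw [mul_sum]
    rw [sum_comm]
    calc ∑ d ∈ m.divisors, ∑ p ∈ Nat.primesLE N, w p * exp (-|u - ε * log p - log d|)
        ≤ ∑ d ∈ m.divisors, 2 * log 4 := by
          refine sum_le_sum fun d _ => ?_
          refine le_trans (sum_le_sum fun p hp => ?_)
            (sum_log_div_mul_exp_primesLE_le N (ε * (u - log d)))
          have habs : |u - ε * log p - log d| = |ε * (u - log d) - log p| := by
            rcases hε with rfl | rfl
            · congr 1; ring
            · rw [← abs_neg]; congr 1; ring
          rw [habs]
          exact mul_le_mul_of_nonneg_right (hw p hp).2 (exp_pos _).le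
      _ = _ := by rw [sum_const, nsmul_eq_mul]; ring
  have h0 := pow_nonneg (divisorProfile_nonneg m u) 3
  calc ∑ p ∈ Nat.primesLE N, w p * (divisorProfile m u ^ 3 * divisorProfile m (u - ε * log p))
      = (∑ p ∈ Nat.primesLE N, w p * divisorProfile m (u - ε * log p)) *
          divisorProfile m u ^ 3 := by
        rw [sum_mul]; exact sum_congr rfl fun p _ => by ring
    _ ≤ _ := mul_le_mul_of_nonneg_right hsum h0

lemma log_four_lt : log 4 < 1.3863 := by
  have h : log 4 = 2 * log 2 := by
    rw [show (4 : ℝ) = 2 ^ 2 by norm_num, log_pow]; norm_num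
  rw [h]
  linarith [log_two_lt_d9]

lemma four_mul_mul_pow_three_le {y l : ℝ} (hy : 0 ≤ y) (hl : 0 ≤ l) :
    4 * y * l ^ 3 ≤ y ^ 4 + 3 * l ^ 4 := by
  have : 0 ≤ (y - l) ^ 2 * (y ^ 2 + 2 * y * l + 3 * l ^ 2) := by positivity
  nlinarith

lemma quartic_bound {P Q a s I : ℝ} (hQ : 0 ≤ Q) (hQP : Q ≤ P) (ha : 0 ≤ a) (hs : 0 ≤ s)
    (hI : 3 * I ≤ Q * (2 * (5 / 4) ^ 2 * s ^ 2 * a ^ 2 + 4 / 5 * s * a ^ 3)) :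
    2 * P * a ^ 4 + 56 * log 4 * I ≤ P * (1.19 * a + 3.2 * s) ^ 4 := by
  have hl := log_four_lt
  have hl0 : 0 ≤ log 4 := log_nonneg (by norm_num)
  have hP : 0 ≤ P := hQ.trans hQP
  set B := 2 * (5 / 4) ^ 2 * s ^ 2 * a ^ 2 + 4 / 5 * s * a ^ 3 with hB
  have hB0 : 0 ≤ B := by positivity
  have h1 : 56 * log 4 * I ≤ 56 * 1.3863 / 3 * (P * B) := by
    calc 56 * log 4 * I = 56 * log 4 / 3 * (3 * I) := by ring
      _ ≤ 56 * log 4 / 3 * (P * B) := by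
        refine mul_le_mul_of_nonneg_left (hI.trans ?_) (by positivity)
        exact mul_le_mul_of_nonneg_right hQP hB0
      _ ≤ _ := by gcongr
  have h2 : 2 * a ^ 4 + 56 * 1.3863 / 3 * B ≤ (1.19 * a + 3.2 * s) ^ 4 := by
    have e1 : 0 ≤ a ^ 4 := by positivity
    have e2 : 0 ≤ s * a ^ 3 := by positivity
    have e3 : 0 ≤ s ^ 2 * a ^ 2 := by positivity
    have e4 : 0 ≤ s ^ 3 * a := by positivity
    have e5 : 0 ≤ s ^ 4 := by positivity
    rw [hB]
    nlinarith
  nlinarith [mul_le_mul_of_nonneg_left h2 hP]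

lemma sum_primesLE_mul_profileNorm_pow_four_le (m N : ℕ) {P : ℝ} {w : ℕ → ℝ}
    (hw : ∀ p ∈ Nat.primesLE N, 0 ≤ w p ∧ w p ≤ log p / p)
    (hwsum : ∑ p ∈ Nat.primesLE N, w p ≤ P) :
    ∑ p ∈ Nat.primesLE N with ¬ p ∣ m, w p * profileNorm (m * p) ^ 4 ≤
      2 * P * profileNorm m ^ 4 +
        56 * log 4 * (m.divisors.card * ∫ u, divisorProfile m u ^ 3) := by
  obtain ⟨X, hX⟩ : ∃ X : ℝ → ℕ → ℝ, ∀ ε p, X ε p =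
    ∫ u, divisorProfile m u ^ 3 * divisorProfile m (u - ε * log p) := ⟨_, fun _ _ => rfl⟩
  have hX0 (ε : ℝ) (p : ℕ) : 0 ≤ X ε p := by
    rw [hX]
    exact MeasureTheory.integral_nonneg fun u =>
      mul_nonneg (pow_nonneg (divisorProfile_nonneg m u) 3) (divisorProfile_nonneg m _)
  calc ∑ p ∈ Nat.primesLE N with ¬ p ∣ m, w p * profileNorm (m * p) ^ 4
      ≤ ∑ p ∈ Nat.primesLE N with ¬ p ∣ m,
          w p * (2 * profileNorm m ^ 4 + 14 * (X 1 p + X (-1) p)) := by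
        refine sum_le_sum fun p hp => ?_
        obtain ⟨hpN, hpm⟩ := mem_filter.1 hp
        refine mul_le_mul_of_nonneg_left ?_ (hw p hpN).1
        have := profileNorm_mul_prime_pow_four_le (Nat.mem_primesLE.1 hpN).2 hpm
        simpa [hX] using this
    _ ≤ ∑ p ∈ Nat.primesLE N, w p * (2 * profileNorm m ^ 4 + 14 * (X 1 p + X (-1) p)) := by
        refine sum_le_sum_of_subset_of_nonneg (filter_subset _ _) fun p hp _ => ?_
        have h1 := (hw p hp).1
        have h2 := hX0 1 p
        have h3 := hX0 (-1) p
        positivity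
    _ = 2 * profileNorm m ^ 4 * (∑ p ∈ Nat.primesLE N, w p) +
          14 * (∑ p ∈ Nat.primesLE N, w p * X 1 p) +
          14 * (∑ p ∈ Nat.primesLE N, w p * X (-1) p) := by
        rw [mul_sum, mul_sum, mul_sum, ← sum_add_distrib, ← sum_add_distrib]
        exact sum_congr rfl fun p _ => by ring
    _ ≤ _ := by
        have e1 := sum_mul_integral_shift_le m N hw (Or.inl rfl)
        have e2 := sum_mul_integral_shift_le m N hw (Or.inr rfl)
        have e3 := mul_le_mul_of_nonneg_left hwsum (by positivity : 0 ≤ 2 * profileNorm m ^ 4)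
        simp_rw [← hX] at e1 e2
        linarith

/-- The averaged effect on the norm of multiplying by a prime. -/
lemma sum_primesLE_mul_profileNorm_le {m : ℕ} (hm : m ≠ 0) (N : ℕ) {σ : ℝ} (hσ : 0 < σ) :
    ∑ p ∈ Nat.primesLE N with ¬ p ∣ m,
        log p * (p : ℝ) ^ (-(1 + σ)) * profileNorm (m * p) ≤
      (1 / σ + log 4) *
        (1.19 * profileNorm m + 3.2 * (σ ^ (3 / 4 : ℝ) * m.divisors.card)) := by
  obtain ⟨w, hwdef⟩ : ∃ w : ℕ → ℝ, ∀ p, w p = log p * (p : ℝ) ^ (-(1 + σ)) := ⟨_, fun _ => rfl⟩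
  simp_rw [← hwdef]
  obtain ⟨ρ, hρ0, hρ4, hρ3⟩ : ∃ ρ : ℝ, 0 < ρ ∧ ρ ^ 4 = σ ∧ σ ^ (3 / 4 : ℝ) = ρ ^ 3 := by
    refine ⟨σ ^ (1 / 4 : ℝ), rpow_pos_of_pos hσ _, ?_, ?_⟩ <;>
    · rw [← rpow_natCast, ← rpow_mul hσ.le]; norm_num
  have hw : ∀ p ∈ Nat.primesLE N, 0 ≤ w p ∧ w p ≤ log p / p := by
    intro p hp
    have hpp := (Nat.mem_primesLE.1 hp).2
    have hp1 : (1 : ℝ) ≤ p := by exact_mod_cast hpp.one_le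
    have hlog := log_nonneg hp1
    rw [hwdef]
    refine ⟨by positivity, ?_⟩
    rw [div_eq_mul_inv, ← rpow_neg_one]
    exact mul_le_mul_of_nonneg_left (rpow_le_rpow_of_exponent_le hp1 (by linarith)) hlog
  have hwsum : ∑ p ∈ Nat.primesLE N, w p ≤ 1 / σ + log 4 := by
    simp_rw [hwdef]
    exact sum_log_mul_rpow_primesLE_le N hσ
  have hmain := sum_primesLE_mul_profileNorm_pow_four_le m N hw hwsum
  have ha0 : 0 < profileNorm m := profileNorm_pos hm
  have hI3 := integral_divisorProfile_pow_three_le m (ν := 4 / 5 / (ρ * profileNorm m))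
    (by positivity)
  have hl0 : 0 ≤ log 4 := log_nonneg (by norm_num)
  rw [hρ3]
  generalize profileNorm m = a at *
  have hτ0 : (0 : ℝ) ≤ (m.divisors.card : ℝ) := Nat.cast_nonneg _
  generalize (m.divisors.card : ℝ) = τ at *
  generalize (∫ u, divisorProfile m u ^ 3) = I at *
  generalize hP : 1 / σ + log 4 = P at *
  have hs0 : 0 ≤ ρ ^ 3 * τ := by positivity
  have hquart := hmain.trans (quartic_bound (Q := 1 / σ) (s := ρ ^ 3 * τ) (by positivity)
    (by linarith) ha0.le hs0 (by
      calc 3 * (τ * I) = τ * (3 * I) := by ring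
        _ ≤ _ := mul_le_mul_of_nonneg_left hI3 hτ0
        _ = _ := by
          rw [← hρ4]
          field_simp))
  obtain ⟨l, hl⟩ : ∃ l, l = 1.19 * a + 3.2 * (ρ ^ 3 * τ) := ⟨_, rfl⟩
  have hlpos : 0 < l := by rw [hl]; positivity
  rw [← hl] at hquart ⊢
  have hw0 : ∀ p ∈ (Nat.primesLE N).filter (fun p => ¬ p ∣ m), 0 ≤ w p :=
    fun p hp => (hw p (mem_filter.1 hp).1).1
  have hfin : 4 * l ^ 3 * ∑ p ∈ Nat.primesLE N with ¬ p ∣ m, w p * profileNorm (m * p) ≤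
      4 * l ^ 3 * (P * l) := by
    calc 4 * l ^ 3 * ∑ p ∈ Nat.primesLE N with ¬ p ∣ m, w p * profileNorm (m * p)
        ≤ ∑ p ∈ Nat.primesLE N with ¬ p ∣ m, w p * (profileNorm (m * p) ^ 4 + 3 * l ^ 4) := by
          rw [mul_sum]
          refine sum_le_sum fun p hp => ?_
          have := mul_le_mul_of_nonneg_left
            (four_mul_mul_pow_three_le (profileNorm_nonneg (m * p)) hlpos.le) (hw0 p hp)
          linarith
      _ = (∑ p ∈ Nat.primesLE N with ¬ p ∣ m, w p * profileNorm (m * p) ^ 4) +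
            3 * l ^ 4 * ∑ p ∈ Nat.primesLE N with ¬ p ∣ m, w p := by
          rw [mul_sum, ← sum_add_distrib]
          exact sum_congr rfl fun p _ => by ring
      _ ≤ P * l ^ 4 + 3 * l ^ 4 * P := by
          refine add_le_add hquart (mul_le_mul_of_nonneg_left (le_trans ?_ hwsum)
            (by positivity))
          exact sum_le_sum_of_subset_of_nonneg (filter_subset _ _) fun p hp _ => (hw p hp).1
      _ = _ := by ring
  exact le_of_mul_le_mul_left hfin (by positivity)

lemma sum_mul_log_le_sum_prime_pow {g : ℕ → ℝ} (hg : ∀ n, 0 ≤ g n) (N : ℕ) :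
    ∑ n ∈ Icc 1 N, g n * log n ≤
      ∑ m ∈ Icc 1 N, ∑ p ∈ Nat.primesLE N with ¬ p ∣ m, ∑ k ∈ Icc 1 N,
        g (m * p ^ k) * (k * log p) := by
  let S : Finset ((_ : ℕ) × ℕ) := (Icc 1 N).sigma fun n => n.primeFactors
  let T : Finset ((_ : ℕ) × ((_ : ℕ) × ℕ)) :=
    (Icc 1 N).sigma fun m => ((Nat.primesLE N).filter fun p => ¬ p ∣ m).sigma fun _ => Icc 1 N
  let e : ((_ : ℕ) × ℕ) → ((_ : ℕ) × ((_ : ℕ) × ℕ)) := fun x =>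
    ⟨x.1 / x.2 ^ x.1.factorization x.2, x.2, x.1.factorization x.2⟩
  let f : ((_ : ℕ) × ((_ : ℕ) × ℕ)) → ℝ := fun y =>
    g (y.1 * y.2.1 ^ y.2.2) * (y.2.2 * log y.2.1)
  have hR : ∑ m ∈ Icc 1 N, ∑ p ∈ Nat.primesLE N with ¬ p ∣ m, ∑ k ∈ Icc 1 N,
      g (m * p ^ k) * (k * log p) = ∑ y ∈ T, f y := by
    simp only [T, f, sum_sigma]
  have hL : ∑ n ∈ Icc 1 N, g n * log n = ∑ x ∈ S, f (e x) := by
    simp only [S, sum_sigma]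
    refine sum_congr rfl fun n _ => ?_
    rw [log_nat_eq_sum_factorization, Finsupp.sum, mul_sum, Nat.support_factorization]
    refine sum_congr rfl fun p _ => ?_
    simp only [f, e]
    rw [Nat.div_mul_cancel (Nat.ordProj_dvd n p)]
  have hinj : Set.InjOn e S := by
    rintro ⟨n, p⟩ - ⟨n', p'⟩ - h
    simp only [e, Sigma.mk.injEq, heq_eq_eq] at h
    obtain ⟨h1, rfl, h2⟩ := h
    have h3 : n = n' := by
      rw [← Nat.div_mul_cancel (Nat.ordProj_dvd n p), ← Nat.div_mul_cancel (Nat.ordProj_dvd n' p),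
        h1, h2]
    rw [h3]
  rw [hL, hR, ← sum_image (f := f) hinj]
  refine sum_le_sum_of_subset_of_nonneg ?_ fun y _ _ =>
    mul_nonneg (hg _) (mul_nonneg (Nat.cast_nonneg _) (log_natCast_nonneg _))
  intro y hy
  obtain ⟨⟨n, p⟩, hx, rfl⟩ := mem_image.1 hy
  simp only [S, mem_sigma, mem_Icc] at hx
  obtain ⟨⟨h1, hN⟩, hp⟩ := hx
  have hpp := Nat.prime_of_mem_primeFactors hp
  have hn0 : n ≠ 0 := by omega
  simp only [T, e, mem_sigma, mem_Icc, mem_filter, Nat.mem_primesLE]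
  refine ⟨⟨Nat.ordCompl_pos p hn0, (Nat.div_le_self _ _).trans hN⟩,
    ⟨⟨(Nat.le_of_mem_primeFactors hp).trans hN, hpp⟩, Nat.not_dvd_ordCompl hpp hn0⟩, ?_, ?_⟩
  · exact hpp.factorization_pos_of_dvd hn0 (Nat.dvd_of_mem_primeFactors hp)
  · exact ((Nat.factorization_lt p hn0).le).trans hN

lemma card_primeFactors_mul_prime_pow {m p k : ℕ} (hp : p.Prime) (hpm : ¬ p ∣ m)
    (hk : k ≠ 0) : (m * p ^ k).primeFactors.card = m.primeFactors.card + 1 := by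
  have hcop : m.Coprime (p ^ k) := ((Nat.Prime.coprime_iff_not_dvd hp).2 hpm).symm.pow_right k
  rw [hcop.primeFactors_mul, Nat.primeFactors_prime_pow hk hp,
    card_union_of_disjoint, card_singleton]
  rw [disjoint_singleton_right]
  exact fun h => hpm (Nat.dvd_of_mem_primeFactors h)

lemma hooleyDelta_le_profileNorm (n : ℕ) : (hooleyDelta n : ℝ) ≤ exp (1 / 2) * profileNorm n := by
  have hmem := Nat.sSup_mem (s := {m : ℕ | ∃ u : ℝ, m = (n.divisors.filter
    (fun d : ℕ => exp u < (d : ℝ) ∧ (d : ℝ) ≤ exp (u + 1))).card}) ⟨_, 0, rfl⟩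
    ⟨n.divisors.card, by rintro _ ⟨u, rfl⟩; exact card_filter_le _ _⟩
  obtain ⟨u, hu⟩ := hmem
  have hu' : hooleyDelta n = (n.divisors.filter
    (fun d : ℕ => exp u < (d : ℝ) ∧ (d : ℝ) ≤ exp (u + 1))).card := hu
  rw [hu']
  have h1 : exp (-(1 / 2)) * (n.divisors.filter
      (fun d : ℕ => exp u < (d : ℝ) ∧ (d : ℝ) ≤ exp (u + 1))).card ≤
      divisorProfile n (u + 1 / 2) := by
    rw [mul_comm, ← nsmul_eq_mul, ← sum_const]
    refine le_trans (sum_le_sum fun d hd => ?_) (sum_le_sum_of_subset_of_nonneg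
      (filter_subset _ _) fun d _ _ => (exp_pos (-|u + 1 / 2 - log d|)).le)
    obtain ⟨-, h1, h2⟩ := mem_filter.1 hd
    have hd0 : (0 : ℝ) < d := (exp_pos u).trans h1
    have h3 := (lt_log_iff_exp_lt hd0).2 h1
    have h4 := (log_le_iff_le_exp hd0).2 h2
    refine exp_le_exp.2 (neg_le_neg (abs_le.2 ⟨?_, ?_⟩)) <;> linarith
  have h2 := h1.trans (divisorProfile_le_profileNorm n _)
  calc _ = exp (1 / 2) * (exp (-(1 / 2)) * (n.divisors.filter
      (fun d : ℕ => exp u < (d : ℝ) ∧ (d : ℝ) ≤ exp (u + 1))).card) := by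
        rw [← mul_assoc, ← exp_add]; simp
    _ ≤ _ := mul_le_mul_of_nonneg_left h2 (exp_pos _).le

/-- The multiplicative weight `t ^ ω(n)` times the profile norm of `n`. -/
noncomputable def weightedNorm (t : ℝ) (n : ℕ) : ℝ :=
  t ^ n.primeFactors.card * profileNorm n

lemma weightedNorm_nonneg {t : ℝ} (ht : 0 ≤ t) (n : ℕ) : 0 ≤ weightedNorm t n :=
  mul_nonneg (pow_nonneg ht _) (profileNorm_nonneg n)

lemma weightedNorm_mul_prime_pow_le {t : ℝ} (ht : 0 ≤ t) {m p k : ℕ} (hp : p.Prime)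
    (hpm : ¬ p ∣ m) (hk : k ≠ 0) :
    weightedNorm t (m * p ^ k) ≤ t * ((k + 1) * weightedNorm t m) := by
  unfold weightedNorm
  rw [card_primeFactors_mul_prime_pow hp hpm hk]
  calc t ^ (m.primeFactors.card + 1) * profileNorm (m * p ^ k)
      ≤ t ^ (m.primeFactors.card + 1) * ((k + 1) * profileNorm m) :=
        mul_le_mul_of_nonneg_left (profileNorm_mul_prime_pow_le hp hpm k) (pow_nonneg ht _)
    _ = _ := by ring

lemma sum_Icc_one_eq_add_sum_Icc_two {N : ℕ} (hN : 1 ≤ N) (f : ℕ → ℝ) :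
    ∑ k ∈ Icc 1 N, f k = f 1 + ∑ k ∈ Icc 2 N, f k := by
  have h : Icc 1 N = insert 1 (Icc 2 N) := by
    ext a; simp only [mem_insert, mem_Icc]; omega
  rw [h, sum_insert (by simp)]

lemma sum_weightedNorm_mul_log_le {t : ℝ} (ht : 0 ≤ t) {σ : ℝ} (hσ : 0 < σ) (N : ℕ) :
    ∑ n ∈ Icc 1 N, weightedNorm t n * (n : ℝ) ^ (-(1 + σ)) * log n ≤
      t * ((1 / σ + log 4) *
        (1.19 * (∑ n ∈ Icc 1 N, weightedNorm t n * (n : ℝ) ^ (-(1 + σ))) +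
          3.2 * (σ ^ (3 / 4 : ℝ) * ∑ n ∈ Icc 1 N,
            t ^ n.primeFactors.card * n.divisors.card * (n : ℝ) ^ (-(1 + σ)))) +
        28 * ∑ n ∈ Icc 1 N, weightedNorm t n * (n : ℝ) ^ (-(1 + σ))) := by
  refine (sum_mul_log_le_sum_prime_pow
    (fun n => mul_nonneg (weightedNorm_nonneg ht n) (by positivity)) N).trans ?_
  have hR : t * ((1 / σ + log 4) *
        (1.19 * (∑ n ∈ Icc 1 N, weightedNorm t n * (n : ℝ) ^ (-(1 + σ))) +
          3.2 * (σ ^ (3 / 4 : ℝ) * ∑ n ∈ Icc 1 N,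
            t ^ n.primeFactors.card * n.divisors.card * (n : ℝ) ^ (-(1 + σ)))) +
        28 * ∑ n ∈ Icc 1 N, weightedNorm t n * (n : ℝ) ^ (-(1 + σ))) =
      ∑ m ∈ Icc 1 N, (t * t ^ m.primeFactors.card * (m : ℝ) ^ (-(1 + σ)) *
        ((1 / σ + log 4) *
          (1.19 * profileNorm m + 3.2 * (σ ^ (3 / 4 : ℝ) * m.divisors.card))) +
        t * weightedNorm t m * (m : ℝ) ^ (-(1 + σ)) * 28) := by
    simp only [mul_sum, ← sum_add_distrib]
    refine sum_congr rfl fun n _ => ?_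
    unfold weightedNorm
    ring
  rw [hR]
  refine sum_le_sum fun m hm => ?_
  have hm1 := (mem_Icc.1 hm).1
  have hN : 1 ≤ N := hm1.trans (mem_Icc.1 hm).2
  simp_rw [sum_Icc_one_eq_add_sum_Icc_two hN, sum_add_distrib]
  refine add_le_add ?_ ?_
  · calc _ = t * t ^ m.primeFactors.card * (m : ℝ) ^ (-(1 + σ)) *
          ∑ p ∈ Nat.primesLE N with ¬ p ∣ m,
            log p * (p : ℝ) ^ (-(1 + σ)) * profileNorm (m * p) := by
          rw [mul_sum]
          refine sum_congr rfl fun p hp => ?_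
          obtain ⟨hpN, hpm⟩ := mem_filter.1 hp
          have hpp := (Nat.mem_primesLE.1 hpN).2
          unfold weightedNorm
          rw [card_primeFactors_mul_prime_pow hpp hpm one_ne_zero]
          simp only [pow_one]
          push_cast
          rw [mul_rpow (Nat.cast_nonneg _) (Nat.cast_nonneg _)]
          ring
      _ ≤ _ := by
          refine mul_le_mul_of_nonneg_left ?_ (by positivity)
          exact sum_primesLE_mul_profileNorm_le (by omega) N hσ
  · have hw := weightedNorm_nonneg ht m
    have hc : 0 ≤ t * weightedNorm t m * (m : ℝ) ^ (-(1 + σ)) := by positivity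
    refine le_trans ?_ (mul_le_mul_of_nonneg_left (sum_primesLE_sum_prime_pow_le N N) hc)
    rw [mul_sum]
    refine le_trans (sum_le_sum fun p hp => ?_)
      (sum_le_sum_of_subset_of_nonneg (filter_subset (fun p => ¬ p ∣ m) _) fun p hp _ => ?_)
    · obtain ⟨hpN, hpm⟩ := mem_filter.1 hp
      have hpp := (Nat.mem_primesLE.1 hpN).2
      have hp1 : (1 : ℝ) ≤ p := by exact_mod_cast hpp.one_le
      have hlog := log_nonneg hp1
      rw [mul_sum]
      refine sum_le_sum fun k hk => ?_
      have hk2 := (mem_Icc.1 hk).1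
      have hwk := weightedNorm_mul_prime_pow_le ht hpp hpm (k := k) (by omega)
      have hpk : ((m * p ^ k : ℕ) : ℝ) ^ (-(1 + σ)) ≤
          (m : ℝ) ^ (-(1 + σ)) * (1 / (p : ℝ) ^ k) := by
        push_cast
        rw [mul_rpow (Nat.cast_nonneg _) (by positivity)]
        refine mul_le_mul_of_nonneg_left ?_ (by positivity)
        rw [one_div, ← rpow_neg_one]
        exact rpow_le_rpow_of_exponent_le (one_le_pow₀ hp1) (by linarith)
      calc _ ≤ t * ((k + 1) * weightedNorm t m) *
            ((m : ℝ) ^ (-(1 + σ)) * (1 / (p : ℝ) ^ k)) * (k * log p) := by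
            refine mul_le_mul_of_nonneg_right ?_ (by positivity)
            exact mul_le_mul hwk hpk (by positivity) (by positivity)
        _ = _ := by ring
    · refine mul_nonneg hc (sum_nonneg fun k _ => ?_)
      have := log_natCast_nonneg p
      positivity

lemma one_add_one_div_rpow_eq_exp {σ : ℝ} (hσ : 0 < σ) (y : ℝ) :
    (1 + 1 / σ) ^ y = exp (y * (log (1 + σ) - log σ)) := by
  have h : 1 + 1 / σ = (1 + σ) / σ := by field_simp; ring
  rw [h, rpow_def_of_pos (by positivity), log_div (by positivity) hσ.ne']
  ring_nf

/-- Interpolation between the cases `t = 0` and `t = 1`. -/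
lemma rpow_mul_exp_mul_one_add_le {b t σ K : ℝ} (hb : 1.27 ≤ b) (ht : t ∈ Set.Icc (0 : ℝ) 1)
    (hσ : 0 < σ) (hσ1 : σ ≤ 1) (hK : 55 / 4 ≤ K)
    (hσK : (1 + σ) ^ 2 * σ ^ (-(3 / 4) : ℝ) ≤ K) :
    σ ^ (b * t) * (exp (2 * (1 - t)) * (1 + 1 / σ) ^ (2 * t)) ≤ K := by
  obtain ⟨ht0, ht1⟩ := ht
  have hK0 : 0 < K := by linarith
  have hl : log σ ≤ 0 := log_nonpos hσ.le hσ1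
  have h1 : 2 ≤ log K := by
    rw [le_log_iff_exp_le hK0]
    have : exp 2 = exp 1 ^ 2 := by rw [← exp_nat_mul]; norm_num
    rw [this]
    nlinarith [exp_one_lt_d9, exp_pos 1]
  have h2 : 2 * log (1 + σ) - 3 / 4 * log σ ≤ log K := by
    have h := log_le_log (by positivity) hσK
    rw [log_mul (by positivity) (by positivity), log_rpow hσ, log_pow] at h
    push_cast at h
    linarith
  rw [one_add_one_div_rpow_eq_exp hσ, rpow_def_of_pos hσ, ← exp_add, ← exp_add,
    ← le_log_iff_exp_le hK0]
  have h3 := mul_le_mul_of_nonneg_left h2 ht0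
  have h4 := mul_le_mul_of_nonneg_left h1 (sub_nonneg.2 ht1)
  have h5 : 0 ≤ t * ((b - 1.25) * (-log σ)) :=
    mul_nonneg ht0 (mul_nonneg (by linarith) (by linarith))
  linarith

lemma rpow_mul_exp_mul_one_add_le_of_small {b t σ : ℝ} (hb : 1.27 ≤ b)
    (ht : t ∈ Set.Icc (0 : ℝ) 1) (hσ : 0 < σ) (hσ1 : σ ≤ 1 / 128) :
    σ ^ (b * t + 3 / 4) * (exp (2 * (1 - t)) * (1 + 1 / σ) ^ (2 * t)) ≤ (1 + 1 / 128) ^ 2 := by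
  obtain ⟨ht0, ht1⟩ := ht
  have hl : log σ ≤ -(8 / 3) := by
    refine (log_le_log hσ hσ1).trans ?_
    rw [one_div, log_inv, show (128 : ℝ) = 2 ^ 7 by norm_num, log_pow]
    push_cast
    linarith [log_two_gt_d9]
  have h2 : log (1 + σ) ≤ log (1 + 1 / 128) := log_le_log (by positivity) (by linarith)
  have h20 : 0 ≤ log (1 + 1 / 128 : ℝ) := log_nonneg (by norm_num)
  rw [one_add_one_div_rpow_eq_exp hσ, rpow_def_of_pos hσ, ← exp_add, ← exp_add,
    ← le_log_iff_exp_le (by positivity), log_pow]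
  push_cast
  have h3 := mul_le_mul_of_nonneg_left h2 ht0
  have h4 := mul_le_mul_of_nonneg_left hl (sub_nonneg.2 ht1)
  have h5 : 0 ≤ t * ((b - 1.25) * (-log σ)) :=
    mul_nonneg ht0 (mul_nonneg (by linarith) (by linarith))
  have h6 := mul_le_mul_of_nonneg_right ht1 h20
  nlinarith

lemma rpow_neg_three_quarters_le {σ c y : ℝ} (hc : 0 < c) (hcσ : c ≤ σ) (hy : 0 ≤ y)
    (h : 1 ≤ y ^ 4 * c ^ 3) : σ ^ (-(3 / 4) : ℝ) ≤ y := by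
  refine (rpow_le_rpow_of_nonpos hc hcσ (by norm_num)).trans ?_
  refine le_of_pow_le_pow_left₀ (n := 4) (by norm_num) hy ?_
  rw [← rpow_natCast, ← rpow_mul hc.le]
  norm_num
  rwa [inv_le_iff_one_le_mul₀ (by positivity)]

lemma exp_mul_le_of_le {t σ : ℝ} (ht : t ∈ Set.Icc (0 : ℝ) 1) (hσ : 0 ≤ σ)
    (hσ1 : σ ≤ 1 / 128) : exp (31 * t * σ) ≤ 128 / 97 := by
  obtain ⟨ht0, ht1⟩ := ht
  have h1 : 31 * t * σ ≤ 31 / 128 := by nlinarith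
  have h2 : 1 - 31 / 128 ≤ exp (-(31 / 128 : ℝ)) := one_sub_le_exp_neg _
  refine (exp_le_exp.2 h1).trans ?_
  rw [exp_neg] at h2
  have h3 := exp_pos (31 / 128 : ℝ)
  rw [← one_div, le_div_iff₀ h3] at h2
  linarith

/-- Integration of a differential inequality for a truncated Dirichlet series. -/
lemma le_mul_rpow_of_deriv_bound {L D T : ℝ → ℝ} {b t : ℝ} (hb : 1.27 ≤ b)
    (ht : t ∈ Set.Icc (0 : ℝ) 1) (hL : ∀ σ, 0 < σ → HasDerivAt L (-D σ) σ)
    (hL0 : ∀ σ, 0 < σ → 0 ≤ L σ) (hLT : ∀ σ, 0 < σ → L σ ≤ T σ)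
    (hD : ∀ σ, 0 < σ → D σ ≤
      t * ((1 / σ + log 4) * (1.19 * L σ + 3.2 * (σ ^ (3 / 4 : ℝ) * T σ)) + 28 * L σ))
    (hT : ∀ σ, 0 < σ → T σ ≤ exp (2 * (1 - t)) * (1 + 1 / σ) ^ (2 * t))
    {σ : ℝ} (hσ : 0 < σ) (hσ1 : σ ≤ 1) : L σ ≤ 55 * σ ^ (-(b * t)) := by
  have ht0 := ht.1
  have hl4 := log_four_lt
  have hl40 : 0 ≤ log 4 := log_nonneg (by norm_num)
  rcases le_total (1 / 128) σ with h128 | h128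
  · have hK : (1 + σ) ^ 2 * σ ^ (-(3 / 4) : ℝ) ≤ 55 := by
      rcases le_total (1 / 16) σ with h16 | h16
      · have h1 := rpow_neg_three_quarters_le (σ := σ) (c := 1 / 16) (y := 8)
          (by norm_num) h16 (by norm_num) (by norm_num)
        nlinarith
      · have h1 := rpow_neg_three_quarters_le (σ := σ) (c := 1 / 128) (y := 38.1)
          (by norm_num) h128 (by norm_num) (by norm_num)
        nlinarith
    have h2 := rpow_mul_exp_mul_one_add_le hb ht hσ hσ1 (by norm_num) hK
    have h3 := (hLT σ hσ).trans (hT σ hσ)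
    rw [rpow_neg hσ.le, ← div_eq_mul_inv, le_div_iff₀ (by positivity)]
    calc _ ≤ _ := mul_le_mul_of_nonneg_right h3 (by positivity)
      _ ≤ _ := by rw [mul_comm]; exact h2
  let Φ : ℝ → ℝ := fun s =>
    s ^ (1.19 * t) * exp (31 * t * s) * L s - 55 * s ^ (-((b - 1.19) * t))
  have hΦ (s : ℝ) (hs : 0 < s) : HasDerivAt Φ
      (s ^ (1.19 * t) * exp (31 * t * s) * ((1.19 * t / s + 31 * t) * L s - D s) +
        55 * ((b - 1.19) * t) * (s ^ (-((b - 1.19) * t)) / s)) s := by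
    have d1 := hasDerivAt_rpow_const (x := s) (p := 1.19 * t) (Or.inl hs.ne')
    have d2 : HasDerivAt (fun s => exp (31 * t * s)) (exp (31 * t * s) * (31 * t)) s := by
      simpa using ((hasDerivAt_id s).const_mul (31 * t)).exp
    have d3 := hasDerivAt_rpow_const (x := s) (p := -((b - 1.19) * t)) (Or.inl hs.ne')
    have d := ((d1.mul d2).mul (hL s hs)).sub (d3.const_mul 55)
    refine d.congr_deriv ?_
    rw [rpow_sub_one hs.ne', rpow_sub_one hs.ne']
    simp only [Pi.mul_apply]
    field_simp
    ring
  have hmono : MonotoneOn Φ (Set.Icc σ (1 / 128)) := by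
    refine monotoneOn_of_deriv_nonneg (convex_Icc _ _)
      (fun s hs => (hΦ s (hσ.trans_le hs.1)).continuousAt.continuousWithinAt)
      (fun s hs => ?_) (fun s hs => ?_)
    · rw [interior_Icc] at hs
      exact (hΦ s (hσ.trans hs.1)).differentiableAt.differentiableWithinAt
    · rw [interior_Icc] at hs
      have hs0 : 0 < s := hσ.trans hs.1
      have hs1 : s ≤ 1 / 128 := hs.2.le
      rw [(hΦ s hs0).deriv]
      have hLs := hL0 s hs0
      have hD' : -(t * ((1 / s + log 4) * (3.2 * (s ^ (3 / 4 : ℝ) * T s)))) ≤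
          (1.19 * t / s + 31 * t) * L s - D s := by
        have h1 := hD s hs0
        have h2 : 0 ≤ t * L s * (3 - 1.19 * log 4) :=
          mul_nonneg (mul_nonneg ht0 hLs) (by linarith)
        have h3 : 1.19 * t / s * L s = 1.19 * t * (1 / s) * L s := by ring
        nlinarith
      have hE := exp_mul_le_of_le ht hs0.le hs1
      have hsmall := rpow_mul_exp_mul_one_add_le_of_small hb ht hs0 hs1
      have hTs : s ^ (b * t + 3 / 4) * T s ≤ (1 + 1 / 128) ^ 2 :=
        le_trans (mul_le_mul_of_nonneg_left (hT s hs0) (by positivity)) hsmall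
      have hT0 : 0 ≤ T s := hLs.trans (hLT s hs0)
      have hfac : s ^ (1.19 * t) * s ^ (3 / 4 : ℝ) =
          s ^ (-((b - 1.19) * t)) * s ^ (b * t + 3 / 4) := by
        rw [← rpow_add hs0, ← rpow_add hs0]
        congr 1; ring
      have hq : s ^ (b * t + 3 / 4) * T s * exp (31 * t * s) * (1 + log 4 * s) * 3.2 ≤
          55 * (b - 1.19) := by
        have h1 : 1 + log 4 * s ≤ 1 + 1.3863 / 128 := by nlinarith
        calc s ^ (b * t + 3 / 4) * T s * exp (31 * t * s) * (1 + log 4 * s) * 3.2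
            ≤ (1 + 1 / 128) ^ 2 * (128 / 97) * (1 + 1.3863 / 128) * 3.2 := by gcongr
          _ ≤ 55 * (1.27 - 1.19) := by norm_num
          _ ≤ 55 * (b - 1.19) := by linarith
      have hmul := mul_le_mul_of_nonneg_left hD'
        (by positivity : 0 ≤ s ^ (1.19 * t) * exp (31 * t * s))
      have heq : s ^ (1.19 * t) * exp (31 * t * s) *
          (t * ((1 / s + log 4) * (3.2 * (s ^ (3 / 4 : ℝ) * T s)))) =
          t * (s ^ (-((b - 1.19) * t)) / s) *
            (s ^ (b * t + 3 / 4) * T s * exp (31 * t * s) * (1 + log 4 * s) * 3.2) := by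
        calc _ = (s ^ (1.19 * t) * s ^ (3 / 4 : ℝ)) * (exp (31 * t * s) *
              (t * ((1 / s + log 4) * (3.2 * T s)))) := by ring
          _ = _ := by rw [hfac]; field_simp
      have hfin := mul_le_mul_of_nonneg_left hq
        (by positivity : 0 ≤ t * (s ^ (-((b - 1.19) * t)) / s))
      linarith
  have hend : Φ (1 / 128) ≤ 0 := by
    have hE := exp_mul_le_of_le ht (by norm_num : (0 : ℝ) ≤ 1 / 128) le_rfl
    have h1 := rpow_neg_three_quarters_le (σ := 1 / 128) (c := 1 / 128) (y := 38.1)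
      (by norm_num) le_rfl (by norm_num) (by norm_num)
    have h2 := rpow_mul_exp_mul_one_add_le (σ := 1 / 128) (K := 38.8) hb ht (by norm_num)
      (by norm_num) (by norm_num) (by nlinarith)
    have h3 := (hLT (1 / 128) (by norm_num)).trans (hT (1 / 128) (by norm_num))
    have h4 : (1 / 128 : ℝ) ^ (b * t) * L (1 / 128) ≤ 38.8 :=
      (mul_le_mul_of_nonneg_left h3 (by positivity)).trans h2
    have hfac : (1 / 128 : ℝ) ^ (1.19 * t) =
        (1 / 128) ^ (-((b - 1.19) * t)) * (1 / 128) ^ (b * t) := by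
      rw [← rpow_add (by norm_num)]
      congr 1; ring
    have h5 : (1 / 128 : ℝ) ^ (b * t) * L (1 / 128) * exp (31 * t * (1 / 128)) ≤ 55 := by
      calc _ ≤ 38.8 * (128 / 97 : ℝ) := by gcongr
        _ ≤ _ := by norm_num
    have h6 := mul_le_mul_of_nonneg_left h5
      (by positivity : 0 ≤ (1 / 128 : ℝ) ^ (-((b - 1.19) * t)))
    simp only [Φ]
    rw [hfac]
    linarith
  have hΦσ : Φ σ ≤ 0 := (hmono ⟨le_rfl, h128⟩ ⟨h128, le_rfl⟩ h128).trans hend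
  simp only [Φ] at hΦσ
  have hLσ := hL0 σ hσ
  have hE1 : 1 ≤ exp (31 * t * σ) := one_le_exp (by positivity)
  have h1 : σ ^ (1.19 * t) * L σ ≤ 55 * σ ^ (-((b - 1.19) * t)) := by
    have : σ ^ (1.19 * t) * L σ * 1 ≤ σ ^ (1.19 * t) * L σ * exp (31 * t * σ) :=
      mul_le_mul_of_nonneg_left hE1 (by positivity)
    linarith
  have h2 : σ ^ (-((b - 1.19) * t)) = σ ^ (1.19 * t) * σ ^ (-(b * t)) := by
    rw [← rpow_add hσ]
    congr 1; ring
  rw [h2] at h1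
  refine le_of_mul_le_mul_left ?_ (by positivity : 0 < σ ^ (1.19 * t))
  linarith

lemma le_four_div_pi : 1.27 ≤ 4 / π := by
  rw [le_div_iff₀ pi_pos]
  linarith [pi_lt_d4]

lemma sum_weightedNorm_mul_rpow_le {t : ℝ} (ht : t ∈ Set.Icc (0 : ℝ) 1) {σ : ℝ} (hσ : 0 < σ)
    (hσ1 : σ ≤ 1) (N : ℕ) :
    ∑ n ∈ Icc 1 N, weightedNorm t n * (n : ℝ) ^ (-(1 + σ)) ≤ 55 * σ ^ (-(4 / π * t)) := by
  refine le_mul_rpow_of_deriv_bound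
    (L := fun s => ∑ n ∈ Icc 1 N, weightedNorm t n * (n : ℝ) ^ (-(1 + s)))
    (D := fun s => ∑ n ∈ Icc 1 N, weightedNorm t n * (n : ℝ) ^ (-(1 + s)) * log n)
    (T := fun s => ∑ n ∈ Icc 1 N,
      t ^ n.primeFactors.card * n.divisors.card * (n : ℝ) ^ (-(1 + s)))
    le_four_div_pi ht ?_ ?_ ?_ (fun s hs => sum_weightedNorm_mul_log_le ht.1 hs N)
    (fun s hs => sum_pow_card_primeFactors_mul_card_divisors_le ht hs N) hσ hσ1
  · intro s _
    rw [← sum_neg_distrib]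
    refine HasDerivAt.fun_sum fun n hn => ?_
    have hn0 : (0 : ℝ) < n := by exact_mod_cast (mem_Icc.1 hn).1
    have h1 : HasDerivAt (fun s : ℝ => -(1 + s)) (-1) s := ((hasDerivAt_id s).const_add 1).neg
    refine ((h1.const_rpow hn0).const_mul (weightedNorm t n)).congr_deriv ?_
    ring
  · exact fun s _ => sum_nonneg fun n _ => mul_nonneg (weightedNorm_nonneg ht.1 n) (by positivity)
  · intro s _
    refine sum_le_sum fun n _ => mul_le_mul_of_nonneg_right ?_ (by positivity)
    exact mul_le_mul_of_nonneg_left (profileNorm_le_card_divisors n) (pow_nonneg ht.1 _)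

/-- Contribution of the prime powers to the logarithmically weighted sum. -/
lemma sum_weightedNorm_mul_log_le_sum_div {t : ℝ} (ht : t ∈ Set.Icc (0 : ℝ) 1) (N : ℕ) :
    ∑ n ∈ Icc 1 N, weightedNorm t n * log n ≤
      (2 * log 4 + 28) * N * ∑ n ∈ Icc 1 N, weightedNorm t n / n := by
  obtain ⟨g, hg⟩ : ∃ g : ℕ → ℝ, ∀ n, g n = if n ≤ N then weightedNorm t n else 0 :=
    ⟨_, fun _ => rfl⟩
  have hg0 (n : ℕ) : 0 ≤ g n := by
    rw [hg]; split_ifs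
    exacts [weightedNorm_nonneg ht.1 n, le_rfl]
  have hgN : ∑ n ∈ Icc 1 N, weightedNorm t n * log n = ∑ n ∈ Icc 1 N, g n * log n :=
    sum_congr rfl fun n hn => by rw [hg, if_pos (mem_Icc.1 hn).2]
  rw [hgN]
  refine (sum_mul_log_le_sum_prime_pow hg0 N).trans ?_
  rw [mul_sum]
  refine sum_le_sum fun m hm => ?_
  have hm1 := (mem_Icc.1 hm).1
  have hm0 : (0 : ℝ) < m := by exact_mod_cast hm1
  have hN : 1 ≤ N := hm1.trans (mem_Icc.1 hm).2
  have hw := weightedNorm_nonneg ht.1 m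
  have hgk {p k : ℕ} (hp : p.Prime) (hpm : ¬ p ∣ m) (hk : k ≠ 0) :
      g (m * p ^ k) ≤ if m * p ^ k ≤ N then (k + 1) * weightedNorm t m else 0 := by
    rw [hg]
    split_ifs with h
    · refine (weightedNorm_mul_prime_pow_le ht.1 hp hpm hk).trans ?_
      have : 0 ≤ (k + 1) * weightedNorm t m := by positivity
      nlinarith [ht.2]
    · exact le_rfl
  simp_rw [sum_Icc_one_eq_add_sum_Icc_two hN, sum_add_distrib]
  have hone : ∑ p ∈ Nat.primesLE N with ¬ p ∣ m, g (m * p ^ 1) * ((1 : ℕ) * log p) ≤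
      2 * log 4 * N * (weightedNorm t m / m) := by
    calc ∑ p ∈ Nat.primesLE N with ¬ p ∣ m, g (m * p ^ 1) * ((1 : ℕ) * log p)
        ≤ ∑ p ∈ Nat.primesLE (N / m), 2 * weightedNorm t m * log p := by
          rw [← sum_filter_add_sum_filter_not _ (fun p => m * p ^ 1 ≤ N)]
          have hz : ∑ p ∈ ((Nat.primesLE N).filter fun p => ¬ p ∣ m).filter
              (fun p => ¬ m * p ^ 1 ≤ N), g (m * p ^ 1) * ((1 : ℕ) * log p) = 0 := by
            refine sum_eq_zero fun p hp => ?_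
            rw [hg, if_neg (mem_filter.1 hp).2, zero_mul]
          rw [hz, add_zero]
          refine le_trans (sum_le_sum (g := fun p : ℕ => 2 * weightedNorm t m * log p)
            fun p hp => ?_) (sum_le_sum_of_subset_of_nonneg ?_ fun p _ _ => ?_)
          · simp only [mem_filter, Nat.mem_primesLE] at hp
            have h1 := hgk hp.1.1.2 hp.1.2 one_ne_zero
            rw [if_pos hp.2] at h1
            have h2 := mul_le_mul_of_nonneg_right h1 (log_natCast_nonneg p)
            push_cast at h2 ⊢
            linarith
          · intro p hp
            simp only [mem_filter, Nat.mem_primesLE] at hp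
            rw [Nat.mem_primesLE, Nat.le_div_iff_mul_le hm1]
            exact ⟨by linarith [hp.2, mul_comm m (p ^ 1), pow_one p], hp.1.1.2⟩
          · exact mul_nonneg (by positivity) (log_natCast_nonneg p)
      _ ≤ 2 * weightedNorm t m * (log 4 * (N / m)) := by
          rw [← mul_sum]
          refine mul_le_mul_of_nonneg_left ((sum_log_primesLE_le (N / m)).trans ?_)
            (by positivity)
          exact mul_le_mul_of_nonneg_left Nat.cast_div_le (log_nonneg (by norm_num))
      _ = _ := by ring
  have htwo : ∑ p ∈ Nat.primesLE N with ¬ p ∣ m, ∑ k ∈ Icc 2 N, g (m * p ^ k) * (k * log p) ≤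
      28 * N * (weightedNorm t m / m) := by
    have hc : 0 ≤ N * (weightedNorm t m / m) := by positivity
    calc ∑ p ∈ Nat.primesLE N with ¬ p ∣ m, ∑ k ∈ Icc 2 N, g (m * p ^ k) * (k * log p)
        ≤ ∑ p ∈ Nat.primesLE N with ¬ p ∣ m, N * (weightedNorm t m / m) *
            ∑ k ∈ Icc 2 N, (k : ℝ) * (k + 1) * log p / (p : ℝ) ^ k := by
          refine sum_le_sum fun p hp => ?_
          obtain ⟨hpN, hpm⟩ := mem_filter.1 hp
          have hpp := (Nat.mem_primesLE.1 hpN).2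
          have hp0 : (0 : ℝ) < p := by exact_mod_cast hpp.pos
          rw [mul_sum]
          refine sum_le_sum fun k hk => ?_
          have hk2 := (mem_Icc.1 hk).1
          have hlog := log_natCast_nonneg p
          have h1 : g (m * p ^ k) ≤ N / (m * (p : ℝ) ^ k) * ((k + 1) * weightedNorm t m) := by
            refine (hgk hpp hpm (by omega)).trans ?_
            split_ifs with h
            · refine le_mul_of_one_le_left (by positivity) ?_
              rw [le_div_iff₀ (by positivity), one_mul]
              exact_mod_cast h
            · positivity
          calc _ ≤ N / (m * (p : ℝ) ^ k) * ((k + 1) * weightedNorm t m) * (k * log p) :=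
                mul_le_mul_of_nonneg_right h1 (by positivity)
            _ = _ := by field_simp
      _ ≤ ∑ p ∈ Nat.primesLE N, N * (weightedNorm t m / m) *
            ∑ k ∈ Icc 2 N, (k : ℝ) * (k + 1) * log p / (p : ℝ) ^ k := by
          refine sum_le_sum_of_subset_of_nonneg (filter_subset _ _) fun p _ _ => ?_
          refine mul_nonneg hc (sum_nonneg fun k _ => ?_)
          have := log_natCast_nonneg p
          positivity
      _ ≤ N * (weightedNorm t m / m) * 28 := by
          rw [← mul_sum]
          exact mul_le_mul_of_nonneg_left (sum_primesLE_sum_prime_pow_le N N) hc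
      _ = _ := by ring
  linarith

lemma sum_weightedNorm_mul_log_exp_mul_le {t : ℝ} (ht : t ∈ Set.Icc (0 : ℝ) 1) {x : ℝ}
    (hx : 1 ≤ x) :
    (∑ n ∈ Icc 1 ⌊x⌋₊, weightedNorm t n) * log (exp 1 * x) ≤
      31.7726 * x * ∑ n ∈ Icc 1 ⌊x⌋₊, weightedNorm t n / n := by
  have hx0 : 0 < x := by linarith
  have h1 := sum_weightedNorm_mul_log_le_sum_div ht ⌊x⌋₊
  have hS : 0 ≤ ∑ n ∈ Icc 1 ⌊x⌋₊, weightedNorm t n / n :=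
    sum_nonneg fun n _ => div_nonneg (weightedNorm_nonneg ht.1 n) (Nat.cast_nonneg _)
  have h2 : (∑ n ∈ Icc 1 ⌊x⌋₊, weightedNorm t n) * log (exp 1 * x) ≤
      ∑ n ∈ Icc 1 ⌊x⌋₊, weightedNorm t n * log n +
        x * ∑ n ∈ Icc 1 ⌊x⌋₊, weightedNorm t n / n := by
    rw [sum_mul, mul_sum, ← sum_add_distrib]
    refine sum_le_sum fun n hn => ?_
    have hn0 : (0 : ℝ) < n := by exact_mod_cast (mem_Icc.1 hn).1
    have h3 : log (exp 1 * x) ≤ log n + x / n := by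
      have h4 := log_le_sub_one_of_pos (div_pos hx0 hn0)
      rw [log_div hx0.ne' hn0.ne'] at h4
      rw [log_mul (exp_pos 1).ne' hx0.ne', log_exp]
      linarith
    calc _ ≤ weightedNorm t n * (log n + x / n) :=
          mul_le_mul_of_nonneg_left h3 (weightedNorm_nonneg ht.1 n)
      _ = _ := by ring
  have h3 : (2 * log 4 + 28) * ⌊x⌋₊ ≤ 30.7726 * x := by
    have := log_four_lt
    have := Nat.floor_le hx0.le
    exact mul_le_mul (by linarith) this (Nat.cast_nonneg _) (by norm_num)
  have h4 := mul_le_mul_of_nonneg_right h3 hS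
  linarith

lemma sum_weightedNorm_div_le {t : ℝ} (ht : t ∈ Set.Icc (0 : ℝ) 1) {x : ℝ} (hx : 1 ≤ x) :
    ∑ n ∈ Icc 1 ⌊x⌋₊, weightedNorm t n / n ≤
      exp 1 * (55 * log (exp 1 * x) ^ (4 * t / π)) := by
  have hx0 : 0 < x := by linarith
  have hlog : log (exp 1 * x) = 1 + log x := by
    rw [log_mul (exp_pos 1).ne' hx0.ne', log_exp]
  have hl1 : 1 ≤ log (exp 1 * x) := by rw [hlog]; linarith [log_nonneg hx]
  have hl0 : 0 < log (exp 1 * x) := by linarith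
  have h1 := sum_weightedNorm_mul_rpow_le ht (σ := 1 / log (exp 1 * x)) (by positivity)
    ((div_le_one hl0).2 hl1) ⌊x⌋₊
  have h2 : (1 / log (exp 1 * x)) ^ (-(4 / π * t)) = log (exp 1 * x) ^ (4 * t / π) := by
    rw [one_div, inv_rpow hl0.le, ← rpow_neg hl0.le]
    congr 1; ring
  rw [h2] at h1
  refine le_trans ?_ (mul_le_mul_of_nonneg_left h1 (exp_pos 1).le)
  rw [mul_sum]
  refine sum_le_sum fun n hn => ?_
  have hn0 : (0 : ℝ) < n := by exact_mod_cast (mem_Icc.1 hn).1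
  have hnx : (n : ℝ) ≤ x := (Nat.le_floor_iff hx0.le).1 (mem_Icc.1 hn).2
  have h3 : 1 / (n : ℝ) ≤ exp 1 * (n : ℝ) ^ (-(1 + 1 / log (exp 1 * x))) := by
    rw [rpow_def_of_pos hn0, ← exp_add, ← exp_log (by positivity : 0 < 1 / (n : ℝ)), exp_le_exp,
      one_div, log_inv]
    have h4 : log n * (1 / log (exp 1 * x)) ≤ 1 := by
      rw [mul_one_div, div_le_one hl0, hlog]
      linarith [log_le_log hn0 hnx]
    linarith
  calc _ = weightedNorm t n * (1 / n) := by ring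
    _ ≤ _ := mul_le_mul_of_nonneg_left h3 (weightedNorm_nonneg ht.1 n)
    _ = _ := by ring

end

theorem statement_3 (x : ℝ) (hx : 1 ≤ x) (t : ℝ) (ht : t ∈ Set.Icc (0 : ℝ) 1) :
    ∑ n ∈ Finset.Icc 1 ⌊x⌋₊, t ^ n.primeFactors.card * (hooleyDelta n : ℝ) <
      9380 * x * Real.log (Real.exp 1 * x) ^ (-1 + 4 * t / Real.pi) := by
  have hx0 : 0 < x := by linarith
  have hl0 : 0 < Real.log (Real.exp 1 * x) := by
    rw [Real.log_mul (Real.exp_pos 1).ne' hx0.ne', Real.log_exp]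
    linarith [Real.log_nonneg hx]
  have h1 : ∑ n ∈ Finset.Icc 1 ⌊x⌋₊, t ^ n.primeFactors.card * (hooleyDelta n : ℝ) ≤
      Real.exp (1 / 2) * ∑ n ∈ Finset.Icc 1 ⌊x⌋₊, weightedNorm t n := by
    rw [Finset.mul_sum]
    refine Finset.sum_le_sum fun n _ => ?_
    refine (mul_le_mul_of_nonneg_left (hooleyDelta_le_profileNorm n)
      (pow_nonneg ht.1 _)).trans (le_of_eq ?_)
    unfold weightedNorm
    ring
  have h2 := sum_weightedNorm_mul_log_exp_mul_le ht hx
  have h3 := sum_weightedNorm_div_le ht hx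
  have hexp : Real.exp (1 / 2) < 1.65 := by
    refine lt_of_pow_lt_pow_left₀ 2 (by norm_num) ?_
    rw [← Real.exp_nat_mul]
    norm_num
    linarith [Real.exp_one_lt_d9]
  have hexp1 : Real.exp 1 < 2.7183 := by linarith [Real.exp_one_lt_d9]
  have hpow : 0 < Real.log (Real.exp 1 * x) ^ (4 * t / Real.pi) := Real.rpow_pos_of_pos hl0 _
  rw [Real.rpow_add hl0, Real.rpow_neg_one, mul_comm _⁻¹, ← mul_assoc, ← div_eq_mul_inv,
    lt_div_iff₀ hl0]
  generalize Real.log (Real.exp 1 * x) ^ (4 * t / Real.pi) = y at *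
  calc _ ≤ Real.exp (1 / 2) * (∑ n ∈ Finset.Icc 1 ⌊x⌋₊, weightedNorm t n) *
        Real.log (Real.exp 1 * x) := mul_le_mul_of_nonneg_right h1 hl0.le
    _ ≤ Real.exp (1 / 2) * (31.7726 * x * (Real.exp 1 * (55 * y))) := by
        rw [mul_assoc]
        refine mul_le_mul_of_nonneg_left (h2.trans ?_) (Real.exp_pos _).le
        exact mul_le_mul_of_nonneg_left h3 (by positivity)
    _ ≤ 1.65 * (31.7726 * x * (2.7183 * (55 * y))) := by gcongr
    _ < 9380 * x * y := by nlinarith [mul_pos hx0 hpow]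
end

section
/- For all real x ≥ 1 and all t ∈ [0,1], one has ∑_{n ≤ x} t^{ω(n)} Δ(n)/n < 16748 · (log(ex))^{4t/π}. -/
open MeasureTheory Set

/-- The Mellin-type integral of the centred sawtooth occurring in the
representation `ζ(s) = 1/(s-1) + 1/2 - s * sawtoothMellin s`. -/
noncomputable def sawtoothMellin (s : ℂ) : ℂ :=
  ∫ t in Ioi (1 : ℝ), ((Int.fract t - 1 / 2 : ℝ) : ℂ) * (t : ℂ) ^ (-(s + 1))

lemma abs_fract_sub_half_le (t : ℝ) : |Int.fract t - 1 / 2| ≤ 1 / 2 := by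
  rw [abs_le]
  constructor <;> linarith [Int.fract_nonneg t, (Int.fract_lt_one t).le]

lemma integrableOn_fract_sub_half_mul_cpow {s : ℂ} (hs : 0 < s.re) :
    IntegrableOn (fun t : ℝ ↦ ((Int.fract t - 1 / 2 : ℝ) : ℂ) * (t : ℂ) ^ (-(s + 1))) (Ioi 1) := by
  have h1 : IntegrableOn (fun t : ℝ ↦ (t : ℂ) ^ (-(s + 1))) (Ioi 1) :=
    integrableOn_Ioi_cpow_of_lt (by simp; linarith) zero_lt_one
  refine h1.bdd_mul (c := 1 / 2) ?_ ?_
  · exact (by fun_prop :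
      Measurable fun t : ℝ ↦ ((Int.fract t - 1 / 2 : ℝ) : ℂ)).aestronglyMeasurable
  · exact Filter.Eventually.of_forall fun t ↦ by
      rw [Complex.norm_real]; exact abs_fract_sub_half_le t

lemma riemannZeta_eq_sub_sawtoothMellin {s : ℂ} (hs : 1 < s.re) :
    riemannZeta s = 1 / (s - 1) + 1 / 2 - s * sawtoothMellin s := by
  have hs1 : s - 1 ≠ 0 := by
    intro h; rw [sub_eq_zero] at h; simp [h] at hs
  have hs0 : s ≠ 0 := by rintro rfl; norm_num at hs
  have h := LSeries_eq_mul_integral_of_nonneg (fun _ ↦ 1) zero_le_one hs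
    (by simpa using Asymptotics.isBigO_refl _ _) (fun _ ↦ zero_le_one)
  have h0 : LSeries (fun _ ↦ ((1 : ℝ) : ℂ)) s = riemannZeta s := by
    rw [← LSeries_one_eq_riemannZeta hs]; congr
  rw [h0] at h
  rw [h]
  have i1 : IntegrableOn (fun t : ℝ ↦ (t : ℂ) ^ (-s)) (Ioi 1) :=
    integrableOn_Ioi_cpow_of_lt (by simpa using hs) zero_lt_one
  have i2 : IntegrableOn (fun t : ℝ ↦ (t : ℂ) ^ (-(s + 1))) (Ioi 1) :=
    integrableOn_Ioi_cpow_of_lt (by simp; linarith) zero_lt_one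
  have i3 := integrableOn_fract_sub_half_mul_cpow (s := s) (by linarith)
  have e : ∫ t in Ioi (1 : ℝ), (∑ k ∈ Finset.Icc 1 ⌊t⌋₊, ((1 : ℝ) : ℂ)) * (t : ℂ) ^ (-(s + 1)) =
      ∫ t in Ioi (1 : ℝ), ((t : ℂ) ^ (-s) - 1 / 2 * (t : ℂ) ^ (-(s + 1)) -
        ((Int.fract t - 1 / 2 : ℝ) : ℂ) * (t : ℂ) ^ (-(s + 1))) := by
    refine setIntegral_congr_fun measurableSet_Ioi fun t ht ↦ ?_
    have ht0 : (0 : ℝ) < t := zero_lt_one.trans ht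
    have ht' : (t : ℂ) ≠ 0 := by exact_mod_cast ht0.ne'
    have e1 : (t : ℂ) ^ (-s) = t * (t : ℂ) ^ (-(s + 1)) := by
      rw [show -s = 1 + -(s + 1) by ring, Complex.cpow_add _ _ ht', Complex.cpow_one]
    have e2 : (⌊t⌋₊ : ℂ) = ((t - Int.fract t : ℝ) : ℂ) := by
      rw [Int.self_sub_fract, ← natCast_floor_eq_intCast_floor ht0.le]; simp
    simp only [Finset.sum_const, Nat.card_Icc, add_tsub_cancel_right, e1]
    simp only [nsmul_eq_mul, e2]
    push_cast
    ring
  rw [e, integral_sub (f := fun t : ℝ ↦ (t : ℂ) ^ (-s) - 1 / 2 * (t : ℂ) ^ (-(s + 1)))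
      (i1.sub (i2.const_mul _)) i3, integral_sub i1 (i2.const_mul _), integral_const_mul,
      integral_Ioi_cpow_of_lt (by simpa using hs) zero_lt_one,
    integral_Ioi_cpow_of_lt (by simp; linarith) zero_lt_one, ← sawtoothMellin]
  have : -s + 1 ≠ 0 := by intro h; apply hs1; linear_combination -h
  simp only [Complex.ofReal_one, Complex.one_cpow, neg_add_rev, neg_add_cancel_comm]
  field_simp
  ring

lemma norm_sawtoothMellin_le {s : ℂ} (hs : 0 < s.re) : ‖sawtoothMellin s‖ ≤ 1 / (2 * s.re) := by
  have i : IntegrableOn (fun t : ℝ ↦ 1 / 2 * t ^ (-(s.re + 1))) (Ioi 1) :=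
    (integrableOn_Ioi_rpow_of_lt (by linarith) zero_lt_one).const_mul _
  refine (norm_integral_le_of_norm_le i ?_).trans ?_
  · refine (ae_restrict_iff' measurableSet_Ioi).mpr (Filter.Eventually.of_forall fun t ht ↦ ?_)
    rw [norm_mul, Complex.norm_real, Complex.norm_cpow_eq_rpow_re_of_pos (zero_lt_one.trans ht)]
    simp only [Complex.neg_re, Complex.add_re, Complex.one_re]
    gcongr
    · exact Real.rpow_nonneg (zero_lt_one.trans ht).le _
    · exact abs_fract_sub_half_le t
  · rw [integral_const_mul, integral_Ioi_rpow_of_lt (by linarith) zero_lt_one]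
    apply le_of_eq
    rw [Real.one_rpow, show -(s.re + 1) + 1 = -s.re by ring]
    field_simp

lemma norm_sawtoothMellin_sub_le {σ σ' τ : ℝ} (hσ : 0 < σ) (h : σ ≤ σ') :
    ‖sawtoothMellin (σ + τ * Complex.I) - sawtoothMellin (σ' + τ * Complex.I)‖ ≤
      (1 / σ - 1 / σ') / 2 := by
  have hσ' : 0 < σ' := hσ.trans_le h
  have j1 : IntegrableOn (fun t : ℝ ↦ t ^ (-(σ + 1))) (Ioi 1) :=
    integrableOn_Ioi_rpow_of_lt (by linarith) zero_lt_one
  have j2 : IntegrableOn (fun t : ℝ ↦ t ^ (-(σ' + 1))) (Ioi 1) :=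
    integrableOn_Ioi_rpow_of_lt (by linarith) zero_lt_one
  rw [sawtoothMellin, sawtoothMellin, ← integral_sub
    (integrableOn_fract_sub_half_mul_cpow (by simpa using hσ))
    (integrableOn_fract_sub_half_mul_cpow (by simpa using hσ'))]
  refine (norm_integral_le_of_norm_le ((j1.sub j2).const_mul (1 / 2)) ?_).trans ?_
  · refine (ae_restrict_iff' measurableSet_Ioi).mpr (Filter.Eventually.of_forall fun t ht ↦ ?_)
    have ht1 : (1 : ℝ) < t := ht
    have ht0 : (0 : ℝ) < t := zero_lt_one.trans ht
    have ht' : (t : ℂ) ≠ 0 := by exact_mod_cast ht0.ne'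
    have e : ∀ a : ℝ, (t : ℂ) ^ (-((a + τ * Complex.I : ℂ) + 1)) =
        (t ^ (-(a + 1)) : ℝ) * (t : ℂ) ^ (-(τ * Complex.I)) := by
      intro a
      rw [Complex.ofReal_cpow ht0.le, ← Complex.cpow_add _ _ ht']
      congr 1; push_cast; ring
    rw [e, e, ← mul_sub, ← sub_mul, norm_mul, norm_mul,
      Complex.norm_cpow_eq_rpow_re_of_pos ht0, ← Complex.ofReal_sub, Complex.norm_real,
      Complex.norm_real]
    simp only [Pi.sub_apply]
    have : t ^ (-(σ' + 1)) ≤ t ^ (-(σ + 1)) :=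
      Real.rpow_le_rpow_of_exponent_le ht1.le (by linarith)
    rw [Real.norm_of_nonneg (sub_nonneg.mpr this)]
    simp only [Complex.neg_re, Complex.mul_re, Complex.ofReal_re, Complex.I_re, mul_zero,
      Complex.ofReal_im, Complex.I_im, mul_one, sub_self, neg_zero, Real.rpow_zero]
    exact mul_le_mul_of_nonneg_right (abs_fract_sub_half_le t) (sub_nonneg.mpr this)
  · rw [integral_const_mul]
    simp only [Pi.sub_apply]
    rw [integral_sub j1 j2, integral_Ioi_rpow_of_lt (by linarith) zero_lt_one,
      integral_Ioi_rpow_of_lt (by linarith) zero_lt_one]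
    apply le_of_eq
    rw [Real.one_rpow, Real.one_rpow, show -(σ + 1) + 1 = -σ by ring,
      show -(σ' + 1) + 1 = -σ' by ring]
    field_simp

lemma norm_riemannZeta_one_add_le {ε : ℝ} (hε : 0 < ε) :
    ‖riemannZeta (1 + ε)‖ ≤ 1 + 1 / ε := by
  have hre : ((1 : ℂ) + ε).re = 1 + ε := by simp
  have h1 : 1 < ((1 : ℂ) + ε).re := by rw [hre]; linarith
  rw [riemannZeta_eq_sub_sawtoothMellin h1]
  have h2 := norm_sawtoothMellin_le (s := 1 + ε) (by linarith)
  rw [hre] at h2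
  have h3 : ‖(1 : ℂ) + ε‖ = 1 + ε := by
    rw [← Complex.ofReal_one, ← Complex.ofReal_add, Complex.norm_real,
      Real.norm_of_nonneg (by linarith)]
  have h4 : ‖(1 : ℂ) / (1 + ε - 1)‖ = 1 / ε := by
    rw [add_sub_cancel_left, norm_div, norm_one, Complex.norm_real, Real.norm_of_nonneg hε.le]
  calc _ ≤ ‖(1 : ℂ) / (1 + ε - 1)‖ + ‖(1 / 2 : ℂ)‖ + ‖(1 : ℂ) + ε‖ * ‖sawtoothMellin (1 + ε)‖ := by
        rw [← norm_mul]
        exact (norm_sub_le _ _).trans (by gcongr; exact norm_add_le _ _)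
    _ ≤ 1 / ε + 1 / 2 + (1 + ε) * (1 / (2 * (1 + ε))) := by
        rw [h3, h4]; gcongr; norm_num
    _ = 1 + 1 / ε := by field_simp; ring

lemma norm_sawtoothMellin_le_half {s : ℂ} (hs : 1 ≤ s.re) : ‖sawtoothMellin s‖ ≤ 1 / 2 := by
  refine (norm_sawtoothMellin_le (by linarith)).trans ?_
  rw [div_le_div_iff₀ (by linarith) (by norm_num)]; linarith

lemma norm_riemannZeta_le {s : ℂ} (hs : 1 < s.re) :
    ‖riemannZeta s‖ ≤ 1 / ‖s - 1‖ + 1 / 2 + ‖s‖ / 2 := by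
  rw [riemannZeta_eq_sub_sawtoothMellin hs]
  have h2 := norm_sawtoothMellin_le_half hs.le
  calc _ ≤ ‖1 / (s - 1)‖ + ‖(1 / 2 : ℂ)‖ + ‖s‖ * ‖sawtoothMellin s‖ := by
        rw [← norm_mul]
        exact (norm_sub_le _ _).trans (by gcongr; exact norm_add_le _ _)
    _ ≤ 1 / ‖s - 1‖ + 1 / 2 + ‖s‖ * (1 / 2) := by
        rw [norm_div, norm_one]; gcongr; norm_num
    _ = _ := by ring

lemma sub_one_mul_riemannZeta {s : ℂ} (hs : 1 < s.re) :
    (s - 1) * riemannZeta s = 1 + (s - 1) / 2 - s * (s - 1) * sawtoothMellin s := by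
  have hs1 : s - 1 ≠ 0 := by
    intro h; rw [sub_eq_zero] at h; simp [h] at hs
  rw [riemannZeta_eq_sub_sawtoothMellin hs]
  field_simp

lemma le_norm_sub_one_mul_riemannZeta {s : ℂ} (hs : 1 < s.re) :
    1 - ‖s‖ * ‖s - 1‖ / 2 ≤ ‖(s - 1) * riemannZeta s‖ := by
  rw [sub_one_mul_riemannZeta hs]
  have h2 := norm_sawtoothMellin_le_half hs.le
  have h3 : 1 ≤ ‖1 + (s - 1) / 2‖ := by
    refine le_trans ?_ (Complex.re_le_norm _)
    simp; linarith
  have h4 : ‖s * (s - 1) * sawtoothMellin s‖ ≤ ‖s‖ * ‖s - 1‖ * (1 / 2) := by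
    rw [norm_mul, norm_mul]; gcongr
  have := norm_sub_norm_le (1 + (s - 1) / 2) (s * (s - 1) * sawtoothMellin s)
  linarith

lemma re_one_add_add_mul_I (ε τ : ℝ) : ((1 : ℂ) + ε + τ * Complex.I).re = 1 + ε := by simp

lemma norm_one_add_add_mul_I_le {ε τ : ℝ} (hε : 0 ≤ ε) (hτ : 0 ≤ τ) :
    ‖(1 : ℂ) + ε + τ * Complex.I‖ ≤ 1 + ε + τ := by
  refine (Complex.norm_le_abs_re_add_abs_im _).trans ?_
  simp [abs_of_nonneg hτ, abs_of_nonneg (by linarith : 0 ≤ 1 + ε)]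

lemma norm_ofReal_add_mul_I_le {ε τ : ℝ} (hε : 0 ≤ ε) (hτ : 0 ≤ τ) :
    ‖(ε : ℂ) + τ * Complex.I‖ ≤ ε + τ := by
  refine (Complex.norm_le_abs_re_add_abs_im _).trans ?_
  simp [abs_of_nonneg hτ, abs_of_nonneg hε]

lemma le_norm_ofReal_add_mul_I (ε : ℝ) {τ : ℝ} (hτ : 0 ≤ τ) :
    τ ≤ ‖(ε : ℂ) + τ * Complex.I‖ := by
  refine le_trans ?_ (Complex.abs_im_le_norm _)
  simp [abs_of_nonneg hτ]

lemma one_add_add_sub_one (ε τ : ℝ) :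
    (1 : ℂ) + ε + τ * Complex.I - 1 = ε + τ * Complex.I := by ring

lemma le_norm_riemannZeta_pow_four {ε τ : ℝ} (hε : 0 < ε) (hε' : ε ≤ 1 / 10) (hτ : 1 ≤ τ) :
    (ε / (1 + ε)) ^ 3 / (3 * τ) ≤ ‖riemannZeta (1 + ε + τ * Complex.I)‖ ^ 4 := by
  have h := DirichletCharacter.norm_LFunction_product_ge_one (N := 1) 1 hε τ
  rw [DirichletCharacter.LFunctionTrivChar, DirichletCharacter.LFunction_modOne_eq,
    DirichletCharacter.LFunction_modOne_eq] at h
  rw [norm_mul, norm_mul, norm_pow, norm_pow, mul_comm Complex.I, mul_assoc 2,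
    mul_comm Complex.I] at h
  have e2 : (1 : ℂ) + ε + 2 * (τ * Complex.I) = 1 + ε + (2 * τ : ℝ) * Complex.I := by
    push_cast; ring
  rw [e2] at h
  have b1 := norm_riemannZeta_one_add_le hε
  have b2 : ‖riemannZeta (1 + ε + (2 * τ : ℝ) * Complex.I)‖ ≤ 3 * τ := by
    refine (norm_riemannZeta_le (by rw [re_one_add_add_mul_I]; linarith)).trans ?_
    have c1 := norm_one_add_add_mul_I_le hε.le (by linarith : 0 ≤ 2 * τ)
    have c2 := le_norm_ofReal_add_mul_I ε (by linarith : 0 ≤ 2 * τ)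
    rw [one_add_add_sub_one]
    have c3 : 1 / ‖(ε : ℂ) + (2 * τ : ℝ) * Complex.I‖ ≤ 1 / 2 := by
      apply one_div_le_one_div_of_le <;> linarith
    linarith
  have e3 : (ε / (1 + ε)) ^ 3 / (3 * τ) = 1 / ((1 + 1 / ε) ^ 3 * (3 * τ)) := by
    field_simp
    ring
  rw [e3, div_le_iff₀ (by positivity)]
  set X := ‖riemannZeta (1 + ε + τ * Complex.I)‖
  calc (1 : ℝ) ≤ ‖riemannZeta (1 + ε)‖ ^ 3 * X ^ 4 *
        ‖riemannZeta (1 + ε + (2 * τ : ℝ) * Complex.I)‖ := h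
    _ ≤ (1 + 1 / ε) ^ 3 * X ^ 4 * (3 * τ) := by gcongr
    _ = _ := by ring

lemma norm_riemannZeta_sub_le {ε δ τ : ℝ} (hε : 0 < ε) (hεδ : ε ≤ δ) (hδ : δ ≤ 1 / 10)
    (hτ : 1 ≤ τ) :
    ‖riemannZeta (1 + δ + τ * Complex.I) - riemannZeta (1 + ε + τ * Complex.I)‖ ≤
      3 * τ * δ := by
  set s : ℂ := 1 + ε + τ * Complex.I with hs
  set s' : ℂ := 1 + δ + τ * Complex.I with hs'
  have r1 : 1 < s.re := by rw [re_one_add_add_mul_I]; linarith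
  have r2 : 1 < s'.re := by rw [re_one_add_add_mul_I]; linarith
  have n1 : τ ≤ ‖s - 1‖ := by
    rw [hs, one_add_add_sub_one]; exact le_norm_ofReal_add_mul_I _ (by linarith)
  have n2 : τ ≤ ‖s' - 1‖ := by
    rw [hs', one_add_add_sub_one]; exact le_norm_ofReal_add_mul_I _ (by linarith)
  have n3 : ‖s'‖ ≤ 1 + δ + τ := norm_one_add_add_mul_I_le (by linarith) (by linarith)
  have n4 : ‖s - s'‖ ≤ δ := by
    have : s - s' = ((ε - δ : ℝ) : ℂ) := by rw [hs, hs']; push_cast; ring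
    rw [this, Complex.norm_real, Real.norm_eq_abs, abs_le]; constructor <;> linarith
  have z1 : s - 1 ≠ 0 := norm_pos_iff.mp (by linarith)
  have z2 : s' - 1 ≠ 0 := norm_pos_iff.mp (by linarith)
  have m1 := norm_sawtoothMellin_le_half r1.le
  have m2 : ‖sawtoothMellin s - sawtoothMellin s'‖ ≤ δ / 2 := by
    have h := norm_sawtoothMellin_sub_le (σ := 1 + ε) (σ' := 1 + δ) (τ := τ) (by linarith)
      (by linarith)
    push_cast at h
    refine h.trans ?_
    gcongr
    rw [div_sub_div _ _ (by linarith) (by linarith), div_le_iff₀ (by nlinarith)]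
    nlinarith [mul_pos hε (hε.trans_le hεδ),
      mul_pos (mul_pos hε (hε.trans_le hεδ)) (hε.trans_le hεδ)]
  have e : riemannZeta s' - riemannZeta s = (s - s') / ((s' - 1) * (s - 1)) +
      (s - s') * sawtoothMellin s + s' * (sawtoothMellin s - sawtoothMellin s') := by
    rw [riemannZeta_eq_sub_sawtoothMellin r1, riemannZeta_eq_sub_sawtoothMellin r2]
    field_simp
    ring
  have hδ0 : 0 < δ := by linarith
  have t1 : ‖(s - s') / ((s' - 1) * (s - 1))‖ ≤ δ := by
    rw [norm_div, norm_mul]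
    exact (div_le_self (norm_nonneg _) (by nlinarith)).trans n4
  calc _ ≤ δ + δ * (1 / 2) + (1 + δ + τ) * (δ / 2) := by
        rw [e]
        refine (norm_add₃_le).trans ?_
        rw [norm_mul, norm_mul]
        gcongr
    _ ≤ 3 * τ * δ := by nlinarith

/-- A quantitative form of the de la Vallée Poussin argument. -/
lemma le_norm_riemannZeta {ε τ : ℝ} (hε : 0 < ε) (hε' : ε ≤ 1 / 10) (hτ : 1 ≤ τ) :
    1 / (1300 * τ ^ 4) ≤ ‖riemannZeta (1 + ε + τ * Complex.I)‖ := by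
  have hτ0 : 0 < τ := by linarith
  have hτ5 : 1 ≤ τ ^ 5 := one_le_pow₀ hτ
  obtain ⟨δ, hδ⟩ : ∃ δ, δ = 1 / (3900 * τ ^ 5) := ⟨_, rfl⟩
  have hδ0 : 0 < δ := by rw [hδ]; positivity
  have hδ1 : δ ≤ 1 / 3900 := by
    rw [hδ]; apply one_div_le_one_div_of_le <;> linarith
  have key : ∀ η : ℝ, δ ≤ η → η ≤ 1 / 10 →
      6 * τ * δ ≤ ‖riemannZeta (1 + η + τ * Complex.I)‖ := by
    intro η h1 h2
    have h := le_norm_riemannZeta_pow_four (hδ0.trans_le h1) h2 hτ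
    refine le_of_pow_le_pow_left₀ (n := 4) (by norm_num) (norm_nonneg _) (le_trans ?_ h)
    have m : δ / (1 + δ) ≤ η / (1 + η) := by
      rw [div_le_div_iff₀ (by linarith) (by linarith)]; nlinarith
    have m' : 0.9997 * δ ≤ δ / (1 + δ) := by
      rw [le_div_iff₀ (by linarith)]; nlinarith
    calc (6 * τ * δ) ^ 4 = (1296 * 3 * τ ^ 5 * δ) * δ ^ 3 / (3 * τ) := by field_simp; ring
      _ = (1296 * 3 / 3900) * δ ^ 3 / (3 * τ) := by
        congr 2; rw [hδ]; field_simp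
      _ ≤ (0.9997 * δ) ^ 3 / (3 * τ) := by
        gcongr
        rw [mul_pow]; gcongr; norm_num
      _ ≤ _ := by gcongr; exact m'.trans m
  have e : 3 * τ * δ = 1 / (1300 * τ ^ 4) := by rw [hδ]; field_simp; norm_num
  rw [← e]
  rcases le_total δ ε with h | h
  · exact le_trans (by nlinarith) (key ε h hε')
  · have h1 := key δ le_rfl (by linarith)
    have h2 := norm_riemannZeta_sub_le hε h (by linarith) hτ
    have h3 := norm_sub_norm_le (riemannZeta (1 + δ + τ * Complex.I))
      (riemannZeta (1 + ε + τ * Complex.I))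
    linarith

/-- The Fourier cosine coefficients of `φ ↦ |1 + e^{iφ}| = 2 |cos (φ / 2)|`. -/
noncomputable def absCosCoeff (k : ℕ) : ℝ :=
  if k = 0 then 4 / Real.pi else 8 / Real.pi * ((-1) ^ (k + 1) / (4 * (k : ℝ) ^ 2 - 1))

lemma integral_cos_half_mul_exp (n : ℤ) :
    ∫ x in (-Real.pi)..Real.pi,
      Complex.exp (-(n * x * Complex.I)) * (2 * Real.cos (x / 2) : ℝ) =
      8 * (-1) ^ n / (1 - 4 * (n : ℂ) ^ 2) := by
  have hn1 : (1 - 2 * n : ℂ) ≠ 0 := by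
    have : (1 - 2 * n : ℤ) ≠ 0 := by omega
    exact_mod_cast this
  have hn2 : (1 + 2 * n : ℂ) ≠ 0 := by
    have : (1 + 2 * n : ℤ) ≠ 0 := by omega
    exact_mod_cast this
  have hI := Complex.I_ne_zero
  have c1 : (1 - 2 * n) * Complex.I / 2 ≠ 0 :=
    div_ne_zero (mul_ne_zero hn1 hI) two_ne_zero
  have c2 : -((1 + 2 * n) * Complex.I / 2) ≠ 0 :=
    neg_ne_zero.mpr (div_ne_zero (mul_ne_zero hn2 hI) two_ne_zero)
  have e : ∀ x : ℝ, Complex.exp (-(n * x * Complex.I)) * (2 * Real.cos (x / 2) : ℝ) =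
      Complex.exp ((1 - 2 * n) * Complex.I / 2 * x) +
        Complex.exp (-((1 + 2 * n) * Complex.I / 2) * x) := by
    intro x
    push_cast
    rw [Complex.two_cos, mul_add, ← Complex.exp_add, ← Complex.exp_add]
    congr 2 <;> ring
  simp_rw [e]
  rw [intervalIntegral.integral_add (Continuous.intervalIntegrable (by fun_prop) _ _)
    (Continuous.intervalIntegrable (by fun_prop) _ _), integral_exp_mul_complex c1,
    integral_exp_mul_complex c2]
  have hE : ∀ m : ℤ, Complex.exp (m * (Real.pi * Complex.I)) = (-1) ^ m := by
    intro m; rw [Complex.exp_int_mul, Complex.exp_pi_mul_I]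
  have hh : Complex.exp (Real.pi / 2 * Complex.I) = Complex.I := Complex.exp_pi_div_two_mul_I
  have hh' : Complex.exp (-(Real.pi / 2 * Complex.I)) = -Complex.I := by
    rw [Complex.exp_neg, hh, Complex.inv_I]
  have hneg : ((-1 : ℂ) ^ (-n)) = (-1) ^ n := by
    rw [zpow_neg, ← inv_zpow]; norm_num
  have x1 : Complex.exp ((1 - 2 * n) * Complex.I / 2 * (Real.pi : ℝ)) = Complex.I * (-1) ^ n := by
    rw [show (1 - 2 * n) * Complex.I / 2 * (Real.pi : ℝ) = Real.pi / 2 * Complex.I +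
      ((-n : ℤ) : ℂ) * (Real.pi * Complex.I) by push_cast; ring, Complex.exp_add, hh, hE, hneg]
  have x2 : Complex.exp ((1 - 2 * n) * Complex.I / 2 * (-Real.pi : ℝ)) =
      -Complex.I * (-1) ^ n := by
    rw [show (1 - 2 * n) * Complex.I / 2 * (-Real.pi : ℝ) = -(Real.pi / 2 * Complex.I) +
      (n : ℂ) * (Real.pi * Complex.I) by push_cast; ring, Complex.exp_add, hh', hE]
  have x3 : Complex.exp (-((1 + 2 * n) * Complex.I / 2) * (Real.pi : ℝ)) =
      -Complex.I * (-1) ^ n := by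
    rw [show -((1 + 2 * n) * Complex.I / 2) * (Real.pi : ℝ) = -(Real.pi / 2 * Complex.I) +
      ((-n : ℤ) : ℂ) * (Real.pi * Complex.I) by push_cast; ring, Complex.exp_add, hh', hE, hneg]
  have x4 : Complex.exp (-((1 + 2 * n) * Complex.I / 2) * (-Real.pi : ℝ)) =
      Complex.I * (-1) ^ n := by
    rw [show -((1 + 2 * n) * Complex.I / 2) * (-Real.pi : ℝ) = Real.pi / 2 * Complex.I +
      (n : ℂ) * (Real.pi * Complex.I) by push_cast; ring, Complex.exp_add, hh, hE]
  rw [x1, x2, x3, x4]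
  have hn3 : (1 - 4 * (n : ℂ) ^ 2) ≠ 0 := by
    rw [show (1 - 4 * (n : ℂ) ^ 2) = (1 - 2 * n) * (1 + 2 * n) by ring]
    exact mul_ne_zero hn1 hn2
  rw [div_add_div _ _ c1 c2, div_eq_div_iff (mul_ne_zero c1 c2) hn3]
  ring

lemma summable_absCosCoeff_int :
    Summable fun n : ℤ ↦ (4 / Real.pi * (-1) ^ n / (1 - 4 * (n : ℂ) ^ 2) : ℂ) := by
  refine Summable.of_norm_bounded_eventually (g := fun n : ℤ ↦ 4 / Real.pi * (1 / (n : ℝ) ^ 2))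
    ((Real.summable_one_div_int_pow.mpr (by norm_num)).mul_left _) ?_
  have : ({0} : Set ℤ)ᶜ ∈ Filter.cofinite := (Set.finite_singleton 0).compl_mem_cofinite
  filter_upwards [this] with n hn
  have hn0 : n ≠ 0 := by simpa using hn
  have h1 : (1 : ℝ) ≤ (n : ℝ) ^ 2 := by
    have : 1 ≤ n ^ 2 := by have := sq_pos_of_ne_zero hn0; omega
    exact_mod_cast this
  have e : (4 / Real.pi * (-1) ^ n / (1 - 4 * (n : ℂ) ^ 2) : ℂ) =
      ((4 / Real.pi * (-1) ^ n / (1 - 4 * (n : ℝ) ^ 2) : ℝ) : ℂ) := by push_cast; ring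
  rw [e, Complex.norm_real, norm_div, norm_mul, norm_zpow, norm_neg, norm_one, one_zpow, mul_one,
    Real.norm_of_nonneg (by positivity), div_eq_mul_one_div]
  gcongr
  rw [Real.norm_eq_abs, abs_sub_comm, abs_of_nonneg (by linarith)]
  linarith

lemma hasSum_absCosCoeff (φ : ℝ) :
    HasSum (fun k : ℕ ↦ absCosCoeff k * Real.cos (k * φ)) (2 * |Real.cos (φ / 2)|) := by
  have : Fact (0 < 2 * Real.pi) := ⟨Real.two_pi_pos⟩
  let g : ℝ → ℂ := fun x ↦ ((2 * |Real.cos (x / 2)| : ℝ) : ℂ)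
  have hg : Continuous g := by fun_prop
  have hper : Function.Periodic g (2 * Real.pi) := by
    intro x
    simp only [g]
    rw [show (x + 2 * Real.pi) / 2 = x / 2 + Real.pi by ring, Real.cos_add_pi, abs_neg]
  let F : C(AddCircle (2 * Real.pi), ℂ) :=
    ⟨hper.lift, continuous_coinduced_dom.mpr hg⟩
  have hF : ∀ x : ℝ, F (x : AddCircle (2 * Real.pi)) = g x := fun x ↦ hper.lift_coe x
  have hpi : (Real.pi : ℂ) ≠ 0 := by exact_mod_cast Real.pi_ne_zero
  have hcoef : ∀ n : ℤ, fourierCoeff F n = 4 / Real.pi * (-1) ^ n / (1 - 4 * (n : ℂ) ^ 2) := by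
    intro n
    rw [fourierCoeff_eq_intervalIntegral F n (-Real.pi)]
    rw [show -Real.pi + 2 * Real.pi = Real.pi by ring]
    have : ∀ x ∈ Set.uIcc (-Real.pi) Real.pi,
        (@fourier (2 * Real.pi) (-n) x • F x : ℂ) =
        Complex.exp (-(n * x * Complex.I)) * (2 * Real.cos (x / 2) : ℝ) := by
      intro x hx
      rw [Set.uIcc_of_le (by linarith [Real.pi_pos])] at hx
      rw [hF, fourier_coe_apply, smul_eq_mul]
      simp only [g]
      rw [abs_of_nonneg (Real.cos_nonneg_of_neg_pi_div_two_le_of_le (by linarith [hx.1])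
        (by linarith [hx.2]))]
      congr 2
      push_cast
      field_simp
    rw [intervalIntegral.integral_congr this, integral_cos_half_mul_exp, Complex.real_smul]
    push_cast
    field_simp
    ring
  have hs : Summable (fourierCoeff F) := by
    rw [show fourierCoeff F = _ from funext hcoef]
    exact summable_absCosCoeff_int
  have h := (has_pointwise_sum_fourier_series_of_summable hs (φ : AddCircle (2 * Real.pi)))
  simp_rw [hcoef, hF, fourier_coe_apply] at h
  have h2 := Complex.hasSum_re h.nat_add_neg
  have h0 : (g φ + (4 / Real.pi * (-1) ^ (0 : ℤ) / (1 - 4 * ((0 : ℤ) : ℂ) ^ 2)) •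
      Complex.exp (2 * Real.pi * Complex.I * (0 : ℤ) * φ / (2 * Real.pi : ℝ))).re =
      2 * |Real.cos (φ / 2)| + 4 / Real.pi := by
    have : (4 / Real.pi : ℂ) = ((4 / Real.pi : ℝ) : ℂ) := by push_cast; rfl
    simp [g, this, -Complex.ofReal_div]
  rw [h0] at h2
  have h3 := h2.sub (hasSum_ite_eq (0 : ℕ) (4 / Real.pi))
  rw [add_sub_cancel_right] at h3
  refine h3.congr_fun fun k ↦ ?_
  have e1 : ∀ m : ℤ, Complex.exp (2 * Real.pi * Complex.I * m * φ / (2 * Real.pi : ℝ)) =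
      Complex.exp ((m * φ : ℝ) * Complex.I) := by
    intro m; congr 1; push_cast; field_simp
  have e2 : ∀ m : ℤ, (4 / Real.pi * (-1) ^ m / (1 - 4 * (m : ℂ) ^ 2) : ℂ) =
      ((4 / Real.pi * (-1) ^ m / (1 - 4 * (m : ℝ) ^ 2) : ℝ) : ℂ) := by
    intro m; push_cast; rfl
  simp only [e1, e2, smul_eq_mul, Complex.add_re, Complex.re_ofReal_mul,
    Complex.exp_ofReal_mul_I_re]
  rcases Nat.eq_zero_or_pos k with rfl | hk
  · simp [absCosCoeff]
  · have hk1 : (1 : ℝ) ≤ k := by exact_mod_cast hk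
    have hk2 : (4 * (k : ℝ) ^ 2 - 1) ≠ 0 := by nlinarith
    have hk3 : (1 - 4 * (k : ℝ) ^ 2) ≠ 0 := by nlinarith
    simp only [absCosCoeff, hk.ne', if_false, zpow_natCast, zpow_neg, Int.cast_neg,
      Int.cast_natCast, neg_mul, Real.cos_neg, neg_sq, ← inv_pow, inv_neg_one]
    rw [pow_succ]
    field_simp
    ring

lemma summable_abs_absCosCoeff : Summable fun k ↦ |absCosCoeff k| := by
  have h := (hasSum_absCosCoeff 0).summable
  simpa using h.abs

lemma norm_ofReal_mul_exp {q : ℝ} (hq : 0 ≤ q) (φ : ℝ) :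
    ‖(q : ℂ) * Complex.exp (φ * Complex.I)‖ = q := by
  rw [norm_mul, Complex.norm_real, Complex.norm_exp_ofReal_mul_I, mul_one, Real.norm_of_nonneg hq]

lemma hasSum_pow_mul_cos_div {q : ℝ} (hq : 0 ≤ q) (hq1 : q < 1) (φ : ℝ) :
    HasSum (fun n : ℕ ↦ q ^ n / n * Real.cos (n * φ))
      (-Real.log ‖1 - (q : ℂ) * Complex.exp (φ * Complex.I)‖) := by
  have h := Complex.hasSum_re (Complex.hasSum_taylorSeries_neg_log
    (z := (q : ℂ) * Complex.exp (φ * Complex.I)) (by rwa [norm_ofReal_mul_exp hq]))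
  rw [Complex.neg_re, Complex.log_re] at h
  refine h.congr_fun fun n ↦ ?_
  rw [mul_pow, ← Complex.exp_nat_mul, show (n : ℂ) * (φ * Complex.I) = (n * φ : ℝ) * Complex.I by
    push_cast; ring, mul_div_right_comm,
    show ((q : ℂ) ^ n / n) = ((q ^ n / n : ℝ) : ℂ) by push_cast; rfl, Complex.re_ofReal_mul,
    Complex.exp_ofReal_mul_I_re]

lemma abs_log_norm_one_sub_le {z : ℂ} {q : ℝ} (hz : ‖z‖ = q) (hq : q ≤ 1 / 2) :
    |Real.log ‖1 - z‖| ≤ 2 * q := by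
  have hq0 : 0 ≤ q := hz ▸ norm_nonneg z
  have h1 : 1 - q ≤ ‖1 - z‖ := by
    have := norm_sub_norm_le 1 z
    rwa [norm_one, hz] at this
  have h2 : ‖1 - z‖ ≤ 1 + q := by
    have := norm_sub_le 1 z
    rwa [norm_one, hz] at this
  have h3 : 0 < ‖1 - z‖ := by linarith
  rw [abs_le]
  constructor
  · have := Real.one_sub_inv_le_log_of_pos h3
    refine le_trans ?_ this
    have : ‖1 - z‖⁻¹ ≤ (1 - q)⁻¹ := inv_anti₀ (by linarith) h1
    have h4 : (1 - q)⁻¹ ≤ 1 + 2 * q := by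
      rw [inv_le_iff_one_le_mul₀ (by linarith)]; nlinarith
    linarith
  · have := Real.log_le_sub_one_of_pos h3
    linarith

lemma two_abs_cos_mul_le_tsum {q : ℝ} (hq : 0 < q) (hq1 : q < 1) (φ : ℝ) :
    2 * |Real.cos (φ / 2)| * q ≤
      ∑' k : ℕ, absCosCoeff k *
        (-Real.log ‖1 - (q : ℂ) * Complex.exp ((k * φ : ℝ) * Complex.I)‖) := by
  let G : ℕ → ℕ → ℝ := fun n k ↦ q ^ n / n * (absCosCoeff k * Real.cos (k * (n * φ)))
  have hG : Summable (Function.uncurry G) := by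
    have h := (summable_geometric_of_lt_one hq.le hq1).mul_of_nonneg summable_abs_absCosCoeff
      (fun n ↦ by positivity) (fun k ↦ abs_nonneg _)
    refine Summable.of_norm_bounded h fun x ↦ ?_
    obtain ⟨n, k⟩ := x
    simp only [Function.uncurry, G]
    rw [norm_mul, norm_mul, Real.norm_of_nonneg (by positivity), Real.norm_eq_abs, Real.norm_eq_abs]
    gcongr
    · rcases Nat.eq_zero_or_pos n with rfl | hn
      · simp
      · exact div_le_self (by positivity) (by exact_mod_cast hn)
    · exact mul_le_of_le_one_right (abs_nonneg _) (Real.abs_cos_le_one _)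
  have e1 : ∀ k : ℕ, ∑' n, G n k = absCosCoeff k *
      (-Real.log ‖1 - (q : ℂ) * Complex.exp ((k * φ : ℝ) * Complex.I)‖) := by
    intro k
    have := ((hasSum_pow_mul_cos_div hq.le hq1 (k * φ)).mul_left (absCosCoeff k)).tsum_eq
    rw [← this]
    congr 1; ext n
    simp only [G]
    rw [show (k : ℝ) * (n * φ) = n * (k * φ) by ring]; ring
  have e2 : ∀ n : ℕ, ∑' k, G n k = q ^ n / n * (2 * |Real.cos (n * φ / 2)|) := fun n ↦
    ((hasSum_absCosCoeff (n * φ)).mul_left _).tsum_eq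
  have h := hG.tsum_comm
  simp_rw [e1, e2] at h
  rw [h]
  have hs : Summable fun n : ℕ ↦ q ^ n / n * (2 * |Real.cos (n * φ / 2)|) := by
    have := hG.prod
    simpa only [Function.uncurry, e2] using this
  have := hs.le_tsum 1 (fun n _ ↦ by positivity)
  simp only [pow_one, Nat.cast_one, div_one, one_mul] at this
  linarith

lemma prime_cpow_eq {p : ℕ} (hp : p.Prime) (ε θ : ℝ) (k : ℕ) :
    (p : ℂ) ^ (-(1 + ε + (k * θ : ℝ) * Complex.I)) =
      ((p : ℝ) ^ (-(1 + ε)) : ℝ) *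
        Complex.exp ((k * (-(θ * Real.log p)) : ℝ) * Complex.I) := by
  have hp0 : (p : ℂ) ≠ 0 := by exact_mod_cast hp.ne_zero
  have hp' : (0 : ℝ) ≤ p := by positivity
  rw [neg_add, Complex.cpow_add _ _ hp0, Complex.ofReal_cpow hp']
  congr 1
  · push_cast; rfl
  · rw [Complex.cpow_def_of_ne_zero hp0, ← Complex.natCast_log]
    congr 1; push_cast; ring

lemma prime_rpow_le_half {p : ℕ} (hp : p.Prime) {ε : ℝ} (hε : 0 < ε) :
    (p : ℝ) ^ (-(1 + ε)) ≤ 1 / 2 := by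
  have h2 : (2 : ℝ) ≤ p := by exact_mod_cast hp.two_le
  calc (p : ℝ) ^ (-(1 + ε)) ≤ (p : ℝ) ^ (-1 : ℝ) :=
        Real.rpow_le_rpow_of_exponent_le (by linarith) (by linarith)
    _ ≤ 1 / 2 := by
        rw [Real.rpow_neg_one, one_div]; exact inv_anti₀ (by norm_num) h2

lemma hasSum_log_norm_riemannZeta {s : ℂ} (hs : 1 < s.re) :
    HasSum (fun p : Nat.Primes ↦ -Real.log ‖1 - (p : ℂ) ^ (-s)‖) (Real.log ‖riemannZeta s‖) := by
  have hsum : Summable fun p : Nat.Primes ↦ -Complex.log (1 - (p : ℂ) ^ (-s)) := by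
    have h := DirichletCharacter.summable_neg_log_one_sub_mul_prime_cpow
      (1 : DirichletCharacter ℂ 1) hs
    simpa only [MulChar.one_apply (isUnit_of_subsingleton _), one_mul] using h
  have h := Complex.hasSum_re hsum.hasSum
  simp only [Complex.neg_re, Complex.log_re] at h
  rw [← riemannZeta_eulerProduct_exp_log hs, Complex.norm_exp, Real.log_exp]
  exact h

lemma sum_primes_two_abs_cos_le (N : ℕ) {ε : ℝ} (hε : 0 < ε) (θ : ℝ) :
    Summable (fun k : ℕ ↦ absCosCoeff k *
      Real.log ‖riemannZeta (1 + ε + (k * θ : ℝ) * Complex.I)‖) ∧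
    ∑ p ∈ N.primesBelow, 2 * |Real.cos (θ * Real.log p / 2)| * (p : ℝ) ^ (-(1 + ε)) ≤
      ∑' k : ℕ, absCosCoeff k *
        Real.log ‖riemannZeta (1 + ε + (k * θ : ℝ) * Complex.I)‖ := by
  let G : Nat.Primes → ℕ → ℝ := fun p k ↦ absCosCoeff k *
    (-Real.log ‖1 - ((p : ℕ) : ℂ) ^ (-(1 + ε + (k * θ : ℝ) * Complex.I : ℂ))‖)
  have hG : Summable (Function.uncurry G) := by
    have hp : Summable fun p : Nat.Primes ↦ 2 * ((p : ℕ) : ℝ) ^ (-(1 + ε)) :=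
      (Nat.Primes.summable_rpow.mpr (by linarith)).mul_left 2
    have h := hp.mul_of_nonneg summable_abs_absCosCoeff
      (fun n ↦ by positivity) (fun k ↦ abs_nonneg _)
    refine Summable.of_norm_bounded h fun x ↦ ?_
    obtain ⟨p, k⟩ := x
    simp only [Function.uncurry, G]
    rw [norm_mul, norm_neg, Real.norm_eq_abs, Real.norm_eq_abs, mul_comm]
    gcongr
    refine abs_log_norm_one_sub_le ?_ (prime_rpow_le_half p.2 hε)
    rw [prime_cpow_eq p.2, norm_ofReal_mul_exp (by positivity)]
  have e1 : ∀ k : ℕ, ∑' p, G p k = absCosCoeff k *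
      Real.log ‖riemannZeta (1 + ε + (k * θ : ℝ) * Complex.I)‖ := by
    intro k
    exact ((hasSum_log_norm_riemannZeta
      (by rw [re_one_add_add_mul_I]; linarith)).mul_left _).tsum_eq
  have e2 : ∀ p : Nat.Primes, 2 * |Real.cos (θ * Real.log p / 2)| * ((p : ℕ) : ℝ) ^ (-(1 + ε)) ≤
      ∑' k, G p k := by
    intro p
    have hp0 : (0 : ℝ) < (p : ℕ) := by exact_mod_cast p.2.pos
    have := two_abs_cos_mul_le_tsum (q := ((p : ℕ) : ℝ) ^ (-(1 + ε)))
      (by positivity)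
      (by linarith [prime_rpow_le_half p.2 hε]) (-(θ * Real.log p))
    rw [neg_div, Real.cos_neg] at this
    simpa only [G, prime_cpow_eq p.2] using this
  have hsw : Summable (Function.uncurry fun k p ↦ G p k) := hG.prod_symm
  refine ⟨?_, ?_⟩
  · have := hsw.prod
    simpa only [Function.uncurry, e1] using this
  · have h := hG.tsum_comm
    simp_rw [e1] at h
    rw [h]
    have hs : Summable fun p ↦ ∑' k, G p k := by
      have := hG.prod
      simpa only [Function.uncurry] using this
    rw [← Finset.sum_subtype_of_mem (p := Nat.Prime)
      (fun p : ℕ ↦ 2 * |Real.cos (θ * Real.log p / 2)| * (p : ℝ) ^ (-(1 + ε)))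
      (fun p hp ↦ Nat.prime_of_mem_primesBelow hp)]
    refine (Finset.sum_le_sum fun p _ ↦ e2 p).trans ?_
    exact hs.sum_le_tsum _ fun p _ ↦ le_trans (by positivity) (e2 p)

lemma norm_riemannZeta_mul_le {ε θ k : ℝ} (hε : 0 < ε) (hε' : ε ≤ 1 / 100) (hθ : 0 < θ)
    (hθ' : θ ≤ 1 / 2) (hk : 1 ≤ k) :
    ‖riemannZeta (1 + ε + (k * θ : ℝ) * Complex.I)‖ * θ ≤ 1 / k + 101 / 200 + k / 8 := by
  have hτ : 0 < k * θ := by positivity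
  have h := norm_riemannZeta_le (s := 1 + ε + (k * θ : ℝ) * Complex.I)
    (by rw [re_one_add_add_mul_I]; linarith)
  rw [one_add_add_sub_one] at h
  have h1 := norm_one_add_add_mul_I_le hε.le hτ.le
  have h2 := one_div_le_one_div_of_le hτ (le_norm_ofReal_add_mul_I ε hτ.le)
  have h3 : ‖riemannZeta (1 + ε + (k * θ : ℝ) * Complex.I)‖ ≤
      1 / (k * θ) + 1 / 2 + (1 + ε + k * θ) / 2 := by linarith
  calc _ ≤ (1 / (k * θ) + 1 / 2 + (1 + ε + k * θ) / 2) * θ := by gcongr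
    _ = 1 / k + (1 + ε / 2) * θ + k * (θ * θ) / 2 := by field_simp; ring
    _ ≤ 1 / k + (1 + (1 / 100) / 2) * (1 / 2) + k * ((1 / 2) * (1 / 2)) / 2 := by gcongr
    _ ≤ _ := by linarith

lemma norm_mul_norm_sub_one_le {ε τ : ℝ} (hε : 0 < ε) (hε' : ε ≤ 1 / 100) (hτ : 0 ≤ τ)
    (hτ' : τ ≤ 1) :
    ‖(1 : ℂ) + ε + τ * Complex.I‖ * ‖(ε : ℂ) + τ * Complex.I‖ ≤ 3 / 2 := by
  refine abs_le_of_sq_le_sq' ?_ (by norm_num) |>.2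
  have e1 : ‖(1 : ℂ) + ε + τ * Complex.I‖ ^ 2 = (1 + ε) ^ 2 + τ ^ 2 := by
    rw [← Complex.normSq_eq_norm_sq, Complex.normSq_apply]; simp; ring
  have e2 : ‖(ε : ℂ) + τ * Complex.I‖ ^ 2 = ε ^ 2 + τ ^ 2 := by
    rw [← Complex.normSq_eq_norm_sq, Complex.normSq_apply]; simp; ring
  rw [mul_pow, e1, e2]
  calc ((1 + ε) ^ 2 + τ ^ 2) * (ε ^ 2 + τ ^ 2)
      ≤ ((1 + 1 / 100) ^ 2 + 1 ^ 2) * ((1 / 100) ^ 2 + 1 ^ 2) := by gcongr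
    _ ≤ _ := by norm_num

lemma one_le_norm_riemannZeta_mul_of_le_one {ε θ k : ℝ} (hε : 0 < ε) (hε' : ε ≤ 1 / 100)
    (hεθ : ε ≤ θ) (hk : 1 ≤ k) (hkθ : k * θ ≤ 1) :
    1 ≤ ‖riemannZeta (1 + ε + (k * θ : ℝ) * Complex.I)‖ * θ * (4 * (1 + k)) := by
  have hθ : 0 < θ := by linarith
  have hτ : 0 < k * θ := by positivity
  have h := le_norm_sub_one_mul_riemannZeta (s := 1 + ε + (k * θ : ℝ) * Complex.I)
    (by rw [re_one_add_add_mul_I]; linarith)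
  rw [norm_mul, one_add_add_sub_one] at h
  have h1 := norm_mul_norm_sub_one_le hε hε' hτ.le hkθ
  have h2 := norm_ofReal_add_mul_I_le hε.le hτ.le
  have h3 : ‖(ε : ℂ) + (k * θ : ℝ) * Complex.I‖ ≤ (1 + k) * θ := by linarith
  have h4 := mul_le_mul_of_nonneg_right h3
    (norm_nonneg (riemannZeta (1 + ε + (k * θ : ℝ) * Complex.I)))
  linarith

lemma one_le_norm_riemannZeta_mul {ε θ j : ℝ} (hε : 0 < ε) (hε' : ε ≤ 1 / 100)
    (hεθ : ε ≤ θ) (hθ' : θ ≤ 1 / 2) (hj : 1 ≤ j) :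
    1 ≤ ‖riemannZeta (1 + ε + ((2 * j) * θ : ℝ) * Complex.I)‖ * θ * (4096 * j ^ 4) := by
  have hθ : 0 < θ := by linarith
  rcases le_total (2 * j * θ) 1 with h | h
  · refine (one_le_norm_riemannZeta_mul_of_le_one hε hε' hεθ (by linarith) h).trans ?_
    refine mul_le_mul_of_nonneg_left ?_ (by positivity)
    have := one_le_pow₀ (n := 4) hj
    have := le_self_pow₀ hj (show 4 ≠ 0 by norm_num)
    linarith
  · have h1 := le_norm_riemannZeta hε (by linarith) h
    rw [div_le_iff₀ (by positivity)] at h1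
    refine h1.trans ?_
    have h2 : (2 * j * θ) ^ 4 ≤ 2 * j * θ * j ^ 3 := by
      rw [pow_succ']
      have : 2 * j * θ ≤ j := by nlinarith
      gcongr
    calc _ ≤ ‖riemannZeta (1 + ε + ((2 * j) * θ : ℝ) * Complex.I)‖ *
          (1300 * (2 * j * θ * j ^ 3)) := by gcongr
      _ = ‖riemannZeta (1 + ε + ((2 * j) * θ : ℝ) * Complex.I)‖ * θ * (2600 * j ^ 4) := by ring
      _ ≤ _ := by gcongr; norm_num

lemma log_add_one_le_log_add_inv {y : ℝ} (hy : 0 < y) :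
    Real.log (y + 1) ≤ Real.log y + 1 / y := by
  have := Real.log_le_sub_one_of_pos (x := (y + 1) / y) (by positivity)
  rw [Real.log_div (by positivity) hy.ne'] at this
  have h2 : (y + 1) / y - 1 = 1 / y := by field_simp; ring
  linarith

/-- A telescoping majorant for the terms of odd index. -/
noncomputable def oddTail (j : ℝ) : ℝ := (Real.log (j + 1) + 1) / j

/-- A telescoping majorant for the terms of even index. -/
noncomputable def evenTail (j : ℝ) : ℝ := (12 * Real.log 2 + 4 * Real.log j + 4) / (j - 1 / 2)

lemma log_div_le_oddTail_sub {j : ℝ} (hj : 1 ≤ j) :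
    Real.log (j + 1) / (j * (j + 1)) ≤ oddTail j - oddTail (j + 1) := by
  have h := log_add_one_le_log_add_inv (y := j + 1) (by linarith)
  have h1 : oddTail (j + 1) ≤ (Real.log (j + 1) + 1 / (j + 1) + 1) / (j + 1) := by
    unfold oddTail; gcongr
  have h2 : oddTail j - (Real.log (j + 1) + 1 / (j + 1) + 1) / (j + 1) =
      Real.log (j + 1) / (j * (j + 1)) + 1 / (j * (j + 1) ^ 2) := by
    unfold oddTail; field_simp; ring
  have : 0 ≤ 1 / (j * (j + 1) ^ 2) := by positivity
  linarith

lemma log_div_le_evenTail_sub {j : ℝ} (hj : 1 ≤ j) :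
    (12 * Real.log 2 + 4 * Real.log j) / ((j - 1 / 2) * (j + 1 / 2)) ≤
      evenTail j - evenTail (j + 1) := by
  have h := log_add_one_le_log_add_inv (y := j) (by linarith)
  have hj' : 0 < j - 1 / 2 := by linarith
  have h0 : 1 / j ≤ 1 / (j - 1 / 2) := one_div_le_one_div_of_le hj' (by linarith)
  have h1 : evenTail (j + 1) ≤
      (12 * Real.log 2 + 4 * (Real.log j + 1 / (j - 1 / 2)) + 4) / (j + 1 / 2) := by
    unfold evenTail
    rw [show j + 1 - 1 / 2 = j + 1 / 2 by ring]
    gcongr; linarith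
  have h2 : evenTail j -
      (12 * Real.log 2 + 4 * (Real.log j + 1 / (j - 1 / 2)) + 4) / (j + 1 / 2) =
      (12 * Real.log 2 + 4 * Real.log j) / ((j - 1 / 2) * (j + 1 / 2)) := by
    unfold evenTail
    have h3 : j + 1 / 2 ≠ 0 := by positivity
    have h4 : j - 1 / 2 ≠ 0 := hj'.ne'
    rw [div_sub_div _ _ h4 h3, div_left_inj' (mul_ne_zero h4 h3)]
    linear_combination (-4) * mul_div_cancel₀ (1 : ℝ) h4
  linarith

lemma absCosCoeff_zero : absCosCoeff 0 = 4 / Real.pi := if_pos rfl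

lemma absCosCoeff_odd (j : ℕ) :
    absCosCoeff (2 * j + 1) = 8 / Real.pi / (16 * (j : ℝ) ^ 2 + 16 * j + 3) := by
  rw [absCosCoeff, if_neg (by omega), show 2 * j + 1 + 1 = 2 * (j + 1) by ring, pow_mul]
  push_cast
  rw [show (4 * (2 * (j : ℝ) + 1) ^ 2 - 1) = 16 * (j : ℝ) ^ 2 + 16 * j + 3 by ring]
  simp [div_eq_mul_inv]

lemma absCosCoeff_even {j : ℕ} (hj : j ≠ 0) :
    absCosCoeff (2 * j) = -(8 / Real.pi / (16 * (j : ℝ) ^ 2 - 1)) := by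
  rw [absCosCoeff, if_neg (by omega), pow_succ, pow_mul]
  push_cast
  rw [show (4 * (2 * (j : ℝ)) ^ 2 - 1) = 16 * (j : ℝ) ^ 2 - 1 by ring]
  simp [div_eq_mul_inv]

lemma norm_riemannZeta_pos {ε : ℝ} (hε : 0 < ε) (τ : ℝ) :
    0 < ‖riemannZeta (1 + ε + τ * Complex.I)‖ :=
  norm_pos_iff.mpr (riemannZeta_ne_zero_of_one_lt_re (by rw [re_one_add_add_mul_I]; linarith))

lemma absCosCoeff_odd_mul_log_le {ε θ : ℝ} (hε : 0 < ε) (hε' : ε ≤ 1 / 100) (hθ : 0 < θ)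
    (hθ' : θ ≤ 1 / 2) {j : ℕ} (hj : 1 ≤ j) :
    absCosCoeff (2 * j + 1) *
      (Real.log ‖riemannZeta (1 + ε + ((2 * j + 1 : ℕ) * θ : ℝ) * Complex.I)‖ + Real.log θ) ≤
      1 / (2 * Real.pi) * (oddTail j - oddTail (j + 1)) := by
  have hj' : (1 : ℝ) ≤ j := by exact_mod_cast hj
  have hk : (3 : ℝ) ≤ (2 * j + 1 : ℕ) := by push_cast; linarith
  have h0 := norm_riemannZeta_pos hε ((2 * j + 1 : ℕ) * θ)
  have h1 := norm_riemannZeta_mul_le hε hε' hθ hθ' (k := (2 * j + 1 : ℕ)) (by linarith)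
  have h2 : (1 : ℝ) / (2 * j + 1 : ℕ) ≤ 1 / 3 := one_div_le_one_div_of_le (by norm_num) hk
  have h3 : ‖riemannZeta (1 + ε + ((2 * j + 1 : ℕ) * θ : ℝ) * Complex.I)‖ * θ ≤ j + 1 := by
    push_cast at h1 h2 ⊢; linarith
  rw [← Real.log_mul h0.ne' hθ.ne', absCosCoeff_odd]
  have h4 := Real.log_le_log (by positivity) h3
  have h5 : 0 ≤ Real.log ((j : ℝ) + 1) := Real.log_nonneg (by linarith)
  calc _ ≤ 8 / Real.pi / (16 * (j : ℝ) ^ 2 + 16 * j + 3) * Real.log (j + 1) := by gcongr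
    _ ≤ 8 / Real.pi / (16 * (j * (j + 1))) * Real.log (j + 1) := by
        gcongr; linarith
    _ = 1 / (2 * Real.pi) * (Real.log (j + 1) / (j * (j + 1))) := by
        field_simp; ring
    _ ≤ _ := by gcongr; exact log_div_le_oddTail_sub hj'

lemma absCosCoeff_even_mul_log_le {ε θ : ℝ} (hε : 0 < ε) (hε' : ε ≤ 1 / 100) (hεθ : ε ≤ θ)
    (hθ' : θ ≤ 1 / 2) {j : ℕ} (hj : 1 ≤ j) :
    absCosCoeff (2 * j) *
      (Real.log ‖riemannZeta (1 + ε + ((2 * j : ℕ) * θ : ℝ) * Complex.I)‖ + Real.log θ) ≤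
      1 / (2 * Real.pi) * (evenTail j - evenTail (j + 1)) := by
  have hθ : 0 < θ := by linarith
  have hj' : (1 : ℝ) ≤ j := by exact_mod_cast hj
  have h0 := norm_riemannZeta_pos hε ((2 * j : ℕ) * θ)
  have h1 := one_le_norm_riemannZeta_mul hε hε' hεθ hθ' hj'
  rw [← Real.log_mul h0.ne' hθ.ne', absCosCoeff_even (by omega), neg_mul, ← mul_neg]
  have h4 := Real.log_le_log one_pos h1
  rw [show (((2 * j : ℕ) : ℝ) * θ) = 2 * j * θ by push_cast; rfl] at h0 ⊢
  rw [Real.log_one, Real.log_mul (mul_pos h0 hθ).ne' (by positivity),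
    Real.log_mul (x := 4096) (by norm_num) (by positivity), Real.log_pow,
    show (4096 : ℝ) = 2 ^ 12 by norm_num, Real.log_pow] at h4
  rw [Nat.cast_ofNat (n := 12), Nat.cast_ofNat (n := 4)] at h4
  have h5 : 0 ≤ Real.log (j : ℝ) := Real.log_nonneg (by linarith)
  have h6 : 0 ≤ Real.log 2 := Real.log_nonneg (by norm_num)
  have h7 : 0 < (j : ℝ) - 1 / 2 := by linarith
  have h8 : 0 < 16 * (j : ℝ) ^ 2 - 1 := by nlinarith
  calc _ ≤ 8 / Real.pi / (16 * (j : ℝ) ^ 2 - 1) * (12 * Real.log 2 + 4 * Real.log j) := by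
        gcongr; linarith
    _ ≤ 8 / Real.pi / (16 * ((j - 1 / 2) * (j + 1 / 2))) *
          (12 * Real.log 2 + 4 * Real.log j) := by
        gcongr; linarith
    _ = 1 / (2 * Real.pi) *
          ((12 * Real.log 2 + 4 * Real.log j) / ((j - 1 / 2) * (j + 1 / 2))) := by
        have : (j : ℝ) + 1 / 2 ≠ 0 := by positivity
        field_simp; ring
    _ ≤ _ := by gcongr; exact log_div_le_evenTail_sub hj'

lemma sum_range_absCosCoeff_mul_log_le {ε θ : ℝ} (hε : 0 < ε) (hε' : ε ≤ 1 / 100) (hεθ : ε ≤ θ)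
    (hθ' : θ ≤ 1 / 2) (n : ℕ) :
    ∑ k ∈ Finset.range (2 * n + 4), absCosCoeff k *
      (Real.log ‖riemannZeta (1 + ε + (k * θ : ℝ) * Complex.I)‖ + Real.log θ) ≤
      4 / Real.pi * (Real.log (1 + 1 / ε) + Real.log θ) + 3
        - 1 / (2 * Real.pi) * (oddTail (n + 2) + evenTail (n + 2)) := by
  have hθ : 0 < θ := by linarith
  induction n with
  | zero =>
    have hpi := Real.pi_gt_d2
    have hpi0 : (0 : ℝ) < 1 / Real.pi := by positivity
    have hpi1 : 1 / Real.pi ≤ 1 / 3.14 := one_div_le_one_div_of_le (by norm_num) hpi.le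
    have hl2 := Real.log_two_lt_d9
    simp only [Nat.mul_zero, zero_add, Finset.sum_range_succ, Finset.sum_range_zero]
    have t0 : absCosCoeff 0 *
        (Real.log ‖riemannZeta (1 + ε + ((0 : ℕ) * θ : ℝ) * Complex.I)‖ + Real.log θ) ≤
        4 / Real.pi * (Real.log (1 + 1 / ε) + Real.log θ) := by
      rw [absCosCoeff_zero]
      have h0 := norm_riemannZeta_pos hε ((0 : ℕ) * θ)
      have h1 := norm_riemannZeta_one_add_le hε
      gcongr
      simpa using h1
    have t1 : absCosCoeff 1 *
        (Real.log ‖riemannZeta (1 + ε + ((1 : ℕ) * θ : ℝ) * Complex.I)‖ + Real.log θ) ≤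
        8 / 3 * (1 / Real.pi) * (13 / 20) := by
      have h0 := norm_riemannZeta_pos hε ((1 : ℕ) * θ)
      have h1 := norm_riemannZeta_mul_le hε hε' hθ hθ' (k := (1 : ℕ)) (by simp)
      rw [show absCosCoeff 1 = _ from absCosCoeff_odd 0, ← Real.log_mul h0.ne' hθ.ne']
      have h2 := Real.log_le_sub_one_of_pos (mul_pos h0 hθ)
      have h3 : Real.log (‖riemannZeta (1 + ε + ((1 : ℕ) * θ : ℝ) * Complex.I)‖ * θ) ≤ 13 / 20 := by
        norm_num at h1 h2 ⊢; linarith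
      calc _ ≤ 8 / Real.pi / (16 * ((0 : ℕ) : ℝ) ^ 2 + 16 * (0 : ℕ) + 3) * (13 / 20) := by
            gcongr
        _ = _ := by norm_num; ring
    have t2 : absCosCoeff 2 *
        (Real.log ‖riemannZeta (1 + ε + ((2 : ℕ) * θ : ℝ) * Complex.I)‖ + Real.log θ) ≤
        8 / 15 * (1 / Real.pi) * (4 * Real.log 2) := by
      have h0 := norm_riemannZeta_pos hε ((2 : ℕ) * θ)
      have h1 := one_le_norm_riemannZeta_mul_of_le_one hε hε' hεθ (k := (2 : ℕ)) (by simp)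
        (by push_cast; linarith)
      have h2 : 1 ≤ ‖riemannZeta (1 + ε + ((2 : ℕ) * θ : ℝ) * Complex.I)‖ * θ * 2 ^ 4 :=
        h1.trans (by gcongr; norm_num)
      have h3 := Real.log_le_log one_pos h2
      rw [Real.log_one, Real.log_mul (by positivity) (by positivity), Real.log_pow] at h3
      have h4 := absCosCoeff_even (j := 1) one_ne_zero
      rw [mul_one] at h4
      rw [h4, ← Real.log_mul h0.ne' hθ.ne', neg_mul, ← mul_neg]
      calc _ ≤ 8 / Real.pi / (16 * ((1 : ℕ) : ℝ) ^ 2 - 1) * (4 * Real.log 2) := by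
            rw [Nat.cast_ofNat (n := 4)] at h3
            refine mul_le_mul_of_nonneg_left (by linarith) ?_
            rw [Nat.cast_one]; norm_num; positivity
        _ = _ := by norm_num; ring
    have t3 := absCosCoeff_odd_mul_log_le hε hε' hθ hθ' (j := 1) le_rfl
    have e1 : oddTail ((1 : ℕ) : ℝ) = Real.log 2 + 1 := by norm_num [oddTail]
    have e2 : evenTail 2 = (16 * Real.log 2 + 4) / (3 / 2) := by norm_num [evenTail]; ring
    have e3 : 1 / (2 * Real.pi) = 1 / 2 * (1 / Real.pi) := by field_simp
    rw [e1, e3] at t3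
    norm_num only [Nat.cast_zero, zero_add, Nat.cast_one] at t0 t1 t2 t3 ⊢
    rw [e2, show 1 / (2 * Real.pi) = 1 / 2 * (1 / Real.pi) by field_simp]
    have hQ : 1 / Real.pi * (8 / 3 * (13 / 20) + 8 / 15 * (4 * Real.log 2) +
        1 / 2 * (Real.log 2 + 1) + 1 / 2 * ((16 * Real.log 2 + 4) / (3 / 2))) ≤
        1 / 3.14 * (8 / 3 * (13 / 20) + 8 / 15 * (4 * 0.6931471808) +
        1 / 2 * (0.6931471808 + 1) + 1 / 2 * ((16 * 0.6931471808 + 4) / (3 / 2))) := by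
      gcongr
    norm_num only at hQ t0 t1 t2 t3 ⊢
    linarith
  | succ n ih =>
    have t1 := absCosCoeff_even_mul_log_le hε hε' hεθ hθ' (j := n + 2) (by omega)
    have t2 := absCosCoeff_odd_mul_log_le hε hε' hθ hθ' (j := n + 2) (by omega)
    rw [show 2 * (n + 1) + 4 = 2 * (n + 2) + 1 + 1 by ring, Finset.sum_range_succ,
      Finset.sum_range_succ, show 2 * (n + 2) = 2 * n + 4 by ring]
    rw [show 2 * (n + 2) = 2 * n + 4 by ring] at t1 t2
    push_cast at ih t1 t2 ⊢
    rw [show (n : ℝ) + 1 + 2 = n + 2 + 1 by ring]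
    linarith

lemma tsum_absCosCoeff_mul_log_le {ε θ : ℝ} (hε : 0 < ε) (hε' : ε ≤ 1 / 100) (hεθ : ε ≤ θ)
    (hθ' : θ ≤ 1 / 2) :
    ∑' k : ℕ, absCosCoeff k * Real.log ‖riemannZeta (1 + ε + (k * θ : ℝ) * Complex.I)‖ ≤
      4 / Real.pi * Real.log (1 + 1 / ε) - (2 - 4 / Real.pi) * Real.log θ + 3 := by
  have h1 := (sum_primes_two_abs_cos_le 0 hε θ).1.hasSum
  have h2 := (hasSum_absCosCoeff 0).mul_right (Real.log θ)
  have h3 := (h1.add h2).tendsto_sum_nat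
  have h4 : Filter.Tendsto (fun n ↦ 2 * n + 4) Filter.atTop Filter.atTop :=
    Filter.tendsto_atTop_mono (fun n ↦ by simp only [id]; omega) Filter.tendsto_id
  have h5 := le_of_tendsto' (b := 4 / Real.pi * (Real.log (1 + 1 / ε) + Real.log θ) + 3)
    (h3.comp h4) fun n ↦ ?_
  · simp at h5
    simp
    linarith
  · refine le_trans (le_of_eq ?_)
      ((sum_range_absCosCoeff_mul_log_le hε hε' hεθ hθ' n).trans (sub_le_self _ ?_))
    · refine Finset.sum_congr rfl fun k _ ↦ ?_
      rw [mul_zero, Real.cos_zero]; ring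
    · have : 0 ≤ oddTail (n + 2) + evenTail (n + 2) := by
        have a1 : 0 ≤ Real.log ((n : ℝ) + 2 + 1) :=
          Real.log_nonneg (by linarith [n.cast_nonneg (α := ℝ)])
        have a2 : 0 ≤ Real.log ((n : ℝ) + 2) :=
          Real.log_nonneg (by linarith [n.cast_nonneg (α := ℝ)])
        have a3 : 0 ≤ Real.log 2 := Real.log_nonneg (by norm_num)
        have a4 : 0 < (n : ℝ) + 2 - 1 / 2 := by linarith [n.cast_nonneg (α := ℝ)]
        unfold oddTail evenTail
        positivity
      positivity

lemma log_one_add_inv_le {ε θ : ℝ} (hε : 0 < ε) (hε' : ε ≤ 1 / 100) (hθ : 0 < θ) (hθε : θ ≤ ε) :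
    Real.log (1 + 1 / ε) ≤ 1 / 100 - Real.log θ := by
  have h1 : 1 + 1 / ε ≤ (1 + ε) / θ := by
    rw [show 1 + 1 / ε = (1 + ε) / ε by field_simp; ring]
    gcongr
  have h2 := Real.log_le_log (by positivity) h1
  rw [Real.log_div (by positivity) hθ.ne'] at h2
  have h3 := Real.log_le_sub_one_of_pos (x := 1 + ε) (by positivity)
  linarith

lemma sum_primes_two_abs_cos_le_log (N : ℕ) {ε θ : ℝ} (hε : 0 < ε) (hε' : ε ≤ 1 / 100)
    (hθ : 0 < θ) (hθ' : θ ≤ 1 / 2) :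
    ∑ p ∈ N.primesBelow, 2 * |Real.cos (θ * Real.log p / 2)| * (p : ℝ) ^ (-(1 + ε)) ≤
      4 / Real.pi * Real.log (1 + 1 / ε) - (2 - 4 / Real.pi) * Real.log θ + 3 := by
  rcases le_total ε θ with h | h
  · exact (sum_primes_two_abs_cos_le N hε θ).2.trans (tsum_absCosCoeff_mul_log_le hε hε' h hθ')
  · have h1 := (sum_primes_two_abs_cos_le N hε 0).2
    have h2 := (hasSum_absCosCoeff 0).mul_right (Real.log ‖riemannZeta (1 + ε)‖)
    simp only [mul_zero, Real.cos_zero, mul_one, zero_div, abs_one, Complex.ofReal_zero, zero_mul,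
      add_zero] at h1 h2
    rw [h2.tsum_eq] at h1
    have h3 : ∑ p ∈ N.primesBelow, 2 * |Real.cos (θ * Real.log p / 2)| * (p : ℝ) ^ (-(1 + ε)) ≤
        ∑ p ∈ N.primesBelow, 2 * (p : ℝ) ^ (-(1 + ε)) := by
      refine Finset.sum_le_sum fun p _ ↦ ?_
      have := Real.abs_cos_le_one (θ * Real.log p / 2)
      gcongr
      linarith
    have h4 := norm_riemannZeta_one_add_le hε
    have h0 := norm_riemannZeta_pos hε 0
    simp only [Complex.ofReal_zero, zero_mul, add_zero] at h0
    have h5 := Real.log_le_log h0 h4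
    have h6 := log_one_add_inv_le hε hε' hθ h
    have hpi : (2 - 4 / Real.pi) ≤ 1 := by
      have := Real.pi_lt_four
      have := (one_le_div Real.pi_pos).mpr this.le
      linarith
    have hpi' : 0 ≤ (2 - 4 / Real.pi) := by
      have := Real.pi_gt_three
      have : 4 / Real.pi ≤ 2 := by rw [div_le_iff₀ Real.pi_pos]; linarith
      linarith
    have h7 := mul_le_mul_of_nonneg_left h6 hpi'
    linarith

/-- The twisted divisor function `∑_{d ∣ n} d^{iθ}`. -/
noncomputable def twistedDivisorSum (θ : ℝ) (n : ℕ) : ℂ :=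
  ∑ d ∈ n.divisors, Complex.exp ((θ * Real.log d : ℝ) * Complex.I)

lemma twistedDivisorSum_mul (θ : ℝ) {m n : ℕ} (h : m.Coprime n) :
    twistedDivisorSum θ (m * n) = twistedDivisorSum θ m * twistedDivisorSum θ n := by
  let f : ArithmeticFunction ℂ :=
    ⟨fun d ↦ if d = 0 then 0 else Complex.exp ((θ * Real.log d : ℝ) * Complex.I), if_pos rfl⟩
  have hf : f.IsMultiplicative := by
    rw [ArithmeticFunction.IsMultiplicative.iff_ne_zero]
    refine ⟨by simp [f], fun {m n} hm hn _ ↦ ?_⟩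
    simp only [f, ArithmeticFunction.coe_mk, if_neg hm, if_neg hn, if_neg (mul_ne_zero hm hn)]
    rw [← Complex.exp_add, Nat.cast_mul, Real.log_mul (by exact_mod_cast hm) (by exact_mod_cast hn)]
    congr 1; push_cast; ring
  have hg := (ArithmeticFunction.isMultiplicative_zeta.natCast (R := ℂ)).mul hf
  have e : ∀ n, twistedDivisorSum θ n = (((ArithmeticFunction.zeta : ArithmeticFunction ℕ) :
      ArithmeticFunction ℂ) * f) n := by
    intro n
    rw [ArithmeticFunction.coe_zeta_mul_apply]
    refine Finset.sum_congr rfl fun d hd ↦ ?_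
    simp [f, (Nat.pos_of_mem_divisors hd).ne']
  rw [e, e, e]
  exact hg.map_mul_of_coprime h

lemma norm_twistedDivisorSum_le (θ : ℝ) (n : ℕ) :
    ‖twistedDivisorSum θ n‖ ≤ n.divisors.card := by
  refine (norm_sum_le _ _).trans (le_of_eq ?_)
  simp_rw [Complex.norm_exp_ofReal_mul_I]
  simp

lemma norm_twistedDivisorSum_prime (θ : ℝ) {p : ℕ} (hp : p.Prime) :
    ‖twistedDivisorSum θ p‖ = 2 * |Real.cos (θ * Real.log p / 2)| := by
  have h : (1 : ℂ) + Complex.exp ((θ * Real.log p : ℝ) * Complex.I) =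
      Complex.exp ((θ * Real.log p / 2 : ℝ) * Complex.I) *
        (2 * Real.cos (θ * Real.log p / 2) : ℝ) := by
    rw [Complex.ofReal_mul 2, Complex.ofReal_cos, Complex.cos, Complex.ofReal_ofNat,
      mul_div_cancel₀ _ (two_ne_zero' ℂ), mul_add, ← Complex.exp_add, ← Complex.exp_add, add_comm]
    congr 1
    · congr 1; push_cast; ring
    · rw [neg_mul, add_neg_cancel, Complex.exp_zero]
  rw [twistedDivisorSum, hp.sum_divisors]
  simp only [Nat.cast_one, Real.log_one, mul_zero, Complex.ofReal_zero, zero_mul, Complex.exp_zero]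
  rw [add_comm, h, norm_mul, Complex.norm_exp_ofReal_mul_I, one_mul, Complex.norm_real,
    Real.norm_eq_abs, abs_mul, abs_two]

/-- The summand of the twisted Dirichlet series. -/
noncomputable def twistedTerm (t θ ε : ℝ) (n : ℕ) : ℝ :=
  t ^ n.primeFactors.card * ‖twistedDivisorSum θ n‖ * (n : ℝ) ^ (-(1 + ε))

lemma twistedTerm_one (t θ ε : ℝ) : twistedTerm t θ ε 1 = 1 := by
  simp [twistedTerm, twistedDivisorSum]

lemma twistedTerm_nonneg {t : ℝ} (ht : 0 ≤ t) (θ ε : ℝ) (n : ℕ) : 0 ≤ twistedTerm t θ ε n := by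
  unfold twistedTerm; positivity

lemma twistedTerm_mul (t θ ε : ℝ) {m n : ℕ} (h : m.Coprime n) :
    twistedTerm t θ ε (m * n) = twistedTerm t θ ε m * twistedTerm t θ ε n := by
  unfold twistedTerm
  rw [twistedDivisorSum_mul θ h, norm_mul, h.primeFactors_mul,
    Finset.card_union_of_disjoint h.disjoint_primeFactors, pow_add, Nat.cast_mul,
    Real.mul_rpow (by positivity) (by positivity)]
  ring

lemma twistedTerm_prime_pow_le {t θ ε : ℝ} (ht : 0 ≤ t) (ht1 : t ≤ 1) (hε : 0 ≤ ε) {p : ℕ}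
    (hp : p.Prime) (e : ℕ) :
    twistedTerm t θ ε (p ^ e) ≤ (e + 1) * (1 / (p : ℝ)) ^ e := by
  unfold twistedTerm
  have h1 := norm_twistedDivisorSum_le θ (p ^ e)
  rw [Nat.divisors_prime_pow hp, Finset.card_map, Finset.card_range] at h1
  have hp1 : (1 : ℝ) ≤ p := by exact_mod_cast hp.one_le
  have h2 : ((p ^ e : ℕ) : ℝ) ^ (-(1 + ε)) ≤ (1 / (p : ℝ)) ^ e := by
    calc _ ≤ ((p ^ e : ℕ) : ℝ) ^ (-1 : ℝ) :=
          Real.rpow_le_rpow_of_exponent_le (by push_cast; exact one_le_pow₀ hp1) (by linarith)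
      _ = _ := by rw [Real.rpow_neg_one]; push_cast; rw [one_div, inv_pow]
  have h3 : t ^ (p ^ e).primeFactors.card ≤ 1 := pow_le_one₀ ht ht1
  calc _ ≤ 1 * ((e + 1 : ℕ) : ℝ) * (1 / (p : ℝ)) ^ e := by gcongr
    _ = _ := by push_cast; ring

lemma hasSum_succ_mul_pow {q : ℝ} (hq : 0 ≤ q) (hq1 : q < 1) :
    HasSum (fun e : ℕ ↦ ((e : ℝ) + 1) * q ^ e) (1 / (1 - q) ^ 2) := by
  have h := hasSum_choose_mul_geometric_of_norm_lt_one 1 (r := q)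
    (by rwa [Real.norm_of_nonneg hq])
  simpa using h

lemma summable_twistedTerm_prime_pow {t θ ε : ℝ} (ht : 0 ≤ t) (ht1 : t ≤ 1) (hε : 0 ≤ ε) {p : ℕ}
    (hp : p.Prime) : Summable fun e : ℕ ↦ twistedTerm t θ ε (p ^ e) := by
  have hp1 : (1 : ℝ) < p := by exact_mod_cast hp.one_lt
  refine Summable.of_nonneg_of_le (fun e ↦ twistedTerm_nonneg ht _ _ _)
    (fun e ↦ twistedTerm_prime_pow_le ht ht1 hε hp e)
    (hasSum_succ_mul_pow (by positivity) ?_).summable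
  rw [div_lt_one (by linarith)]; exact hp1

/-- The contribution of the proper prime powers to an Euler factor. -/
noncomputable def powerExcess (p : ℝ) : ℝ := (3 * p - 2) / (p * (p - 1) ^ 2)

lemma powerExcess_nonneg {p : ℝ} (hp : 1 ≤ p) : 0 ≤ powerExcess p := by
  have : 0 ≤ 3 * p - 2 := by linarith
  unfold powerExcess; positivity

lemma tsum_twistedTerm_prime_pow_le {t θ ε : ℝ} (ht : 0 ≤ t) (ht1 : t ≤ 1) (hε : 0 ≤ ε) {p : ℕ}
    (hp : p.Prime) :
    ∑' e : ℕ, twistedTerm t θ ε (p ^ e) ≤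
      Real.exp (t * (2 * |Real.cos (θ * Real.log p / 2)| * (p : ℝ) ^ (-(1 + ε)))) *
        (1 + powerExcess p) := by
  have hp1 : (1 : ℝ) < p := by exact_mod_cast hp.one_lt
  have hp' : (p : ℝ) - 1 ≠ 0 := by linarith
  have hs := summable_twistedTerm_prime_pow (θ := θ) ht ht1 hε hp
  have hq := hasSum_succ_mul_pow (q := 1 / p) (by positivity) (by rwa [div_lt_one (by linarith)])
  rw [← hs.sum_add_tsum_nat_add 2]
  have h1 : ∑' e : ℕ, twistedTerm t θ ε (p ^ (e + 2)) ≤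
      ∑' e : ℕ, (((e + 2 : ℕ) : ℝ) + 1) * (1 / (p : ℝ)) ^ (e + 2) :=
    ((summable_nat_add_iff 2).mpr hs).tsum_le_tsum
      (fun e ↦ twistedTerm_prime_pow_le ht ht1 hε hp (e + 2))
      ((summable_nat_add_iff 2).mpr hq.summable)
  have h2 := hq.summable.sum_add_tsum_nat_add 2
  rw [hq.tsum_eq] at h2
  have h3 : powerExcess p = 1 / (1 - 1 / (p : ℝ)) ^ 2 - 1 - 2 * (1 / p) := by
    have : (1 - 1 / (p : ℝ)) = (p - 1) / p := by field_simp
    rw [this, powerExcess]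
    field_simp
    ring
  simp only [Finset.sum_range_succ, Finset.sum_range_zero, zero_add, pow_zero, pow_one,
    twistedTerm_one, Nat.cast_zero, Nat.cast_one, mul_one] at h2 ⊢
  have h4 : twistedTerm t θ ε p =
      t * (2 * |Real.cos (θ * Real.log p / 2)| * (p : ℝ) ^ (-(1 + ε))) := by
    rw [twistedTerm, norm_twistedDivisorSum_prime θ hp, hp.primeFactors, Finset.card_singleton]
    ring
  rw [h4]
  set a := t * (2 * |Real.cos (θ * Real.log p / 2)| * (p : ℝ) ^ (-(1 + ε))) with ha
  have ha0 : 0 ≤ a := by positivity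
  have hr := powerExcess_nonneg hp1.le
  have h5 : 1 + a ≤ Real.exp a := by linarith [Real.add_one_le_exp a]
  calc _ ≤ 1 + a + powerExcess p := by linarith
    _ ≤ (1 + a) * (1 + powerExcess p) := by nlinarith
    _ ≤ _ := by gcongr

lemma prod_one_add_powerExcess_le (m : ℕ) :
    ∏ p ∈ (m + 3).primesBelow, (1 + powerExcess p) ≤ 3 * Real.exp (2 - 3 / (m + 3 / 2)) := by
  induction m with
  | zero =>
    have : (0 + 3).primesBelow = {2} := by decide
    rw [this, Finset.prod_singleton]
    norm_num [powerExcess]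
  | succ m ih =>
    have hle : Real.exp (2 - 3 / (m + 3 / 2)) * (1 + powerExcess (m + 3 : ℕ)) ≤
        Real.exp (2 - 3 / ((m + 1 : ℕ) + 3 / 2)) := by
      have h1 : powerExcess (m + 3 : ℕ) ≤ 3 / (m + 3 / 2) - 3 / ((m + 1 : ℕ) + 3 / 2) := by
        have e : 3 / ((m : ℝ) + 3 / 2) - 3 / ((m + 1 : ℕ) + 3 / 2) =
            3 / ((m + 3 / 2) * (m + 5 / 2)) := by
          push_cast; field_simp; ring
        rw [e, powerExcess,
          div_le_div_iff₀ (by push_cast; rw [add_sub_assoc]; positivity) (by positivity)]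
        push_cast
        nlinarith [m.cast_nonneg (α := ℝ)]
      have h2 := Real.add_one_le_exp (powerExcess (m + 3 : ℕ))
      calc _ ≤ Real.exp (2 - 3 / (m + 3 / 2)) * Real.exp (powerExcess (m + 3 : ℕ)) := by
            gcongr; linarith
        _ = Real.exp (2 - 3 / (m + 3 / 2) + powerExcess (m + 3 : ℕ)) := (Real.exp_add _ _).symm
        _ ≤ _ := by gcongr; linarith
    have h0 : 0 ≤ powerExcess (m + 3 : ℕ) :=
      powerExcess_nonneg (by push_cast; linarith [m.cast_nonneg (α := ℝ)])
    rw [show m + 1 + 3 = m + 3 + 1 by ring, Nat.primesBelow_succ]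
    split_ifs with h
    · rw [Finset.prod_insert (by simp [Nat.primesBelow])]
      calc _ ≤ (1 + powerExcess (m + 3 : ℕ)) * (3 * Real.exp (2 - 3 / (m + 3 / 2))) := by gcongr
        _ ≤ _ := by linarith
    · refine ih.trans ?_
      have : Real.exp (2 - 3 / (m + 3 / 2)) ≤
          Real.exp (2 - 3 / (m + 3 / 2)) * (1 + powerExcess (m + 3 : ℕ)) :=
        le_mul_of_one_le_right (Real.exp_pos _).le (by linarith)
      linarith

lemma sum_twistedTerm_le {t θ ε : ℝ} (ht : 0 ≤ t) (ht1 : t ≤ 1) (hε : 0 < ε) (hε' : ε ≤ 1 / 100)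
    (hθ : 0 < θ) (hθ' : θ ≤ 1 / 2) (M : ℕ) :
    ∑ n ∈ Finset.Icc 1 M, twistedTerm t θ ε n ≤
      3 * Real.exp 5 * (1 + 1 / ε) ^ (4 * t / Real.pi) * θ ^ (-(2 - 4 / Real.pi)) := by
  obtain ⟨h1, h2⟩ := EulerProduct.summable_and_hasSum_smoothNumbers_prod_primesBelow_tsum
    (f := twistedTerm t θ ε) (twistedTerm_one t θ ε) (twistedTerm_mul t θ ε)
    (fun hp ↦ (summable_twistedTerm_prime_pow ht ht1 hε.le hp).norm) (M + 3)
  have hmem : ∀ n ∈ Finset.Icc 1 M, n ∈ (M + 3).smoothNumbers := fun n hn ↦ by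
    rw [Finset.mem_Icc] at hn
    exact Nat.mem_smoothNumbers_of_lt hn.1 (by omega)
  have hS := sum_primes_two_abs_cos_le_log (M + 3) hε hε' hθ hθ'
  have hl : Real.log θ ≤ 0 := Real.log_nonpos hθ.le (by linarith)
  have hpi' : 0 ≤ (2 - 4 / Real.pi) := by
    have := Real.pi_gt_three
    have : 4 / Real.pi ≤ 2 := by rw [div_le_iff₀ Real.pi_pos]; linarith
    linarith
  have hl2 : 0 ≤ - ((2 - 4 / Real.pi) * Real.log θ) + 3 := by nlinarith
  have htS := mul_le_mul_of_nonneg_left hS ht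
  have htl := mul_le_mul_of_nonneg_right ht1 hl2
  calc ∑ n ∈ Finset.Icc 1 M, twistedTerm t θ ε n
      ≤ ∏ p ∈ (M + 3).primesBelow, ∑' e : ℕ, twistedTerm t θ ε (p ^ e) := by
        rw [← h2.tsum_eq, ← Finset.sum_subtype_of_mem _ hmem]
        exact h2.summable.sum_le_tsum _ fun n _ ↦ twistedTerm_nonneg ht _ _ _
    _ ≤ ∏ p ∈ (M + 3).primesBelow,
          (Real.exp (t * (2 * |Real.cos (θ * Real.log p / 2)| * (p : ℝ) ^ (-(1 + ε)))) *
            (1 + powerExcess p)) := by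
        refine Finset.prod_le_prod (fun p _ ↦ tsum_nonneg fun e ↦ twistedTerm_nonneg ht _ _ _)
          fun p hp ↦ ?_
        exact tsum_twistedTerm_prime_pow_le ht ht1 hε.le (Nat.prime_of_mem_primesBelow hp)
    _ ≤ Real.exp (4 * t / Real.pi * Real.log (1 + 1 / ε) -
          (2 - 4 / Real.pi) * Real.log θ + 3) * (3 * Real.exp 2) := by
        rw [Finset.prod_mul_distrib, ← Real.exp_sum, ← Finset.mul_sum]
        gcongr
        · exact Finset.prod_nonneg fun p hp ↦ add_nonneg zero_le_one (powerExcess_nonneg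
            (by exact_mod_cast (Nat.prime_of_mem_primesBelow hp).one_le))
        · have e : 4 * t / Real.pi = t * (4 / Real.pi) := by ring
          rw [e]
          linarith
        · refine (prod_one_add_powerExcess_le M).trans ?_
          gcongr
          exact sub_le_self _ (by positivity)
    _ = _ := by
        rw [Real.rpow_def_of_pos (by positivity), Real.rpow_def_of_pos hθ, sub_add_eq_add_sub,
          sub_eq_add_neg, Real.exp_add, Real.exp_add,
          show (5 : ℝ) = 3 + 2 by norm_num, Real.exp_add]
        ring_nf

/-- The Fejér kernel, written as a cosine transform supported on `[0, 1/2]`. -/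
noncomputable def fejer (v : ℝ) : ℝ := ∫ θ in (0 : ℝ)..1 / 2, 4 * (1 - 2 * θ) * Real.cos (θ * v)

lemma fejer_nonneg (v : ℝ) : 0 ≤ fejer v := by
  rcases eq_or_ne v 0 with rfl | hv
  · refine intervalIntegral.integral_nonneg (by norm_num) fun θ hθ ↦ ?_
    rw [mul_zero, Real.cos_zero]
    linarith [hθ.2]
  · have hd : ∀ θ ∈ uIcc (0 : ℝ) (1 / 2), HasDerivAt
        (fun θ ↦ 4 * ((1 - 2 * θ) * Real.sin (θ * v) / v - 2 * Real.cos (θ * v) / v ^ 2))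
        (4 * (1 - 2 * θ) * Real.cos (θ * v)) θ := by
      intro θ _
      have h1 : HasDerivAt (fun θ : ℝ ↦ θ * v) v θ := by simpa using (hasDerivAt_id θ).mul_const v
      have h2 : HasDerivAt (fun θ : ℝ ↦ 1 - 2 * θ) (-2) θ := by
        simpa using ((hasDerivAt_id θ).const_mul 2).const_sub 1
      have h3 := (((h2.mul h1.sin).div_const v).sub
        ((h1.cos.const_mul 2).div_const (v ^ 2))).const_mul 4
      refine h3.congr_deriv ?_
      field_simp
      ring
    rw [fejer, intervalIntegral.integral_eq_sub_of_hasDerivAt hd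
      (Continuous.intervalIntegrable (by fun_prop) _ _)]
    have h := Real.cos_le_one (1 / 2 * v)
    have : 0 ≤ 8 * (1 - Real.cos (1 / 2 * v)) / v ^ 2 := by
      have : 0 ≤ 1 - Real.cos (1 / 2 * v) := by linarith
      positivity
    refine this.trans (le_of_eq ?_)
    rw [zero_mul, Real.cos_zero, Real.sin_zero]
    ring

lemma le_fejer {v : ℝ} (hv : |v| ≤ 1 / 2) : 191 / 192 ≤ fejer v := by
  have hv2 : v ^ 2 ≤ 1 / 4 := by
    rw [← sq_abs]; nlinarith [abs_nonneg v]
  have hd : ∀ θ ∈ uIcc (0 : ℝ) (1 / 2), HasDerivAt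
      (fun θ ↦ 4 * (θ - θ ^ 2 - θ ^ 3 * v ^ 2 / 6 + θ ^ 4 * v ^ 2 / 4))
      (4 * (1 - 2 * θ) * (1 - (θ * v) ^ 2 / 2)) θ := by
    intro θ _
    have h1 := hasDerivAt_id' θ
    have h3 := (((h1.sub (hasDerivAt_pow 2 θ)).sub
      (((hasDerivAt_pow 3 θ).mul_const (v ^ 2)).div_const 6)).add
      (((hasDerivAt_pow 4 θ).mul_const (v ^ 2)).div_const 4)).const_mul 4
    refine h3.congr_deriv ?_
    push_cast
    ring
  have h := intervalIntegral.integral_eq_sub_of_hasDerivAt hd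
    (Continuous.intervalIntegrable (by fun_prop) _ _)
  have h2 : ∫ θ in (0 : ℝ)..1 / 2, 4 * (1 - 2 * θ) * (1 - (θ * v) ^ 2 / 2) ≤ fejer v := by
    refine intervalIntegral.integral_mono_on (by norm_num)
      (Continuous.intervalIntegrable (by fun_prop) _ _)
      (Continuous.intervalIntegrable (by fun_prop) _ _) fun θ hθ ↦ ?_
    have : 0 ≤ 1 - 2 * θ := by linarith [hθ.2]
    gcongr
    exact Real.one_sub_sq_div_two_le_cos
  rw [h] at h2
  refine le_trans ?_ h2
  norm_num
  linarith

lemma continuous_twistedDivisorSum (n : ℕ) : Continuous fun θ ↦ twistedDivisorSum θ n := by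
  unfold twistedDivisorSum; fun_prop

lemma sum_fejer_le (n : ℕ) (c : ℝ) :
    ∑ d ∈ n.divisors, fejer (Real.log d - c) ≤
      4 * ∫ θ in (0 : ℝ)..1 / 2, ‖twistedDivisorSum θ n‖ := by
  unfold fejer
  rw [← intervalIntegral.integral_finsetSum
    (fun d _ ↦ Continuous.intervalIntegrable (by fun_prop) _ _),
    ← intervalIntegral.integral_const_mul]
  have hc := continuous_twistedDivisorSum n
  refine intervalIntegral.integral_mono_on (by norm_num)
    (Continuous.intervalIntegrable (by fun_prop) _ _)
    (Continuous.intervalIntegrable (by fun_prop) _ _) fun θ hθ ↦ ?_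
  have hθ0 : 0 ≤ 1 - 2 * θ := by linarith [hθ.2]
  have h1 : ∑ d ∈ n.divisors, Real.cos (θ * (Real.log d - c)) =
      (twistedDivisorSum θ n * Complex.exp ((-(θ * c) : ℝ) * Complex.I)).re := by
    rw [twistedDivisorSum, Finset.sum_mul, Complex.re_sum]
    refine Finset.sum_congr rfl fun d _ ↦ ?_
    rw [← Complex.exp_add, ← add_mul, ← Complex.ofReal_add, Complex.exp_ofReal_mul_I_re]
    congr 1; ring
  have h2 : ∑ d ∈ n.divisors, Real.cos (θ * (Real.log d - c)) ≤ ‖twistedDivisorSum θ n‖ := by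
    rw [h1]
    refine (Complex.re_le_norm _).trans (le_of_eq ?_)
    rw [norm_mul, Complex.norm_exp_ofReal_mul_I, mul_one]
  rw [← Finset.mul_sum]
  calc _ ≤ 4 * (1 - 2 * θ) * ‖twistedDivisorSum θ n‖ := by gcongr
    _ ≤ 4 * ‖twistedDivisorSum θ n‖ := by
        gcongr; linarith [hθ.1]

lemma exists_hooleyDelta_eq (n : ℕ) : ∃ u : ℝ, hooleyDelta n =
    (n.divisors.filter (fun d : ℕ ↦ Real.exp u < (d : ℝ) ∧ (d : ℝ) ≤ Real.exp (u + 1))).card :=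
  Nat.sSup_mem (s := {m : ℕ | ∃ u : ℝ, m = (n.divisors.filter
    (fun d : ℕ ↦ Real.exp u < (d : ℝ) ∧ (d : ℝ) ≤ Real.exp (u + 1))).card}) ⟨_, 0, rfl⟩
    ⟨n.divisors.card, by rintro m ⟨u, rfl⟩; exact Finset.card_filter_le _ _⟩

lemma hooleyDelta_le_card_divisors (n : ℕ) : hooleyDelta n ≤ n.divisors.card := by
  obtain ⟨u, hu⟩ := exists_hooleyDelta_eq n
  exact hu ▸ Finset.card_filter_le _ _

lemma hooleyDelta_le_integral (n : ℕ) :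
    (hooleyDelta n : ℝ) ≤ 768 / 191 * ∫ θ in (0 : ℝ)..1 / 2, ‖twistedDivisorSum θ n‖ := by
  obtain ⟨u, hu⟩ := exists_hooleyDelta_eq n
  have h1 : (hooleyDelta n : ℝ) * (191 / 192) ≤
      ∑ d ∈ n.divisors, fejer (Real.log d - (u + 1 / 2)) := by
    rw [hu, ← nsmul_eq_mul, ← Finset.sum_const]
    refine (Finset.sum_le_sum fun d hd ↦ ?_).trans
      (Finset.sum_le_sum_of_subset_of_nonneg (Finset.filter_subset _ _) fun d _ _ ↦ fejer_nonneg _)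
    obtain ⟨-, h1, h2⟩ := Finset.mem_filter.mp hd
    have hd0 : (0 : ℝ) < d := (Real.exp_pos u).trans h1
    rw [← Real.lt_log_iff_exp_lt hd0] at h1
    rw [← Real.log_le_iff_le_exp hd0] at h2
    exact le_fejer (abs_le.mpr ⟨by linarith, by linarith⟩)
  have h2 := h1.trans (sum_fejer_le n _)
  linarith

lemma inv_le_exp_one_mul_rpow {L : ℝ} (hL : 1 ≤ L) {n : ℕ} (hn : 1 ≤ n)
    (hnL : Real.log n ≤ L) : 1 / (n : ℝ) ≤ Real.exp 1 * (n : ℝ) ^ (-(1 + 1 / L)) := by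
  have hn0 : (0 : ℝ) < n := by exact_mod_cast hn
  have h : (n : ℝ) ^ (1 / L) ≤ Real.exp 1 := by
    rw [Real.rpow_def_of_pos hn0]
    gcongr
    rw [mul_one_div, div_le_one (by linarith)]
    exact hnL
  rw [neg_add, Real.rpow_add hn0, Real.rpow_neg_one, Real.rpow_neg hn0.le, one_div]
  have h3 : 0 < (n : ℝ) ^ (1 / L) := by positivity
  calc (n : ℝ)⁻¹ = (n : ℝ) ^ (1 / L) * ((n : ℝ)⁻¹ * ((n : ℝ) ^ (1 / L))⁻¹) := by field_simp
    _ ≤ _ := by gcongr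

lemma integral_rpow_le :
    ∫ θ in (0 : ℝ)..1 / 2, θ ^ (-(2 - 4 / Real.pi)) ≤ 0.841 / 0.2732 := by
  have hpi := Real.pi_lt_d4
  have hb : 0.2732 ≤ 4 / Real.pi - 1 := by
    rw [le_sub_iff_add_le, le_div_iff₀ Real.pi_pos]
    norm_num at hpi ⊢
    linarith
  rw [integral_rpow (Or.inl (by linarith)), show -(2 - 4 / Real.pi) + 1 = 4 / Real.pi - 1 by ring,
    Real.zero_rpow (by linarith), sub_zero]
  have h1 : (1 / 2 : ℝ) ^ (4 / Real.pi - 1) ≤ 0.841 := by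
    calc (1 / 2 : ℝ) ^ (4 / Real.pi - 1) ≤ (1 / 2 : ℝ) ^ (1 / 4 : ℝ) :=
          Real.rpow_le_rpow_of_exponent_ge (by norm_num) (by norm_num) (by linarith)
      _ ≤ ((0.841 : ℝ) ^ (4 : ℝ)) ^ (1 / 4 : ℝ) := by
          gcongr
          norm_num
      _ = 0.841 := by rw [← Real.rpow_mul (by norm_num)]; norm_num
  gcongr

lemma intervalIntegrable_rpow_neg_two_sub :
    IntervalIntegrable (fun θ : ℝ ↦ θ ^ (-(2 - 4 / Real.pi))) volume 0 (1 / 2) := by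
  refine intervalIntegral.intervalIntegrable_rpow' ?_
  have : 1 < 4 / Real.pi := (one_lt_div Real.pi_pos).mpr Real.pi_lt_four
  linarith

lemma sum_hooleyDelta_le_of_large {x t : ℝ} (hx : 1 ≤ x) (ht : 0 ≤ t) (ht1 : t ≤ 1)
    (hL : 129 ≤ Real.log (Real.exp 1 * x)) :
    ∑ n ∈ Finset.Icc 1 ⌊x⌋₊, t ^ n.primeFactors.card * (hooleyDelta n : ℝ) / n <
      16748 * Real.log (Real.exp 1 * x) ^ (4 * t / Real.pi) := by
  have hLx : Real.log (Real.exp 1 * x) = 1 + Real.log x := by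
    rw [Real.log_mul (Real.exp_pos 1).ne' (by linarith), Real.log_exp]
  set L := Real.log (Real.exp 1 * x) with hLdef
  have hL0 : 0 < L := by linarith
  have hε : 1 / L ≤ 1 / 100 := one_div_le_one_div_of_le (by norm_num) (by linarith)
  have hterm : ∀ n ∈ Finset.Icc 1 ⌊x⌋₊, t ^ n.primeFactors.card * (hooleyDelta n : ℝ) / n ≤
      Real.exp 1 * (768 / 191) * ∫ θ in (0 : ℝ)..1 / 2, twistedTerm t θ (1 / L) n := by
    intro n hn
    rw [Finset.mem_Icc] at hn
    have hn0 : (0 : ℝ) < n := by exact_mod_cast hn.1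
    have hnx : (n : ℝ) ≤ x := (Nat.le_floor_iff (by linarith)).mp hn.2
    have hlog := Real.log_le_log hn0 hnx
    have h1 := inv_le_exp_one_mul_rpow (L := L) (by linarith) hn.1 (by linarith)
    have h2 := hooleyDelta_le_integral n
    have h3 : 0 ≤ ∫ θ in (0 : ℝ)..1 / 2, ‖twistedDivisorSum θ n‖ :=
      intervalIntegral.integral_nonneg (by norm_num) fun _ _ ↦ norm_nonneg _
    simp only [twistedTerm]
    rw [intervalIntegral.integral_mul_const, intervalIntegral.integral_const_mul]
    calc t ^ n.primeFactors.card * (hooleyDelta n : ℝ) / n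
        = t ^ n.primeFactors.card * (hooleyDelta n : ℝ) * (1 / n) := by ring
      _ ≤ t ^ n.primeFactors.card *
          (768 / 191 * ∫ θ in (0 : ℝ)..1 / 2, ‖twistedDivisorSum θ n‖) *
            (Real.exp 1 * (n : ℝ) ^ (-(1 + 1 / L))) := by gcongr
      _ = _ := by ring
  have hcont : ∀ n : ℕ, Continuous fun θ ↦ twistedTerm t θ (1 / L) n := fun n ↦ by
    have := continuous_twistedDivisorSum n
    unfold twistedTerm
    fun_prop
  have h_int : ∫ θ in (0 : ℝ)..1 / 2, ∑ n ∈ Finset.Icc 1 ⌊x⌋₊, twistedTerm t θ (1 / L) n ≤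
      3 * Real.exp 5 * (1 + L) ^ (4 * t / Real.pi) * (0.841 / 0.2732) := by
    calc _ ≤ ∫ θ in (0 : ℝ)..1 / 2, 3 * Real.exp 5 * (1 + L) ^ (4 * t / Real.pi) *
          θ ^ (-(2 - 4 / Real.pi)) := by
          refine intervalIntegral.integral_mono_on_of_le_Ioo (by norm_num)
            (Continuous.intervalIntegrable (by fun_prop) _ _)
            (intervalIntegrable_rpow_neg_two_sub.const_mul _) fun θ hθ ↦ ?_
          have := sum_twistedTerm_le ht ht1 (by positivity : 0 < 1 / L) hε hθ.1 hθ.2.le ⌊x⌋₊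
          rwa [one_div_one_div] at this
      _ ≤ _ := by
          rw [intervalIntegral.integral_const_mul]
          gcongr
          exact integral_rpow_le
  have hpow : (1 + L) ^ (4 * t / Real.pi) ≤ (130 / 129) ^ 2 * L ^ (4 * t / Real.pi) := by
    have hexp : 4 * t / Real.pi ≤ 2 := by
      rw [div_le_iff₀ Real.pi_pos]; linarith [Real.pi_gt_three]
    calc (1 + L) ^ (4 * t / Real.pi) ≤ (130 / 129 * L) ^ (4 * t / Real.pi) := by
          gcongr; linarith
      _ = (130 / 129) ^ (4 * t / Real.pi) * L ^ (4 * t / Real.pi) :=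
          Real.mul_rpow (by norm_num) hL0.le
      _ ≤ (130 / 129) ^ (2 : ℝ) * L ^ (4 * t / Real.pi) := by
          gcongr; norm_num
      _ = _ := by norm_num
  have hLp : 0 < L ^ (4 * t / Real.pi) := by positivity
  have hexp6 : Real.exp 1 * Real.exp 5 ≤ 2.7182818286 ^ 6 := by
    rw [← Real.exp_add, show (1 : ℝ) + 5 = (6 : ℕ) * 1 by norm_num, Real.exp_nat_mul]
    gcongr
    exact Real.exp_one_lt_d9.le
  calc _ ≤ ∑ n ∈ Finset.Icc 1 ⌊x⌋₊, Real.exp 1 * (768 / 191) *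
          ∫ θ in (0 : ℝ)..1 / 2, twistedTerm t θ (1 / L) n := Finset.sum_le_sum hterm
    _ = Real.exp 1 * (768 / 191) *
          ∫ θ in (0 : ℝ)..1 / 2, ∑ n ∈ Finset.Icc 1 ⌊x⌋₊, twistedTerm t θ (1 / L) n := by
        rw [← Finset.mul_sum, intervalIntegral.integral_finsetSum
          fun n _ ↦ (hcont n).intervalIntegrable _ _]
    _ ≤ Real.exp 1 * (768 / 191) * (3 * Real.exp 5 * ((130 / 129) ^ 2 * L ^ (4 * t / Real.pi)) *
          (0.841 / 0.2732)) := by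
        gcongr
        refine h_int.trans ?_
        gcongr
    _ = Real.exp 1 * Real.exp 5 * (768 / 191 * 3 * (130 / 129) ^ 2 * (0.841 / 0.2732)) *
          L ^ (4 * t / Real.pi) := by ring
    _ ≤ 2.7182818286 ^ 6 * (768 / 191 * 3 * (130 / 129) ^ 2 * (0.841 / 0.2732)) *
          L ^ (4 * t / Real.pi) := by gcongr
    _ < _ := by
        gcongr
        norm_num

lemma sum_card_divisors_div_le (M : ℕ) :
    ∑ n ∈ Finset.Icc 1 M, (n.divisors.card : ℝ) / n ≤ (∑ n ∈ Finset.Icc 1 M, 1 / (n : ℝ)) ^ 2 := by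
  rw [sq, Finset.sum_mul_sum, ← Finset.sum_product']
  have h1 : ∀ n ∈ Finset.Icc 1 M, (n.divisors.card : ℝ) / n =
      ∑ x ∈ n.divisorsAntidiagonal, 1 / (x.1 : ℝ) * (1 / x.2) := by
    intro n _
    rw [div_eq_mul_one_div, ← nsmul_eq_mul, ← Finset.sum_const,
      ← Nat.sum_divisorsAntidiagonal fun _ _ ↦ 1 / (n : ℝ)]
    refine Finset.sum_congr rfl fun x hx ↦ ?_
    rw [← (Nat.mem_divisorsAntidiagonal.mp hx).1]
    push_cast
    rw [one_div_mul_one_div]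
  rw [Finset.sum_congr rfl h1, ← Finset.sum_biUnion]
  · refine Finset.sum_le_sum_of_subset_of_nonneg (fun x hx ↦ ?_) fun x _ _ ↦ by positivity
    simp only [Finset.mem_biUnion, Finset.mem_Icc, Nat.mem_divisorsAntidiagonal,
      Finset.mem_product] at hx ⊢
    obtain ⟨n, ⟨hn1, hnM⟩, rfl, h0⟩ := hx
    have ha := Nat.pos_of_ne_zero (left_ne_zero_of_mul h0)
    have hb := Nat.pos_of_ne_zero (right_ne_zero_of_mul h0)
    exact ⟨⟨ha, (Nat.le_mul_of_pos_right _ hb).trans hnM⟩, hb,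
      (Nat.le_mul_of_pos_left _ ha).trans hnM⟩
  · intro m _ n _ hmn
    refine Finset.disjoint_left.mpr fun x hx hx' ↦ hmn ?_
    rw [← (Nat.mem_divisorsAntidiagonal.mp hx).1, (Nat.mem_divisorsAntidiagonal.mp hx').1]

lemma sum_hooleyDelta_le_sq {x t : ℝ} (hx : 1 ≤ x) (ht : 0 ≤ t) (ht1 : t ≤ 1) :
    ∑ n ∈ Finset.Icc 1 ⌊x⌋₊, t ^ n.primeFactors.card * (hooleyDelta n : ℝ) / n ≤
      Real.log (Real.exp 1 * x) ^ 2 := by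
  have hLx : Real.log (Real.exp 1 * x) = 1 + Real.log x := by
    rw [Real.log_mul (Real.exp_pos 1).ne' (by linarith), Real.log_exp]
  have hh : ∑ n ∈ Finset.Icc 1 ⌊x⌋₊, 1 / (n : ℝ) ≤ 1 + Real.log x := by
    have := harmonic_floor_le_one_add_log x hx
    rw [harmonic_eq_sum_Icc] at this
    push_cast at this
    simpa [one_div] using this
  refine (Finset.sum_le_sum fun n hn ↦ ?_).trans ((sum_card_divisors_div_le ⌊x⌋₊).trans ?_)
  · gcongr
    calc t ^ n.primeFactors.card * (hooleyDelta n : ℝ) ≤ 1 * (n.divisors.card : ℝ) := by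
          gcongr
          · exact pow_le_one₀ ht ht1
          · exact hooleyDelta_le_card_divisors n
      _ = _ := one_mul _
  · rw [hLx]; gcongr

theorem statement_4 (x : ℝ) (hx : 1 ≤ x) (t : ℝ) (ht : t ∈ Set.Icc (0 : ℝ) 1) :
    ∑ n ∈ Finset.Icc 1 ⌊x⌋₊, t ^ n.primeFactors.card * (hooleyDelta n : ℝ) / n <
      16748 * Real.log (Real.exp 1 * x) ^ (4 * t / Real.pi) := by
  rcases le_total 129 (Real.log (Real.exp 1 * x)) with hL | hL
  · exact sum_hooleyDelta_le_of_large hx ht.1 ht.2 hL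
  · have hLx : Real.log (Real.exp 1 * x) = 1 + Real.log x := by
      rw [Real.log_mul (Real.exp_pos 1).ne' (by linarith), Real.log_exp]
    have hL1 : 1 ≤ Real.log (Real.exp 1 * x) := by linarith [Real.log_nonneg hx]
    have ht0 := ht.1
    have h1 : 1 ≤ Real.log (Real.exp 1 * x) ^ (4 * t / Real.pi) :=
      Real.one_le_rpow hL1 (by positivity)
    have h2 := sum_hooleyDelta_le_sq hx ht.1 ht.2
    nlinarith
end

section
/- Let a, b > 0 be real numbers with ab ≥ e²/4, and set c := e/(e−1). Then for every real x, if x ≥ (2^{log 16} (ab)^{log(16ab)})^{c²a}, then log x ≥ a (log(b log x))². -/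
/-- The tangent line of `log` at `e` lies above its graph. -/
theorem log_le_div_exp_one {s : ℝ} (hs : 0 < s) : Real.log s ≤ s / Real.exp 1 := by
  have h := Real.log_le_sub_one_of_pos (div_pos hs (Real.exp_pos 1))
  rw [Real.log_div hs.ne' (Real.exp_pos 1).ne', Real.log_exp] at h
  linarith

/-- The logarithm of `2 ^ log 16 * p ^ log (16 p)` is a perfect square. -/
theorem log_two_rpow_mul_rpow {p : ℝ} (hp : 0 < p) :
    Real.log ((2 : ℝ) ^ Real.log 16 * p ^ Real.log (16 * p)) = Real.log (4 * p) ^ 2 := by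
  have h16 : Real.log 16 = 4 * Real.log 2 := by
    rw [show (16 : ℝ) = 2 ^ 4 by norm_num, Real.log_pow]; norm_num
  have h4 : Real.log 4 = 2 * Real.log 2 := by
    rw [show (4 : ℝ) = 2 ^ 2 by norm_num, Real.log_pow]; norm_num
  rw [Real.log_mul (by positivity) (by positivity), Real.log_rpow two_pos, Real.log_rpow hp,
    Real.log_mul (by norm_num) hp.ne', Real.log_mul (by norm_num) hp.ne', h16, h4]
  ring

/-- If `m ≥ 1` and `s ≥ e / (e - 1) * m`, then `m + log s` lies between `0` and `s`. -/
theorem add_log_mem_Icc {m s : ℝ} (hm : 1 ≤ m)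
    (hs : Real.exp 1 / (Real.exp 1 - 1) * m ≤ s) :
    m + Real.log s ∈ Set.Icc 0 s := by
  have he : 1 < Real.exp 1 := Real.one_lt_exp_iff.2 one_pos
  have he' : 0 < Real.exp 1 - 1 := by linarith
  have hc : 1 ≤ Real.exp 1 / (Real.exp 1 - 1) := by
    rw [le_div_iff₀ he']; linarith
  have hs1 : 1 ≤ s := by nlinarith
  refine ⟨by linarith [Real.log_nonneg hs1], ?_⟩
  have hmul : m ≤ s - s / Real.exp 1 := by
    rw [div_mul_eq_mul_div, div_le_iff₀ he'] at hs
    have : s - s / Real.exp 1 = s * (Real.exp 1 - 1) / Real.exp 1 := by field_simp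
    rw [this, le_div_iff₀ (Real.exp_pos 1)]
    linarith
  linarith [log_le_div_exp_one (by linarith : 0 < s)]

theorem statement_5 (a b : ℝ) (ha : 0 < a) (hb : 0 < b)
    (hab : Real.exp 1 ^ 2 / 4 ≤ a * b) (x : ℝ)
    (hx : ((2 : ℝ) ^ Real.log 16 * (a * b) ^ Real.log (16 * a * b)) ^
        ((Real.exp 1 / (Real.exp 1 - 1)) ^ 2 * a) ≤ x) :
    a * Real.log (b * Real.log x) ^ 2 ≤ Real.log x := by
  have hp : 0 < a * b := mul_pos ha hb
  set c := Real.exp 1 / (Real.exp 1 - 1)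
  have hc0 : 0 < c :=
    div_pos (Real.exp_pos 1) (sub_pos.2 (Real.one_lt_exp_iff.2 one_pos))
  have hL : 2 ≤ Real.log (4 * (a * b)) := by
    rw [Real.le_log_iff_exp_le (by positivity), show (2 : ℝ) = (2 : ℕ) * 1 by norm_num,
      Real.exp_nat_mul]
    linarith
  have hy := Real.log_le_log (by positivity) hx
  rw [Real.log_rpow (by positivity), mul_assoc 16 a b, log_two_rpow_mul_rpow hp] at hy
  set L := Real.log (4 * (a * b)) with hLdef
  set y := Real.log x
  have hy0 : 0 < y := lt_of_lt_of_le (by positivity) hy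
  set s := √(y / a) / 2 with hs
  have hs0 : 0 < s := by positivity
  have hys : y = a * (2 * s) ^ 2 := by
    rw [hs, mul_div_cancel₀ _ (two_ne_zero' ℝ), Real.sq_sqrt (by positivity)]
    field_simp
  have hcs : c * (L / 2) ≤ s := by
    have : c * L ≤ √(y / a) := by
      apply Real.le_sqrt_of_sq_le
      rw [le_div_iff₀ ha]
      linarith
    rw [hs]; linarith
  obtain ⟨h0, h1⟩ := add_log_mem_Icc (by linarith) hcs
  have hlog : Real.log (b * y) = 2 * (L / 2 + Real.log s) := by
    rw [hys, show b * (a * (2 * s) ^ 2) = 4 * (a * b) * s ^ 2 by ring,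
      Real.log_mul (by positivity) (by positivity), Real.log_pow, ← hLdef]
    push_cast; ring
  rw [hlog, hys]
  gcongr
end
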